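/- Let D be a bounded domain in ℂ and w ∈ ∂D. Then the following are equivalent: (i) limsup_{D ∋ z → w} K_D(z) < ∞; (ii) there is an open neighborhood U of w such that the set U \ D is polar. -/

import Mathlib

open MeasureTheory Filter Topology Metric Set
open scoped ENNReal NNReal

/-- Truncated circle average of an `EReal`-valued function: the average over the circle of
center `c` and radius `R` of the function truncated below at `-n`. -/
noncomputable def circleAvgTrunc (u : ℂ → EReal) (c : ℂ) (R : ℝ) (n : ℕ) : ℝ :=
  (2 * Real.pi)⁻¹ * ∫ θ in (0:ℝ)..(2 * Real.pi),
    (max (u (c + R * Complex.exp (θ * Complex.I))) (-(n : ℝ) : EReal)).toReal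

/-- `u` is subharmonic on `Ω ⊆ ℂ`: values in `[-∞, ∞)`, upper semicontinuous on `Ω`, and for
every closed disc contained in `Ω` the value at the center is at most the mean over the
boundary circle (in the extended sense, via decreasing truncations). -/
def SubharmonicOn (u : ℂ → EReal) (Ω : Set ℂ) : Prop :=
  UpperSemicontinuousOn u Ω ∧ (∀ z ∈ Ω, u z < ⊤) ∧
    ∀ c ∈ Ω, ∀ R : ℝ, 0 < R → Metric.closedBall c R ⊆ Ω →
      u c ≤ ⨅ n : ℕ, (circleAvgTrunc u c R n : EReal)

/-- `u` is plurisubharmonic on `Ω`: values in `[-∞, ∞)`, upper semicontinuous on `Ω`, and its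
restriction to every complex line is subharmonic. -/
def PlurisubharmonicOn {E : Type*} [NormedAddCommGroup E] [NormedSpace ℂ E]
    (u : E → EReal) (Ω : Set E) : Prop :=
  UpperSemicontinuousOn u Ω ∧ (∀ z ∈ Ω, u z < ⊤) ∧
    ∀ a b : E, SubharmonicOn (fun lam : ℂ => u (a + lam • b)) {lam : ℂ | a + lam • b ∈ Ω}

/-- A set `P ⊆ ℂ` is polar. -/
def PolarSet (P : Set ℂ) : Prop :=
  ∀ z ∈ P, ∃ U : Set ℂ, IsOpen U ∧ IsConnected U ∧ z ∈ U ∧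
    ∃ u : ℂ → EReal, SubharmonicOn u U ∧ (∃ x ∈ U, u x ≠ ⊥) ∧ ∀ x ∈ P ∩ U, u x = ⊥

/-- A set `P ⊆ ℂⁿ` is pluripolar. -/
def PluripolarSet {E : Type*} [NormedAddCommGroup E] [NormedSpace ℂ E] (P : Set E) : Prop :=
  ∀ z ∈ P, ∃ U : Set E, IsOpen U ∧ IsConnected U ∧ z ∈ U ∧
    ∃ u : E → EReal, PlurisubharmonicOn u U ∧ (∃ x ∈ U, u x ≠ ⊥) ∧ ∀ x ∈ P ∩ U, u x = ⊥

/-- A domain `D` is pseudoconvex if `z ↦ -log dist(z, ∂D)` is plurisubharmonic on `D`. -/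
def IsPseudoconvex {E : Type*} [NormedAddCommGroup E] [NormedSpace ℂ E] (D : Set E) : Prop :=
  PlurisubharmonicOn (fun z => ((- Real.log (Metric.infDist z Dᶜ) : ℝ) : EReal)) D

/-- The square-integrable holomorphic functions on an open set `Ω`. -/
def L2h {E : Type*} [NormedAddCommGroup E] [NormedSpace ℂ E] [MeasureSpace E]
    (Ω : Set E) : Set (E → ℂ) :=
  {f | DifferentiableOn ℂ f Ω ∧ (∫⁻ z in Ω, (‖f z‖₊ : ℝ≥0∞) ^ 2) < ⊤}

/-- The Bergman kernel of `Ω` on the diagonal,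
`K_Ω(z) = sup { |f(z)|²/‖f‖²_{L²(Ω)} : f ∈ L²ₕ(Ω), f ≢ 0 }`. -/
noncomputable def bergmanKernel {E : Type*} [NormedAddCommGroup E] [NormedSpace ℂ E]
    [MeasureSpace E] (Ω : Set E) (z : E) : ℝ≥0∞ :=
  ⨆ (f : E → ℂ) (_ : f ∈ L2h Ω) (_ : ∃ w ∈ Ω, f w ≠ 0),
    (‖f z‖₊ : ℝ≥0∞) ^ 2 / ∫⁻ w in Ω, (‖f w‖₊ : ℝ≥0∞) ^ 2

/-- `D` is an `L²ₕ`-domain of holomorphy: there are no domains `D₀, D₁` with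
`∅ ≠ D₀ ⊆ D₁ ∩ D`, `D₁ ⊄ D`, such that every `f ∈ L²ₕ(D)` extends holomorphically to `D₁`
(agreeing with `f` on `D₀`). -/
def IsL2hDomainOfHolomorphy {E : Type*} [NormedAddCommGroup E] [NormedSpace ℂ E]
    [MeasureSpace E] (D : Set E) : Prop :=
  ¬ ∃ D0 D1 : Set E, IsOpen D0 ∧ IsConnected D0 ∧ IsOpen D1 ∧ IsConnected D1 ∧
      D0 ⊆ D1 ∩ D ∧ ¬ (D1 ⊆ D) ∧
      ∀ f ∈ L2h D, ∃ F : E → ℂ, DifferentiableOn ℂ F D1 ∧ Set.EqOn F f D0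

/-- `w` is a regular boundary point of the domain `D ⊆ ℂ`. -/
def RegularBoundaryPt (D : Set ℂ) (w : ℂ) : Prop :=
  ∃ U : Set ℂ, IsOpen U ∧ w ∈ U ∧ ∃ u : ℂ → EReal, SubharmonicOn u (U ∩ D) ∧
    (∀ z ∈ U ∩ D, u z < 0) ∧ Tendsto u (𝓝[U ∩ D] w) (𝓝 (0 : EReal))

/-- The (pluricomplex) Green function of a domain `D ⊆ ℂ` with logarithmic pole at `p`. -/
noncomputable def greenFn (D : Set ℂ) (p z : ℂ) : EReal :=
  sSup {v : EReal | ∃ u : ℂ → EReal, SubharmonicOn u D ∧ (∀ x ∈ D, u x < 0) ∧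
    (∃ C : ℝ, ∀ᶠ x in 𝓝 p, u x ≤ ((Real.log ‖x - p‖ + C : ℝ) : EReal)) ∧ v = u z}

/-- A polydisc in `ℂⁿ` with centre `c` and multiradius `r`. -/
def polydisc {n : ℕ} (c : Fin n → ℂ) (r : Fin n → ℝ) : Set (Fin n → ℂ) :=
  {z | ∀ i, ‖z i - c i‖ < r i}

/-!
If `K_D ≤ M` near `w`, then for `a ∈ D` near `w` evaluation at `a` is bounded on `L²ₕ(D)`, and
therefore so is the division `f ↦ (f - f(a)) / (z - a)`, uniformly in `a`. Iterating it, the Taylor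
series of every `f ∈ L²ₕ(D)` at such an `a` converges to `f` on a fixed disc about `w`: every `f`
extends across `w`. If the part of `ℂ \ D` near `w` had positive Chebyshev constant, its Leja
points would have bounded logarithmic energy, and a limit of the Cauchy transforms of their averages
would be an element of `L²ₕ(D)` with a non-zero contour integral around `w`, which cannot extend.
So the Chebyshev constant vanishes, and a weighted sum of the logarithmic potentials of extremal
polynomials is a subharmonic function with poles on `U \ D`.

Conversely let `U \ D ⊆ {u = -∞}`. By a Caccioppoli inequality for the logarithm of the positive
superharmonic function `1 + m - max(u, -n)`, its quotient `Ψ` by `log (1 + m + n)`, which equals `1`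
on `U \ D`, has small Dirichlet energy and small `L¹` norm for large `n`. Inserting `1 - Ψ` into
Cauchy's formula for `f` at `z`, written with `(f - f(z)) / (x - z) ∈ L²(D)`, and letting the energy
tend to `0` bounds `f(z)` by the `L¹` norm of `f` on a fixed disc about `w`. Derivatives of `Ψ` may
fail to exist classically; its energy is therefore measured by increments along steps of a fixed
length.
-/

/-! ### The Bergman kernel and point evaluations -/

section Kernel

variable {E : Type*} [MeasureSpace E]

/-- The squared norm of `f` in `L²(D)`, as an extended nonnegative real. -/
noncomputable def sqNorm (D : Set E) (f : E → ℂ) : ℝ≥0∞ :=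
  ∫⁻ z in D, ‖f z‖ₑ ^ 2

lemma sqNorm_eq_inter_add_sdiff_ball [PseudoMetricSpace E] [OpensMeasurableSpace E] {D : Set E}
    (f : E → ℂ) (a : E) (ρ : ℝ) :
    sqNorm D f = sqNorm (D ∩ ball a ρ) f + sqNorm (D \ ball a ρ) f :=
  (lintegral_inter_add_sdiff _ D measurableSet_ball).symm

lemma sqNorm_le_mul_volume {D : Set E} (hD : MeasurableSet D) {f : E → ℂ} {S : ℝ≥0∞}
    (hS : ∀ z ∈ D, ‖f z‖ₑ ^ 2 ≤ S) : sqNorm D f ≤ S * volume D :=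
  (setLIntegral_mono' hD hS).trans_eq (setLIntegral_const D S)

variable [NormedAddCommGroup E] [NormedSpace ℂ E]

lemma sqNorm_ne_top {D : Set E} {f : E → ℂ} (hf : f ∈ L2h D) : sqNorm D f ≠ ⊤ :=
  ne_of_lt hf.2

lemma bergmanKernel_le_iff {D : Set E} {z : E} (hz : z ∈ D) {M : ℝ≥0∞} (hM : M ≠ ⊤) :
    bergmanKernel D z ≤ M ↔ ∀ f ∈ L2h D, ‖f z‖ₑ ^ 2 ≤ M * sqNorm D f := by
  refine ⟨fun h f hf => ?_, fun h => iSup_le fun f => iSup_le fun hf => iSup_le fun _ =>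
    ENNReal.div_le_of_le_mul (h f hf)⟩
  by_cases hfz : f z = 0
  · simp [hfz]
  have hquot : ‖f z‖ₑ ^ 2 / sqNorm D f ≤ M :=
    le_trans (by
      unfold bergmanKernel
      exact le_iSup_of_le f (le_iSup_of_le hf (le_iSup_of_le ⟨z, hz, hfz⟩ le_rfl))) h
  rwa [ENNReal.div_le_iff_le_mul (Or.inr hM) (Or.inl (sqNorm_ne_top hf))] at hquot

lemma limsup_bergmanKernel_lt_top_iff {D : Set E} {w : E} :
    limsup (bergmanKernel D) (𝓝[D] w) < ⊤ ↔
      ∃ r > 0, ∃ M ≠ ⊤, ∀ z ∈ D ∩ ball w r, bergmanKernel D z ≤ M := by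
  constructor
  · intro h
    obtain ⟨M, hlim, hM⟩ := exists_between h
    obtain ⟨r, hr, hlt⟩ := Metric.eventually_nhds_iff_ball.1
      (eventually_nhdsWithin_iff.1 (eventually_lt_of_limsup_lt hlim))
    exact ⟨r, hr, M, hM.ne, fun z hz => (hlt z hz.2 hz.1).le⟩
  · rintro ⟨r, hr, M, hM, hle⟩
    refine (limsup_le_of_le (by isBoundedDefault) ?_).trans_lt hM.lt_top
    filter_upwards [inter_mem_nhdsWithin D (ball_mem_nhds w hr)] with z hz using hle z hz

end Kernel

/-! ### Division by `z - a` in the Bergman space -/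

section Division

variable {𝕜 F : Type*} [NontriviallyNormedField 𝕜] [NormedAddCommGroup F] [NormedSpace 𝕜 F]

lemma norm_dslope_sq_le (f : 𝕜 → F) {a z : 𝕜} {ρ : ℝ} (hρ : 0 < ρ) (hz : ρ ≤ ‖z - a‖) :
    ‖dslope f a z‖ ^ 2 ≤ ρ⁻¹ ^ 2 * (2 * ‖f z‖ ^ 2 + 2 * ‖f a‖ ^ 2) := by
  have hza : z ≠ a := sub_ne_zero.1 (norm_pos_iff.1 (hρ.trans_le hz))
  have hsub : ‖f z - f a‖ ^ 2 ≤ 2 * ‖f z‖ ^ 2 + 2 * ‖f a‖ ^ 2 :=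
    calc ‖f z - f a‖ ^ 2 ≤ (‖f z‖ + ‖f a‖) ^ 2 := by gcongr; exact norm_sub_le _ _
      _ ≤ 2 * ‖f z‖ ^ 2 + 2 * ‖f a‖ ^ 2 := by linarith [add_sq_le (a := ‖f z‖) (b := ‖f a‖)]
  rw [dslope_of_ne _ hza, slope_def_module, norm_smul, norm_inv, mul_pow]
  gcongr

lemma enorm_dslope_sq_le (f : 𝕜 → F) {a z : 𝕜} {ρ : ℝ} (hρ : 0 < ρ) (hz : ρ ≤ ‖z - a‖) :
    ‖dslope f a z‖ₑ ^ 2 ≤ ENNReal.ofReal (ρ⁻¹ ^ 2) * (2 * ‖f z‖ₑ ^ 2 + 2 * ‖f a‖ₑ ^ 2) := by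
  have h := ENNReal.ofReal_le_ofReal (norm_dslope_sq_le f hρ hz)
  rw [ENNReal.ofReal_mul (by positivity), ENNReal.ofReal_add (by positivity) (by positivity),
    ENNReal.ofReal_mul zero_le_two, ENNReal.ofReal_mul zero_le_two] at h
  simpa only [ENNReal.ofReal_pow (norm_nonneg _), ofReal_norm, ENNReal.ofReal_ofNat] using h

lemma sum_add_pow_smul_iterate_dslope (f : 𝕜 → F) (a z : 𝕜) (k : ℕ) :
    ∑ j ∈ Finset.range k, (z - a) ^ j • (Function.swap dslope a)^[j] f a +
      (z - a) ^ k • (Function.swap dslope a)^[k] f z = f z := by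
  induction k with
  | zero => simp
  | succ k ih =>
    set g := (Function.swap dslope a)^[k] f
    have hstep : (z - a) ^ (k + 1) • (Function.swap dslope a)^[k + 1] f z =
        (z - a) ^ k • g z - (z - a) ^ k • g a := by
      rw [Function.iterate_succ_apply', pow_succ, mul_smul, Function.swap, sub_smul_dslope,
        smul_sub]
    rw [Finset.sum_range_succ, hstep, add_assoc, add_sub_cancel, ih]

/-- Unlike Taylor's theorem, this does not need `z` and `a` in one component of the domain of
`f`. -/
lemma hasSum_iterate_dslope [CompleteSpace F] {f : 𝕜 → F} {a z : 𝕜} {B q : ℝ}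
    (hq : q < 1) (hq0 : 0 ≤ q)
    (ha : ∀ k, ‖(z - a) ^ k • (Function.swap dslope a)^[k] f a‖ ≤ B * q ^ k)
    (hz : ∀ k, ‖(z - a) ^ k • (Function.swap dslope a)^[k] f z‖ ≤ B * q ^ k) :
    HasSum (fun j => (z - a) ^ j • (Function.swap dslope a)^[j] f a) (f z) := by
  have hsum : Summable fun j => (z - a) ^ j • (Function.swap dslope a)^[j] f a :=
    ((summable_geometric_of_lt_one hq0 hq).mul_left B).of_norm_bounded ha
  rw [hsum.hasSum_iff_tendsto_nat, ← tendsto_sub_nhds_zero_iff]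
  refine squeeze_zero_norm (a := fun k => B * q ^ k) (fun k => ?_) ?_
  · rw [← neg_sub, norm_neg, sub_eq_of_eq_add' (sum_add_pow_smul_iterate_dslope f a z k).symm]
    exact hz k
  · simpa using (tendsto_pow_atTop_nhds_zero_of_lt_one hq0 hq).const_mul B

end Division

section Extension

variable {D : Set ℂ} {f : ℂ → ℂ}

lemma aemeasurable_enorm_sq_of_mem_L2h (hD : IsOpen D) (hf : f ∈ L2h D) :
    AEMeasurable (fun z => ‖f z‖ₑ ^ 2) (volume.restrict D) :=
  (hf.1.continuousOn.aemeasurable hD.measurableSet).enorm.pow_const 2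

lemma sqNorm_dslope_le (hD : IsOpen D) (hf : f ∈ L2h D) {a : ℂ} {ρ : ℝ} (hρ : 0 < ρ)
    {S : ℝ≥0∞} (hS : ∀ z ∈ D ∩ ball a ρ, ‖dslope f a z‖ₑ ^ 2 ≤ S) :
    sqNorm D (dslope f a) ≤ S * volume (ball a ρ) +
      ENNReal.ofReal (ρ⁻¹ ^ 2) * (2 * sqNorm D f + 2 * ‖f a‖ₑ ^ 2 * volume D) := by
  have hfar : sqNorm (D \ ball a ρ) (dslope f a) ≤
      ENNReal.ofReal (ρ⁻¹ ^ 2) * (2 * sqNorm D f + 2 * ‖f a‖ₑ ^ 2 * volume D) :=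
    calc sqNorm (D \ ball a ρ) (dslope f a)
        ≤ ∫⁻ z in D \ ball a ρ, ENNReal.ofReal (ρ⁻¹ ^ 2) * (2 * ‖f z‖ₑ ^ 2 + 2 * ‖f a‖ₑ ^ 2) :=
          setLIntegral_mono' (hD.measurableSet.diff measurableSet_ball) fun z hz =>
            enorm_dslope_sq_le f hρ (by simpa [dist_eq_norm] using hz.2)
      _ ≤ ∫⁻ z in D, ENNReal.ofReal (ρ⁻¹ ^ 2) * (2 * ‖f z‖ₑ ^ 2 + 2 * ‖f a‖ₑ ^ 2) :=
          lintegral_mono_set sdiff_subset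
      _ = _ := by
          have hmeas := aemeasurable_enorm_sq_of_mem_L2h hD hf
          rw [lintegral_const_mul'' _ (by fun_prop), lintegral_add_right _ measurable_const,
            lintegral_const_mul'' _ hmeas, setLIntegral_const, sqNorm]
  rw [sqNorm_eq_inter_add_sdiff_ball _ a ρ]
  refine add_le_add ((sqNorm_le_mul_volume (hD.measurableSet.inter measurableSet_ball) hS).trans ?_)
    hfar
  gcongr
  exact inter_subset_right

lemma dslope_mem_L2h (hD : IsOpen D) (hvol : volume D ≠ ⊤) (hf : f ∈ L2h D) {a : ℂ} (ha : a ∈ D) :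
    dslope f a ∈ L2h D := by
  have hdiff : DifferentiableOn ℂ (dslope f a) D :=
    (Complex.differentiableOn_dslope (hD.mem_nhds ha)).2 hf.1
  obtain ⟨ρ, hρ, hsub⟩ := Metric.nhds_basis_closedBall.mem_iff.1 (hD.mem_nhds ha)
  obtain ⟨C, hC⟩ :=
    (isCompact_closedBall a ρ).exists_bound_of_continuousOn (hdiff.continuousOn.mono hsub)
  have hnear : ∀ z ∈ D ∩ ball a ρ, ‖dslope f a z‖ₑ ^ 2 ≤ ENNReal.ofReal C ^ 2 := fun z hz => by
    gcongr
    rw [← ofReal_norm]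
    exact ENNReal.ofReal_le_ofReal (hC z (ball_subset_closedBall hz.2))
  have hfin := sqNorm_ne_top hf
  have hball : volume (ball a ρ) ≠ ⊤ := measure_ball_lt_top.ne
  refine ⟨hdiff, (sqNorm_dslope_le hD hf hρ hnear).trans_lt (Ne.lt_top ?_)⟩
  finiteness

lemma iterate_dslope_mem_L2h (hD : IsOpen D) (hvol : volume D ≠ ⊤) (hf : f ∈ L2h D) {a : ℂ}
    (ha : a ∈ D) (k : ℕ) : (Function.swap dslope a)^[k] f ∈ L2h D := by
  induction k with
  | zero => exact hf
  | succ k ih =>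
    rw [Function.iterate_succ_apply']
    exact dslope_mem_L2h hD hvol ih ha

lemma sqNorm_iterate_dslope_le (hD : IsOpen D) (hvol : volume D ≠ ⊤) {a : ℂ} (ha : a ∈ D)
    {C : ℝ≥0∞} (hC : ∀ g ∈ L2h D, sqNorm D (dslope g a) ≤ C * sqNorm D g) (hf : f ∈ L2h D) (k : ℕ) :
    sqNorm D ((Function.swap dslope a)^[k] f) ≤ C ^ k * sqNorm D f := by
  induction k with
  | zero => simp
  | succ k ih =>
    rw [Function.iterate_succ_apply', pow_succ', mul_assoc]
    exact (hC _ (iterate_dslope_mem_L2h hD hvol hf ha k)).trans (by gcongr)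

lemma exists_mul_volume_ball_le {M : ℝ≥0∞} (hM : M ≠ ⊤) {R : ℝ} (hR : 0 < R) :
    ∃ ρ : ℝ, 0 < ρ ∧ ρ ≤ R ∧ ∀ a : ℂ, M * volume (ball a ρ) ≤ 2⁻¹ := by
  have hlim : Tendsto (fun ρ : ℝ => M * NNReal.pi * ENNReal.ofReal ρ ^ 2) (𝓝 0) (𝓝 0) := by
    have hsq := ((ENNReal.continuous_pow 2).comp ENNReal.continuous_ofReal).tendsto 0
    simpa using ENNReal.Tendsto.const_mul hsq
      (Or.inr (ENNReal.mul_ne_top hM (ENNReal.coe_ne_top (r := NNReal.pi))))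
  have hsmall := hlim.eventually_lt_const (u := 2⁻¹) (by simp)
  obtain ⟨ρ, ⟨hρM, hρR⟩, hρ⟩ := (((hsmall.and (eventually_le_nhds hR)).filter_mono
    nhdsWithin_le_nhds).and self_mem_nhdsWithin : ∀ᶠ ρ in 𝓝[>] (0 : ℝ), _).exists
  refine ⟨ρ, hρ, hρR, fun a => ?_⟩
  rw [Complex.volume_ball, mul_comm (ENNReal.ofReal ρ ^ 2), ← mul_assoc]
  exact hρM.le

/-- On a small disc about `a` the kernel bound controls the quotient `dslope f a` by a fraction of
its own norm, which is absorbed; off that disc the denominator is bounded below. -/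
lemma exists_sqNorm_dslope_le (hD : IsOpen D) (hvol : volume D ≠ ⊤) {w : ℂ} {r : ℝ} (hr : 0 < r)
    {M : ℝ≥0∞} (hM : M ≠ ⊤) (hK : ∀ z ∈ D ∩ ball w r, bergmanKernel D z ≤ M) :
    ∃ C : ℝ≥0∞, C ≠ ⊤ ∧ ∀ a ∈ D ∩ ball w (r / 2), ∀ f ∈ L2h D,
      sqNorm D (dslope f a) ≤ C * sqNorm D f := by
  obtain ⟨ρ, hρ, hρr, hρM⟩ := exists_mul_volume_ball_le hM (half_pos hr)
  refine ⟨2 * (ENNReal.ofReal (ρ⁻¹ ^ 2) * (2 + 2 * M * volume D)), by finiteness, ?_⟩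
  rintro a ⟨haD, haw⟩ f hf
  rw [mem_ball] at haw
  have hg := dslope_mem_L2h hD hvol hf haD
  set G := sqNorm D (dslope f a)
  set N := sqNorm D f
  have heval : ‖f a‖ₑ ^ 2 ≤ M * N :=
    (bergmanKernel_le_iff haD hM).1 (hK a ⟨haD, mem_ball.2 (by linarith)⟩) f hf
  have hnear : ∀ z ∈ D ∩ ball a ρ, ‖dslope f a z‖ₑ ^ 2 ≤ M * G := fun z hz =>
    (bergmanKernel_le_iff hz.1 hM).1
      (hK z ⟨hz.1, mem_ball.2 (by linarith [dist_triangle z a w, mem_ball.1 hz.2])⟩) _ hg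
  have hself : G ≤ G / 2 + ENNReal.ofReal (ρ⁻¹ ^ 2) * (2 + 2 * M * volume D) * N :=
    calc G ≤ M * G * volume (ball a ρ) +
          ENNReal.ofReal (ρ⁻¹ ^ 2) * (2 * N + 2 * ‖f a‖ₑ ^ 2 * volume D) :=
          sqNorm_dslope_le hD hf hρ hnear
      _ ≤ 2⁻¹ * G + ENNReal.ofReal (ρ⁻¹ ^ 2) * (2 * N + 2 * (M * N) * volume D) := by
          rw [mul_right_comm]
          gcongr
          exact hρM a
      _ = G / 2 + ENNReal.ofReal (ρ⁻¹ ^ 2) * (2 + 2 * M * volume D) * N := by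
          rw [div_eq_mul_inv]; ring
  have hhalf : G / 2 + G / 2 ≤ G / 2 + ENNReal.ofReal (ρ⁻¹ ^ 2) * (2 + 2 * M * volume D) * N := by
    rwa [ENNReal.add_halves]
  have hle := (ENNReal.add_le_add_iff_left
    (ENNReal.div_ne_top (sqNorm_ne_top hg) two_ne_zero)).1 hhalf
  rwa [ENNReal.div_le_iff_le_mul (by simp) (by simp), mul_comm, ← mul_assoc] at hle

lemma exists_differentiableOn_eqOn_of_iterate_dslope_le {a : ℂ} {B C ρ : ℝ} (hC : 0 ≤ C)
    (hρ : 0 ≤ ρ) (hCρ : C * ρ < 1)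
    (hb : ∀ k, ∀ z ∈ insert a (D ∩ ball a ρ), ‖(Function.swap dslope a)^[k] f z‖ ≤ B * C ^ k) :
    ∃ F : ℂ → ℂ, DifferentiableOn ℂ F (ball a ρ) ∧ EqOn F f (D ∩ ball a ρ) := by
  have hterm : ∀ k, ∀ z ∈ ball a ρ, ∀ x ∈ insert a (D ∩ ball a ρ),
      ‖(z - a) ^ k • (Function.swap dslope a)^[k] f x‖ ≤ B * (C * ρ) ^ k := fun k z hz x hx =>
    calc ‖(z - a) ^ k • (Function.swap dslope a)^[k] f x‖
        ≤ ρ ^ k * (B * C ^ k) := by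
          rw [norm_smul, norm_pow]
          gcongr
          · exact (mem_ball_iff_norm.1 hz).le
          · exact hb k x hx
      _ = B * (C * ρ) ^ k := by ring
  refine ⟨fun z => ∑' j, (z - a) ^ j • (Function.swap dslope a)^[j] f a, ?_, fun z hz => ?_⟩
  · exact Complex.differentiableOn_tsum_of_summable_norm
      ((summable_geometric_of_lt_one (by positivity) hCρ).mul_left B) (fun j => by fun_prop)
      isOpen_ball fun j z hz => hterm j z hz a (mem_insert _ _)
  · exact (hasSum_iterate_dslope hCρ (by positivity)
      (fun k => hterm k z hz.2 a (mem_insert _ _))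
      (fun k => hterm k z hz.2 z (mem_insert_of_mem _ hz))).tsum_eq

lemma norm_iterate_dslope_le (hD : IsOpen D) (hvol : volume D ≠ ⊤) {a : ℂ} (ha : a ∈ D) {C : ℝ≥0}
    (hC : ∀ g ∈ L2h D, sqNorm D (dslope g a) ≤ (C : ℝ≥0∞) ^ 2 * sqNorm D g) (hf : f ∈ L2h D)
    {z : ℂ} (hz : z ∈ D) {M : ℝ≥0∞} (hM : M ≠ ⊤) (hK : bergmanKernel D z ≤ M) (k : ℕ) :
    ‖(Function.swap dslope a)^[k] f z‖ ≤ √(M * sqNorm D f).toReal * C ^ k := by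
  have hN := sqNorm_ne_top hf
  have hsq : ‖(Function.swap dslope a)^[k] f z‖ₑ ^ 2 ≤ M * sqNorm D f * ((C : ℝ≥0∞) ^ k) ^ 2 :=
    calc _ ≤ M * sqNorm D ((Function.swap dslope a)^[k] f) :=
          (bergmanKernel_le_iff hz hM).1 hK _ (iterate_dslope_mem_L2h hD hvol hf ha k)
      _ ≤ M * (((C : ℝ≥0∞) ^ 2) ^ k * sqNorm D f) := by
          gcongr
          exact sqNorm_iterate_dslope_le hD hvol ha hC hf k
      _ = M * sqNorm D f * ((C : ℝ≥0∞) ^ k) ^ 2 := by ring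
  have hreal := ENNReal.toReal_mono (by finiteness) hsq
  rw [ENNReal.toReal_mul] at hreal
  simp only [ENNReal.toReal_pow, toReal_enorm, ENNReal.coe_toReal] at hreal
  refine le_of_sq_le_sq ?_ (by positivity)
  rwa [mul_pow, Real.sq_sqrt ENNReal.toReal_nonneg]

theorem exists_extension_of_bergmanKernel_le (hD : IsOpen D) (hvol : volume D ≠ ⊤) {w : ℂ}
    (hw : w ∈ closure D) {r : ℝ} (hr : 0 < r) {M : ℝ≥0∞} (hM : M ≠ ⊤)
    (hK : ∀ z ∈ D ∩ ball w r, bergmanKernel D z ≤ M) :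
    ∃ s : ℝ, 0 < s ∧ ∀ f ∈ L2h D, ∃ F : ℂ → ℂ,
      DifferentiableOn ℂ F (ball w s) ∧ EqOn F f (D ∩ ball w s) := by
  obtain ⟨C₀, hC₀, hdslope⟩ := exists_sqNorm_dslope_le hD hvol hr hM hK
  obtain ⟨C, hC, hC₀C⟩ : ∃ C : ℝ≥0, 0 < C ∧ C₀ ≤ (C : ℝ≥0∞) ^ 2 := by
    lift C₀ to ℝ≥0 using hC₀
    refine ⟨C₀ + 1, by positivity, ?_⟩
    norm_cast
    nlinarith [sq_nonneg C₀, C₀.2]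
  set s := min (r / 4) ((C : ℝ)⁻¹ / 4)
  have hs : 0 < s := by positivity
  have hsr : s ≤ r / 4 := min_le_left _ _
  have hsC : C * (2 * s) < 1 := by
    have hle : C * s ≤ C * ((C : ℝ)⁻¹ / 4) := by gcongr; exact min_le_right _ _
    have hquarter : C * ((C : ℝ)⁻¹ / 4) = 1 / 4 := by field_simp
    linarith
  obtain ⟨a, haD, haw⟩ := Metric.mem_closure_iff.1 hw s hs
  have hball : ball a (2 * s) ⊆ ball w r :=
    ball_subset_ball' (by linarith [dist_comm a w])
  have ha : a ∈ D ∩ ball w (r / 2) := ⟨haD, mem_ball'.2 (by linarith)⟩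
  refine ⟨s, hs, fun f hf => ?_⟩
  have hmem : insert a (D ∩ ball a (2 * s)) ⊆ D ∩ ball w r :=
    insert_subset ⟨haD, hball (mem_ball_self (by positivity))⟩ (inter_subset_inter_right D hball)
  obtain ⟨F, hF, hFf⟩ := exists_differentiableOn_eqOn_of_iterate_dslope_le C.2 (by positivity) hsC
    fun k z hz => norm_iterate_dslope_le hD hvol haD
      (fun g hg => (hdslope a ha g hg).trans (by gcongr)) hf (hmem hz).1 hM (hK z (hmem hz)) k
  have hsub : ball w s ⊆ ball a (2 * s) := ball_subset_ball' (by linarith)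
  exact ⟨F, hF.mono hsub, hFf.mono (inter_subset_inter_right D hsub)⟩

end Extension

/-! ### Subharmonic functions as decreasing limits of continuous ones -/

section CircleAverage

lemma circleAverage_mono_codiscreteWithin {f₁ f₂ : ℂ → ℝ} {c : ℂ} {R : ℝ} (hR : R ≠ 0)
    (hf₁ : CircleIntegrable f₁ c R) (hf₂ : CircleIntegrable f₂ c R)
    (h : ∀ᶠ x in codiscreteWithin (sphere c |R|), f₁ x ≤ f₂ x) :
    Real.circleAverage f₁ c R ≤ Real.circleAverage f₂ c R := by
  have hmin : f₁ =ᶠ[codiscreteWithin (sphere c |R|)] fun x => min (f₁ x) (f₂ x) :=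
    h.mono fun x hx => (min_eq_left hx).symm
  rw [Real.circleAverage_congr_codiscreteWithin hmin hR]
  exact Real.circleAverage_mono (hf₁.congr_codiscreteWithin hmin) hf₂ fun x _ => min_le_right _ _

lemma log_norm_sub_le_circleAverage {a c : ℂ} (hc : c ≠ a) {R : ℝ} (hR : 0 < R) :
    Real.log ‖c - a‖ ≤ Real.circleAverage (Real.log ‖· - a‖) c R := by
  have hpos : 0 < ‖c - a‖ := norm_pos_iff.2 (sub_ne_zero.2 hc)
  have hle : Real.log (R⁻¹ * ‖c - a‖) ≤ Real.posLog (R⁻¹ * ‖c - a‖) := le_max_right _ _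
  rw [Real.log_mul (by positivity) hpos.ne', Real.log_inv] at hle
  rw [circleAverage_log_norm_sub_const_eq_log_radius_add_posLog hR.ne']
  linarith

end CircleAverage

/-- Continuous real-valued subharmonic functions on `Ω`, characterised by the sub-mean value
inequality on the closed discs contained in `Ω`. -/
structure ContinuousSubharmonicOn (f : ℂ → ℝ) (Ω : Set ℂ) : Prop where
  continuousOn : ContinuousOn f Ω
  le_circleAverage : ∀ c R, 0 < R → closedBall c R ⊆ Ω → f c ≤ Real.circleAverage f c R

namespace ContinuousSubharmonicOn

variable {Ω : Set ℂ}

lemma circleIntegrable {f : ℂ → ℝ} (hf : ContinuousSubharmonicOn f Ω) {c : ℂ} {R : ℝ} (hR : 0 < R)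
    (hball : closedBall c R ⊆ Ω) : CircleIntegrable f c R :=
  (hf.continuousOn.mono (sphere_subset_closedBall.trans hball)).circleIntegrable hR.le

lemma const_mul_sub_const {f : ℂ → ℝ} (hf : ContinuousSubharmonicOn f Ω) {a : ℝ} (ha : 0 ≤ a)
    (b : ℝ) : ContinuousSubharmonicOn (fun x => a * (f x - b)) Ω where
  continuousOn := continuousOn_const.mul (hf.continuousOn.sub continuousOn_const)
  le_circleAverage c R hR hball := by
    have havg : Real.circleAverage (fun x => a * (f x - b)) c R =
        a * (Real.circleAverage f c R - b) := by
      simp only [← smul_eq_mul (a := a)]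
      rw [Real.circleAverage_fun_smul, Real.circleAverage_fun_sub (hf.circleIntegrable hR hball)
        (circleIntegrable_const b c R), Real.circleAverage_const]
    rw [havg]
    gcongr
    exact hf.le_circleAverage c R hR hball

lemma sum {ι : Type*} {s : Finset ι} {t : ι → ℂ → ℝ}
    (ht : ∀ i ∈ s, ContinuousSubharmonicOn (t i) Ω) :
    ContinuousSubharmonicOn (fun x => ∑ i ∈ s, t i x) Ω where
  continuousOn := continuousOn_finsetSum _ fun i hi => (ht i hi).continuousOn
  le_circleAverage c R hR hball := by
    rw [Real.circleAverage_fun_sum fun i hi => (ht i hi).circleIntegrable hR hball]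
    exact Finset.sum_le_sum fun i hi => (ht i hi).le_circleAverage c R hR hball

end ContinuousSubharmonicOn

lemma tendsto_circleAverage_max_circleAvgTrunc {S : ℕ → ℂ → ℝ} {c : ℂ} {R : ℝ} (hR : 0 ≤ R)
    (hcont : ∀ N, ContinuousOn (S N) (sphere c R))
    (hanti : ∀ x ∈ sphere c R, Antitone fun N => S N x) (n : ℕ) :
    Tendsto (fun N => Real.circleAverage (fun x => max (S N x) (-(n : ℝ))) c R) atTop
      (𝓝 (circleAvgTrunc (fun x => ⨅ N, (S N x : EReal)) c R n)) := by
  have hsphere : ∀ θ, circleMap c R θ ∈ sphere c R := circleMap_mem_sphere c hR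
  have hcomp : ∀ N, Continuous fun θ => S N (circleMap c R θ) := fun N =>
    (hcont N).comp_continuous (continuous_circleMap c R) hsphere
  refine Tendsto.const_smul (intervalIntegral.tendsto_integral_filter_of_dominated_convergence
    (fun θ => max |S 0 (circleMap c R θ)| n) ?_ ?_ ?_ ?_) (2 * Real.pi)⁻¹
  · exact Eventually.of_forall fun N => ((hcomp N).max continuous_const).aestronglyMeasurable
  · refine Eventually.of_forall fun N => Eventually.of_forall fun θ _ => ?_
    have hle : S N (circleMap c R θ) ≤ |S 0 (circleMap c R θ)| :=
      (hanti _ (hsphere θ) (Nat.zero_le N)).trans (le_abs_self _)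
    rw [Real.norm_eq_abs, abs_le]
    exact ⟨(neg_le_neg (le_max_right _ _)).trans (le_max_right _ _),
      max_le_max hle (neg_le_self n.cast_nonneg)⟩
  · exact ((hcomp 0).abs.max continuous_const).intervalIntegrable _ _
  · refine Eventually.of_forall fun θ _ => ?_
    set x := circleMap c R θ
    have hanti' : Antitone fun N => (S N x : EReal) := fun M N hMN =>
      EReal.coe_le_coe_iff.2 (hanti x (hsphere θ) hMN)
    have hlim : Tendsto (fun N => max (S N x : EReal) (-(n : ℝ) : EReal)) atTop
        (𝓝 (max (⨅ N, (S N x : EReal)) (-(n : ℝ) : EReal))) :=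
      (tendsto_atTop_iInf hanti').max tendsto_const_nhds
    have hbot : max (⨅ N, (S N x : EReal)) (-(n : ℝ) : EReal) ≠ ⊥ :=
      ((EReal.bot_lt_coe (-(n : ℝ))).trans_le (le_max_right _ _)).ne'
    have htop : max (⨅ N, (S N x : EReal)) (-(n : ℝ) : EReal) ≠ ⊤ :=
      (max_lt ((iInf_le (fun N => (S N x : EReal)) 0).trans_lt (EReal.coe_lt_top _))
        (EReal.coe_lt_top (-(n : ℝ)))).ne
    refine ((EReal.tendsto_toReal htop hbot).comp hlim).congr fun N => ?_
    rw [Function.comp_apply, ← EReal.coe_neg, ← EReal.coe_strictMono.monotone.map_max,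
      EReal.toReal_coe]

lemma subharmonicOn_iInf_of_antitone {S : ℕ → ℂ → ℝ} {Ω : Set ℂ}
    (hS : ∀ N, ContinuousSubharmonicOn (S N) Ω) (hanti : ∀ x ∈ Ω, Antitone fun N => S N x) :
    SubharmonicOn (fun x => ⨅ N, (S N x : EReal)) Ω := by
  refine ⟨upperSemicontinuousOn_iInf fun N =>
    (continuous_coe_real_ereal.comp_continuousOn (hS N).continuousOn).upperSemicontinuousOn,
    fun x _ => (iInf_le _ 0).trans_lt (EReal.coe_lt_top _), fun c hc R hR hball => ?_⟩
  have hsphere : sphere c R ⊆ Ω := sphere_subset_closedBall.trans hball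
  refine le_iInf fun n => ?_
  have hmean : ∀ N, S N c ≤ Real.circleAverage (fun x => max (S N x) (-(n : ℝ))) c R := fun N =>
    ((hS N).le_circleAverage c R hR hball).trans <| Real.circleAverage_mono
      ((hS N).circleIntegrable hR hball)
      ((((hS N).continuousOn.mono hsphere).sup continuousOn_const).circleIntegrable hR.le)
      fun x _ => le_max_left _ _
  have hlim := (continuous_coe_real_ereal.tendsto _).comp
    (tendsto_circleAverage_max_circleAvgTrunc hR.le (fun N => (hS N).continuousOn.mono hsphere)
      (fun x hx => hanti x (hsphere hx)) n)
  exact le_of_tendsto_of_tendsto'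
    (tendsto_atTop_iInf fun M N hMN => EReal.coe_le_coe_iff.2 (hanti c hc hMN)) hlim
    fun N => EReal.coe_le_coe_iff.2 (hmean N)

lemma PolarSet.mono {P Q : Set ℂ} (hP : PolarSet P) (h : Q ⊆ P) : PolarSet Q := fun z hz => by
  obtain ⟨U, hUo, hUc, hzU, u, hu, hne, hbot⟩ := hP z (h hz)
  exact ⟨U, hUo, hUc, hzU, u, hu, hne, fun x hx => hbot x ⟨h hx.1, hx.2⟩⟩

/-! ### Sets with vanishing Chebyshev constant are polar -/

/-- The logarithmic potential `n⁻¹ ∑ log ‖x - z i‖` of the points `z 0, …, z (n - 1)`, truncated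
below at `log ε`. -/
noncomputable def truncLogPotential (n : ℕ) (z : ℕ → ℂ) (ε : ℝ) (x : ℂ) : ℝ :=
  (n : ℝ)⁻¹ * Real.log (max (∏ i ∈ Finset.range n, ‖x - z i‖) (ε ^ n))

section TruncLogPotential

variable {n : ℕ} {z : ℕ → ℂ} {ε : ℝ} {x : ℂ}

lemma continuous_log_max_prod {ι : Type*} (s : Finset ι) (z : ι → ℂ) {δ : ℝ} (hδ : 0 < δ) :
    Continuous fun x => Real.log (max (∏ i ∈ s, ‖x - z i‖) δ) :=
  Continuous.log (by fun_prop) fun _ => (hδ.trans_le (le_max_right _ _)).ne'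

lemma log_max_prod_le_circleAverage {ι : Type*} (s : Finset ι) (z : ι → ℂ) {δ : ℝ} (hδ : 0 < δ)
    (c : ℂ) {R : ℝ} (hR : 0 < R) :
    Real.log (max (∏ i ∈ s, ‖c - z i‖) δ) ≤
      Real.circleAverage (fun x => Real.log (max (∏ i ∈ s, ‖x - z i‖) δ)) c R := by
  classical
  have hint : CircleIntegrable (fun x => Real.log (max (∏ i ∈ s, ‖x - z i‖) δ)) c R :=
    (continuous_log_max_prod s z hδ).continuousOn.circleIntegrable hR.le
  rcases le_or_gt (∏ i ∈ s, ‖c - z i‖) δ with hle | hgt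
  · rw [max_eq_right hle]
    conv_lhs => rw [← Real.circleAverage_const (Real.log δ) c R]
    exact Real.circleAverage_mono (circleIntegrable_const _ _ _) hint
      fun x _ => Real.log_le_log hδ (le_max_right _ _)
  · have hne : ∀ i ∈ s, ‖c - z i‖ ≠ 0 := Finset.prod_ne_zero_iff.1 (hδ.trans hgt).ne'
    have hoff : ∀ᶠ x in codiscreteWithin (sphere c |R|),
        ∑ i ∈ s, Real.log ‖x - z i‖ ≤ Real.log (max (∏ i ∈ s, ‖x - z i‖) δ) := by
      filter_upwards [compl_finite_mem_codiscreteWithin (s.image z).finite_toSet] with x hx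
      have hx0 : ∀ i ∈ s, ‖x - z i‖ ≠ 0 := fun i hi h0 =>
        hx (Finset.mem_image.2 ⟨i, hi, (sub_eq_zero.1 (norm_eq_zero.1 h0)).symm⟩)
      rw [← Real.log_prod hx0]
      exact Real.log_le_log (Finset.prod_pos fun i hi => (norm_nonneg _).lt_of_ne' (hx0 i hi))
        (le_max_left _ _)
    calc Real.log (max (∏ i ∈ s, ‖c - z i‖) δ)
        = ∑ i ∈ s, Real.log ‖c - z i‖ := by rw [max_eq_left hgt.le, Real.log_prod hne]
      _ ≤ ∑ i ∈ s, Real.circleAverage (Real.log ‖· - z i‖) c R := Finset.sum_le_sum fun i hi =>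
          log_norm_sub_le_circleAverage (sub_ne_zero.1 (norm_ne_zero_iff.1 (hne i hi))) hR
      _ = Real.circleAverage (fun x => ∑ i ∈ s, Real.log ‖x - z i‖) c R :=
          (Real.circleAverage_fun_sum fun i _ => circleIntegrable_log_norm_sub_const R).symm
      _ ≤ _ := circleAverage_mono_codiscreteWithin hR.ne'
          (CircleIntegrable.fun_sum _ fun i _ => circleIntegrable_log_norm_sub_const R) hint hoff

lemma continuousSubharmonicOn_truncLogPotential (n : ℕ) (z : ℕ → ℂ) (hε : 0 < ε) (Ω : Set ℂ) :
    ContinuousSubharmonicOn (truncLogPotential n z ε) Ω where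
  continuousOn :=
    (continuous_const.mul (continuous_log_max_prod _ z (pow_pos hε n))).continuousOn
  le_circleAverage c R hR _ := by
    have havg : Real.circleAverage (truncLogPotential n z ε) c R = (n : ℝ)⁻¹ *
        Real.circleAverage (fun x => Real.log (max (∏ i ∈ Finset.range n, ‖x - z i‖) (ε ^ n)))
          c R :=
      Real.circleAverage_fun_smul (a := (n : ℝ)⁻¹)
    rw [havg, truncLogPotential]
    gcongr
    exact log_max_prod_le_circleAverage _ z (pow_pos hε n) c hR

lemma truncLogPotential_le_log (hn : n ≠ 0) (hε : 0 < ε) {T : ℝ} (hεT : ε ≤ T)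
    (hx : ∀ i, ‖x - z i‖ ≤ T) : truncLogPotential n z ε x ≤ Real.log T := by
  have hprod : ∏ i ∈ Finset.range n, ‖x - z i‖ ≤ T ^ n := by
    simpa using Finset.prod_le_prod (s := Finset.range n) (fun i _ => norm_nonneg (x - z i))
      fun i _ => hx i
  rw [truncLogPotential, inv_mul_le_iff₀ (by positivity), ← Real.log_pow]
  exact Real.log_le_log ((pow_pos hε n).trans_le (le_max_right _ _))
    (max_le hprod (pow_le_pow_left₀ hε.le hεT n))

lemma truncLogPotential_nonneg (hx : ∀ i, 1 ≤ ‖x - z i‖) : 0 ≤ truncLogPotential n z ε x := by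
  have hprod : 1 ≤ ∏ i ∈ Finset.range n, ‖x - z i‖ := by
    simpa using Finset.prod_le_prod (s := Finset.range n) (fun _ _ => zero_le_one) fun i _ => hx i
  exact mul_nonneg (by positivity) (Real.log_nonneg (hprod.trans (le_max_left _ _)))

lemma truncLogPotential_eq_log (hn : n ≠ 0) (hx : ∏ i ∈ Finset.range n, ‖x - z i‖ ≤ ε ^ n) :
    truncLogPotential n z ε x = Real.log ε := by
  rw [truncLogPotential, max_eq_right hx, Real.log_pow, inv_mul_cancel_left₀ (by positivity)]

end TruncLogPotential

/-- `E` has vanishing Chebyshev constant: for every `ε > 0`, some monic polynomial of positive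
degree `n` with all its zeros in `E` is bounded by `ε ^ n` on `E`. The polynomial is encoded by its
zeros `z 0, …, z (n - 1)`. -/
def HasZeroChebyshevConstant (E : Set ℂ) : Prop :=
  ∀ ε : ℝ, 0 < ε → ∃ n ≠ 0, ∃ z : ℕ → ℂ, (∀ i, z i ∈ E) ∧
    ∀ x ∈ E, ∏ i ∈ Finset.range n, ‖x - z i‖ ≤ ε ^ n

lemma iInf_sum_coe_eq_bot {t : ℕ → ℝ} (ht : ∀ k, t k ≤ -1) :
    ⨅ N : ℕ, ((∑ k ∈ Finset.range N, t k : ℝ) : EReal) = ⊥ := by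
  refine (EReal.eq_bot_iff_forall_lt _).2 fun y => ?_
  obtain ⟨N, hN⟩ := exists_nat_gt (-y)
  refine (iInf_le _ N).trans_lt (EReal.coe_lt_coe_iff.2 ?_)
  calc ∑ k ∈ Finset.range N, t k ≤ ∑ _k ∈ Finset.range N, (-1 : ℝ) :=
        Finset.sum_le_sum fun k _ => ht k
    _ = -N := by simp
    _ < y := by linarith

lemma iInf_sum_coe_ne_bot {t b : ℕ → ℝ} (hb : Summable b) (hb0 : ∀ k, 0 ≤ b k)
    (ht : ∀ k, -b k ≤ t k) : ⨅ N : ℕ, ((∑ k ∈ Finset.range N, t k : ℝ) : EReal) ≠ ⊥ := by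
  refine ((EReal.bot_lt_coe (-∑' k, b k)).trans_le (le_iInf fun N => ?_)).ne'
  refine EReal.coe_le_coe_iff.2
    ((neg_le_neg (hb.sum_le_tsum (Finset.range N) fun k _ => hb0 k)).trans ?_)
  rw [← Finset.sum_neg_distrib]
  exact Finset.sum_le_sum fun k _ => ht k

/-- The potentials of extremal polynomials for `ε = exp (-2 ^ k)` are weighted by `2 ^ (-k)`: the
weights are summable off `E`, while on `E` each summand stays at most `-1`. -/
theorem HasZeroChebyshevConstant.exists_subharmonicOn_eq_bot {E : Set ℂ}
    (hE : HasZeroChebyshevConstant E) {w : ℂ} {s : ℝ} (hs : 0 ≤ s) (hEs : E ⊆ closedBall w s) :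
    ∃ u : ℂ → EReal, SubharmonicOn u (ball w (s + 2)) ∧ (∃ x ∈ ball w (s + 2), u x ≠ ⊥) ∧
      ∀ x ∈ E, u x = ⊥ := by
  set ε : ℕ → ℝ := fun k => Real.exp (-2 ^ k)
  have hε : ∀ k, 0 < ε k := fun k => Real.exp_pos _
  choose n hn z hzE hz using fun k => hE (ε k) (hε k)
  set T : ℝ := 2 * s + 2
  have hT : 1 ≤ T := by linarith
  have hlogT : 0 ≤ Real.log T := Real.log_nonneg hT
  have hεT : ∀ k, ε k ≤ T := fun k => (Real.exp_le_one_iff.2 (by simp)).trans hT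
  have hzs : ∀ k i, dist (z k i) w ≤ s := fun k i => hEs (hzE k i)
  set V : ℕ → ℂ → ℝ := fun k => truncLogPotential (n k) (z k) (ε k)
  set t : ℕ → ℂ → ℝ := fun k x => (1 / 2) ^ k * (V k x - Real.log T)
  have hsub : ∀ N, ContinuousSubharmonicOn (fun x => ∑ k ∈ Finset.range N, t k x)
      (ball w (s + 2)) := fun N => .sum fun k _ =>
    (continuousSubharmonicOn_truncLogPotential _ _ (hε k) _).const_mul_sub_const (by positivity) _
  have hneg : ∀ k, ∀ x ∈ ball w (s + 2), t k x ≤ 0 := fun k x hx =>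
    mul_nonpos_of_nonneg_of_nonpos (by positivity) <| sub_nonpos.2 <|
      truncLogPotential_le_log (hn k) (hε k) (hεT k) fun i => by
        rw [← dist_eq_norm]
        linarith [dist_triangle_right x (z k i) w, mem_ball.1 hx, hzs k i]
  refine ⟨_, subharmonicOn_iInf_of_antitone hsub fun x hx => antitone_nat_of_succ_le fun N => ?_,
    ⟨w + (s + 1 : ℝ), ?_, ?_⟩, fun x hx => iInf_sum_coe_eq_bot fun k => ?_⟩
  · rw [Finset.sum_range_succ]
    linarith [hneg N x hx]
  · rw [mem_ball, dist_self_add_left, Complex.norm_real, Real.norm_of_nonneg (by positivity)]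
    linarith
  · refine iInf_sum_coe_ne_bot (b := fun k => (1 / 2) ^ k * Real.log T)
      (summable_geometric_two.mul_right _) (fun k => by positivity) fun k => ?_
    have hfar : ∀ i, 1 ≤ ‖w + (s + 1 : ℝ) - z k i‖ := fun i => by
      have hdist : dist (w + ((s + 1 : ℝ) : ℂ)) w = s + 1 := by
        rw [dist_self_add_left, Complex.norm_real, Real.norm_of_nonneg (by positivity)]
      rw [← dist_eq_norm]
      linarith [dist_triangle (w + ((s + 1 : ℝ) : ℂ)) (z k i) w, hzs k i]
    have hV : 0 ≤ V k (w + (s + 1 : ℝ)) := truncLogPotential_nonneg hfar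
    calc -((1 / 2) ^ k * Real.log T) = (1 / 2) ^ k * (0 - Real.log T) := by ring
      _ ≤ t k (w + (s + 1 : ℝ)) :=
          mul_le_mul_of_nonneg_left (sub_le_sub_right hV _) (by positivity)
  · calc t k x = (1 / 2) ^ k * (-2 ^ k - Real.log T) := by
          simp only [t, V, truncLogPotential_eq_log (hn k) (hz k x hx), ε, Real.log_exp]
      _ ≤ (1 / 2) ^ k * (-2 ^ k) := by gcongr; linarith
      _ = -1 := by rw [mul_neg, ← mul_pow]; norm_num

lemma HasZeroChebyshevConstant.polarSet {E : Set ℂ} (hE : HasZeroChebyshevConstant E)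
    (hbd : Bornology.IsBounded E) : PolarSet E := fun z _ => by
  obtain ⟨s, hs, hEs⟩ := hbd.subset_closedBall_lt 0 z
  obtain ⟨u, hu, hne, hbot⟩ := hE.exists_subharmonicOn_eq_bot hs.le hEs
  have hz' : z ∈ ball z (s + 2) := mem_ball_self (by linarith)
  exact ⟨ball z (s + 2), isOpen_ball, (convex_ball _ _).isConnected ⟨z, hz'⟩, hz', u, hu, hne,
    fun x hx => hbot x hx.1⟩

/-! ### Logarithmic energy estimates in the plane -/

lemma lintegral_comp_norm_sub {φ : ℝ → ℝ≥0∞} (hφ : Measurable φ) (a : ℂ) :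
    ∫⁻ z : ℂ, φ ‖z - a‖ =
      ENNReal.ofReal (2 * Real.pi) * ∫⁻ r in Ioi (0 : ℝ), ENNReal.ofReal r * φ r := by
  rw [lintegral_sub_right_eq_self (fun z : ℂ => φ ‖z‖) a, ← Complex.lintegral_comp_polarCoord_symm,
    polarCoord_target, Measure.volume_eq_prod, ← Measure.prod_restrict, lintegral_prod]
  · simp only [Complex.norm_polarCoord_symm, smul_eq_mul, lintegral_const,
      Measure.restrict_apply_univ, Real.volume_Ioo]
    rw [lintegral_mul_const' _ _ ENNReal.ofReal_ne_top, mul_comm, sub_neg_eq_add, ← two_mul]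
    congr 1
    exact setLIntegral_congr_fun measurableSet_Ioi fun r hr => by
      rw [abs_of_pos (mem_Ioi.1 hr)]
  · simp only [Complex.norm_polarCoord_symm]
    fun_prop

lemma setLIntegral_comp_norm_sub {s : Set ℝ} (hs : MeasurableSet s) {φ : ℝ → ℝ≥0∞}
    (hφ : Measurable φ) (a : ℂ) :
    ∫⁻ z in {z : ℂ | ‖z - a‖ ∈ s}, φ ‖z - a‖ =
      ENNReal.ofReal (2 * Real.pi) * ∫⁻ r in s ∩ Ioi (0 : ℝ), ENNReal.ofReal r * φ r := by
  have hpre : MeasurableSet {z : ℂ | ‖z - a‖ ∈ s} :=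
    (measurable_id.sub_const a).norm hs
  have hind : ∀ z : ℂ, {z : ℂ | ‖z - a‖ ∈ s}.indicator (fun z => φ ‖z - a‖) z =
      s.indicator φ ‖z - a‖ := fun z => rfl
  rw [← lintegral_indicator hpre, lintegral_congr hind,
    lintegral_comp_norm_sub (hφ.indicator hs), ← Measure.restrict_restrict hs,
    ← lintegral_indicator hs]
  simp only [indicator_mul_right]

lemma lintegral_ball_inv_norm_sub (a : ℂ) {ρ : ℝ} :
    ∫⁻ z in ball a ρ, ENNReal.ofReal ‖z - a‖⁻¹ = ENNReal.ofReal (2 * Real.pi * ρ) := by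
  have hball : ball a ρ = {z : ℂ | ‖z - a‖ ∈ Iio ρ} := by
    ext z
    rw [mem_ball_iff_norm, mem_ofPred_eq, mem_Iio]
  have hone : ∀ r ∈ Iio ρ ∩ Ioi (0 : ℝ), ENNReal.ofReal r * ENNReal.ofReal r⁻¹ = 1 := fun r hr => by
    rw [← ENNReal.ofReal_mul (le_of_lt hr.2), mul_inv_cancel₀ (ne_of_gt hr.2), ENNReal.ofReal_one]
  rw [hball, setLIntegral_comp_norm_sub (φ := fun r => ENNReal.ofReal r⁻¹) measurableSet_Iio
    (by fun_prop),
    setLIntegral_congr_fun (measurableSet_Iio.inter measurableSet_Ioi) hone, setLIntegral_one,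
    Iio_inter_Ioi, Real.volume_Ioo, sub_zero, ← ENNReal.ofReal_mul (by positivity)]

lemma lintegral_annulus_inv_norm_sub_sq (a : ℂ) {δ R : ℝ} (hδ : 0 < δ) (hR : δ ≤ R) :
    ∫⁻ z in ball a R \ ball a δ, ENNReal.ofReal (‖z - a‖⁻¹ ^ 2) =
      ENNReal.ofReal (2 * Real.pi * Real.log (R / δ)) := by
  have hann : ball a R \ ball a δ = {z : ℂ | ‖z - a‖ ∈ Ico δ R} := by
    ext z
    simp only [Set.mem_sdiff, mem_ball_iff_norm, not_lt, mem_ofPred_eq, mem_Ico, and_comm]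
  have hpos : Ico δ R ⊆ Ioi (0 : ℝ) := fun r hr => hδ.trans_le hr.1
  have hinv : ∀ r ∈ Ico δ R,
      ENNReal.ofReal r * ENNReal.ofReal (r⁻¹ ^ 2) = ENNReal.ofReal r⁻¹ := fun r hr => by
    have hr0 : 0 < r := hpos hr
    rw [← ENNReal.ofReal_mul hr0.le, sq, mul_inv_cancel_left₀ hr0.ne']
  have hint : IntegrableOn (fun r : ℝ => r⁻¹) (Ioc δ R) :=
    (intervalIntegrable_iff_integrableOn_Ioc_of_le hR).1 <|
      intervalIntegral.intervalIntegrable_inv (fun r hr => by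
        rw [uIcc_of_le hR] at hr
        exact (hδ.trans_le hr.1).ne') continuousOn_id
  rw [hann, setLIntegral_comp_norm_sub (φ := fun r => ENNReal.ofReal (r⁻¹ ^ 2)) measurableSet_Ico
    (by fun_prop), inter_eq_left.2 hpos,
    setLIntegral_congr_fun measurableSet_Ico hinv, Measure.restrict_congr_set Ico_ae_eq_Ioc,
    ← ofReal_integral_eq_lintegral_ofReal hint, ← intervalIntegral.integral_of_le hR,
    integral_inv_of_pos hδ (hδ.trans_le hR), ← ENNReal.ofReal_mul (by positivity)]
  filter_upwards [ae_restrict_mem measurableSet_Ioc] with r hr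
  exact inv_nonneg.2 (hδ.trans hr.1).le

lemma lintegral_half_ball_inv_norm_mul_le (a b : ℂ) :
    ∫⁻ z in ball a (‖a - b‖ / 2), ENNReal.ofReal (‖z - a‖⁻¹ * ‖z - b‖⁻¹) ≤
      ENNReal.ofReal (2 * Real.pi) := by
  rcases eq_or_ne a b with rfl | hab
  · simp
  have hd : 0 < ‖a - b‖ := norm_pos_iff.2 (sub_ne_zero.2 hab)
  calc ∫⁻ z in ball a (‖a - b‖ / 2), ENNReal.ofReal (‖z - a‖⁻¹ * ‖z - b‖⁻¹)
      ≤ ∫⁻ z in ball a (‖a - b‖ / 2),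
          ENNReal.ofReal (‖a - b‖ / 2)⁻¹ * ENNReal.ofReal ‖z - a‖⁻¹ := by
        refine setLIntegral_mono' measurableSet_ball fun z hz => ?_
        have hza : ‖z - a‖ < ‖a - b‖ / 2 := mem_ball_iff_norm.1 hz
        have hzb : ‖a - b‖ / 2 ≤ ‖z - b‖ := by
          linarith [norm_sub_le_norm_sub_add_norm_sub a z b, norm_sub_rev a z]
        rw [← ENNReal.ofReal_mul (by positivity), mul_comm]
        gcongr
    _ = ENNReal.ofReal (2 * Real.pi) := by
        rw [lintegral_const_mul' _ _ ENNReal.ofReal_ne_top, lintegral_ball_inv_norm_sub,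
          ← ENNReal.ofReal_mul (by positivity), mul_left_comm, inv_mul_cancel₀ (by positivity),
          mul_one]

lemma lintegral_sdiff_balls_inv_norm_mul_le {B : Set ℂ} {a b : ℂ} {R δ : ℝ} (hδ : 0 < δ)
    (hδR : δ ≤ R) (ha : B ⊆ ball a R) (hb : B ⊆ ball b R) :
    ∫⁻ z in B \ (ball a δ ∪ ball b δ), ENNReal.ofReal (‖z - a‖⁻¹ * ‖z - b‖⁻¹) ≤
      ENNReal.ofReal (2 * Real.pi * Real.log (R / δ)) := by
  set S := B \ (ball a δ ∪ ball b δ)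
  set L := ENNReal.ofReal (2 * Real.pi * Real.log (R / δ))
  have hSa : ∫⁻ z in S, ENNReal.ofReal (‖z - a‖⁻¹ ^ 2) ≤ L :=
    (lintegral_mono_set (sdiff_subset_sdiff ha subset_union_left)).trans_eq
      (lintegral_annulus_inv_norm_sub_sq a hδ hδR)
  have hSb : ∫⁻ z in S, ENNReal.ofReal (‖z - b‖⁻¹ ^ 2) ≤ L :=
    (lintegral_mono_set (sdiff_subset_sdiff hb subset_union_right)).trans_eq
      (lintegral_annulus_inv_norm_sub_sq b hδ hδR)
  calc ∫⁻ z in S, ENNReal.ofReal (‖z - a‖⁻¹ * ‖z - b‖⁻¹)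
      ≤ ∫⁻ z in S, 2⁻¹ * (ENNReal.ofReal (‖z - a‖⁻¹ ^ 2) + ENNReal.ofReal (‖z - b‖⁻¹ ^ 2)) := by
        refine lintegral_mono fun z => ?_
        rw [← ENNReal.ofReal_add (by positivity) (by positivity), ← ENNReal.ofReal_ofNat 2,
          ← ENNReal.ofReal_inv_of_pos two_pos, ← ENNReal.ofReal_mul (by positivity)]
        exact ENNReal.ofReal_le_ofReal (by nlinarith only [sq_nonneg (‖z - a‖⁻¹ - ‖z - b‖⁻¹)])
    _ = 2⁻¹ * ((∫⁻ z in S, ENNReal.ofReal (‖z - a‖⁻¹ ^ 2)) +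
          ∫⁻ z in S, ENNReal.ofReal (‖z - b‖⁻¹ ^ 2)) := by
        rw [lintegral_const_mul' _ _ (by finiteness), lintegral_add_left (by fun_prop)]
    _ ≤ 2⁻¹ * (L + L) := by gcongr
    _ = L := by rw [← two_mul, ← mul_assoc, ENNReal.inv_mul_cancel two_ne_zero (by finiteness),
          one_mul]

lemma lintegral_inv_norm_mul_inv_norm_le {B : Set ℂ} {a b : ℂ} {R : ℝ} (hab : a ≠ b)
    (hd : ‖a - b‖ ≤ 2 * R) (ha : B ⊆ ball a R) (hb : B ⊆ ball b R) :
    ∫⁻ z in B, ENNReal.ofReal (‖z - a‖⁻¹ * ‖z - b‖⁻¹) ≤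
      ENNReal.ofReal (4 * Real.pi + 2 * Real.pi * Real.log (2 * R / ‖a - b‖)) := by
  have hd0 : 0 < ‖a - b‖ := norm_pos_iff.2 (sub_ne_zero.2 hab)
  set δ := ‖a - b‖ / 2
  have hlog : 2 * R / ‖a - b‖ = R / δ := by
    rw [div_div_eq_mul_div, mul_comm]
  have hδR : δ ≤ R := (div_le_iff₀' two_pos).2 hd
  have hlog0 : 0 ≤ Real.log (R / δ) := Real.log_nonneg ((one_le_div (half_pos hd0)).2 hδR)
  have hba : ∫⁻ z in ball b δ, ENNReal.ofReal (‖z - a‖⁻¹ * ‖z - b‖⁻¹) ≤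
      ENNReal.ofReal (2 * Real.pi) := by
    simp only [δ, norm_sub_rev a b, mul_comm ‖_ - a‖⁻¹]
    exact lintegral_half_ball_inv_norm_mul_le b a
  calc ∫⁻ z in B, ENNReal.ofReal (‖z - a‖⁻¹ * ‖z - b‖⁻¹)
      ≤ ∫⁻ z in (ball a δ ∪ ball b δ) ∪ B \ (ball a δ ∪ ball b δ),
          ENNReal.ofReal (‖z - a‖⁻¹ * ‖z - b‖⁻¹) :=
        lintegral_mono_set (subset_union_right.trans union_sdiff_self.ge)
    _ ≤ ENNReal.ofReal (2 * Real.pi) + ENNReal.ofReal (2 * Real.pi) +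
          ENNReal.ofReal (2 * Real.pi * Real.log (R / δ)) :=
        (lintegral_union_le _ _ _).trans <| add_le_add
          ((lintegral_union_le _ _ _).trans
            (add_le_add (lintegral_half_ball_inv_norm_mul_le a b) hba))
          (lintegral_sdiff_balls_inv_norm_mul_le (half_pos hd0) hδR ha hb)
    _ = _ := by
        rw [← ENNReal.ofReal_add (by positivity) (by positivity),
          ← ENNReal.ofReal_add (by positivity) (by positivity), hlog]
        ring_nf

/-! ### Nodes of Leja type -/

lemma exists_nodes_pow_le_prod {E : Set ℂ} (hE : E.Nonempty) {ε : ℝ}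
    (h : ∀ n ≠ 0, ∀ z : ℕ → ℂ, (∀ i, z i ∈ E) →
      ∃ x ∈ E, ε ^ n ≤ ∏ i ∈ Finset.range n, ‖x - z i‖) :
    ∃ z : ℕ → ℂ, (∀ i, z i ∈ E) ∧ ∀ n, ε ^ n ≤ ∏ i ∈ Finset.range n, ‖z n - z i‖ := by
  obtain ⟨x₀, hx₀⟩ := hE
  have h' : ∀ n (z : ℕ → E), ∃ x : E, ε ^ n ≤ ∏ i ∈ Finset.range n, ‖(x : ℂ) - z i‖ := fun n z => by
    rcases eq_or_ne n 0 with rfl | hn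
    · exact ⟨⟨x₀, hx₀⟩, by simp⟩
    · obtain ⟨x, hx, hle⟩ := h n hn (fun i => z i) fun i => (z i).2
      exact ⟨⟨x, hx⟩, hle⟩
  choose next hnext using h'
  let g : ℕ → ℕ → E := Nat.rec (fun _ => ⟨x₀, hx₀⟩) fun n v => Function.update v n (next n v)
  have hg : ∀ n, ∀ i < n, g n i = next i (g i) := fun n => by
    induction n with
    | zero => exact fun i hi => absurd hi i.not_lt_zero
    | succ n ih =>
      intro i hi
      rcases (Nat.lt_succ_iff_lt_or_eq.1 hi) with hlt | rfl
      · exact (Function.update_of_ne hlt.ne _ _).trans (ih i hlt)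
      · exact Function.update_self _ _ _
  refine ⟨fun i => next i (g i), fun i => (next i (g i)).2, fun n => (hnext n (g n)).trans_eq ?_⟩
  exact Finset.prod_congr rfl fun i hi => by rw [hg n i (Finset.mem_range.1 hi)]

section Nodes

variable {z : ℕ → ℂ} {ε : ℝ}

lemma injective_of_pow_le_prod (hε : 0 < ε)
    (hz : ∀ n, ε ^ n ≤ ∏ i ∈ Finset.range n, ‖z n - z i‖) : Function.Injective z := by
  refine Function.Injective.of_lt_imp_ne fun i j hij h => ?_
  have hprod : 0 < ∏ k ∈ Finset.range j, ‖z j - z k‖ := (pow_pos hε j).trans_le (hz j)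
  exact Finset.prod_ne_zero_iff.1 hprod.ne' i (Finset.mem_range.2 hij)
    (by rw [h, sub_self, norm_zero])

lemma sum_neg_log_norm_sub_le (hε : 0 < ε)
    (hz : ∀ n, ε ^ n ≤ ∏ i ∈ Finset.range n, ‖z n - z i‖) (n : ℕ) :
    ∑ i ∈ Finset.range n, ∑ j ∈ Finset.range n, -Real.log ‖z i - z j‖ ≤
      |Real.log ε| * n ^ 2 := by
  have hinj := injective_of_pow_le_prod hε hz
  induction n with
  | zero => simp
  | succ n ih =>
    have hne : ∀ j ∈ Finset.range n, ‖z n - z j‖ ≠ 0 := fun j hj =>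
      norm_ne_zero_iff.2 (sub_ne_zero.2 (hinj.ne (Finset.mem_range.1 hj).ne'))
    have hnew : ∑ j ∈ Finset.range n, -Real.log ‖z n - z j‖ ≤ |Real.log ε| * n := by
      calc ∑ j ∈ Finset.range n, -Real.log ‖z n - z j‖
          = -Real.log (∏ j ∈ Finset.range n, ‖z n - z j‖) := by
            rw [Finset.sum_neg_distrib, Real.log_prod hne]
        _ ≤ -Real.log (ε ^ n) := neg_le_neg (Real.log_le_log (by positivity) (hz n))
        _ = -Real.log ε * n := by rw [Real.log_pow]; ring
        _ ≤ |Real.log ε| * n := by gcongr; exact neg_le_abs _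
    have hnew' : ∑ i ∈ Finset.range n, -Real.log ‖z i - z n‖ ≤ |Real.log ε| * n := by
      simpa only [norm_sub_rev (z n)] using hnew
    simp only [Finset.sum_range_succ, Finset.sum_add_distrib, sub_self, norm_zero, Real.log_zero,
      neg_zero, add_zero]
    push_cast
    nlinarith only [ih, hnew, hnew', abs_nonneg (Real.log ε)]

end Nodes

lemma lintegral_sq_sum_le {α ι : Type*} [MeasurableSpace α] {μ : Measure α} (s : Finset ι)
    {h : ι → α → ℝ} (hm : ∀ i, Measurable (h i)) (h0 : ∀ i x, 0 ≤ h i x) {c : ι → ι → ℝ}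
    (hc0 : ∀ i j, 0 ≤ c i j)
    (hc : ∀ i j, ∫⁻ x, ENNReal.ofReal (h i x * h j x) ∂μ ≤ ENNReal.ofReal (c i j)) :
    ∫⁻ x, ENNReal.ofReal ((∑ i ∈ s, h i x) ^ 2) ∂μ ≤
      ENNReal.ofReal (∑ i ∈ s, ∑ j ∈ s, c i j) := by
  have hsq : ∀ x, ENNReal.ofReal ((∑ i ∈ s, h i x) ^ 2) =
      ∑ i ∈ s, ∑ j ∈ s, ENNReal.ofReal (h i x * h j x) := fun x => by
    have hij : ∀ i j, 0 ≤ h i x * h j x := fun i j => mul_nonneg (h0 i x) (h0 j x)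
    rw [sq, Finset.sum_mul_sum,
      ENNReal.ofReal_sum_of_nonneg fun i _ => Finset.sum_nonneg fun j _ => hij i j]
    exact Finset.sum_congr rfl fun i _ => ENNReal.ofReal_sum_of_nonneg fun j _ => hij i j
  have hmeas : ∀ i j, Measurable fun x => ENNReal.ofReal (h i x * h j x) := fun i j =>
    ((hm i).mul (hm j)).ennreal_ofReal
  calc ∫⁻ x, ENNReal.ofReal ((∑ i ∈ s, h i x) ^ 2) ∂μ
      = ∑ i ∈ s, ∑ j ∈ s, ∫⁻ x, ENNReal.ofReal (h i x * h j x) ∂μ := by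
        rw [lintegral_congr hsq,
          lintegral_finsetSum _ fun i _ => Finset.measurable_fun_sum _ fun j _ => hmeas i j]
        exact Finset.sum_congr rfl fun i _ => lintegral_finsetSum _ fun j _ => hmeas i j
    _ ≤ ∑ i ∈ s, ∑ j ∈ s, ENNReal.ofReal (c i j) := by gcongr; exact hc _ _
    _ = ENNReal.ofReal (∑ i ∈ s, ∑ j ∈ s, c i j) := by
        rw [ENNReal.ofReal_sum_of_nonneg fun i _ => Finset.sum_nonneg fun j _ => hc0 i j]
        exact Finset.sum_congr rfl fun i _ =>
          (ENNReal.ofReal_sum_of_nonneg fun j _ => hc0 i j).symm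

/-- A bound for the mutual energy `∫ 1 / (‖z - a‖ ‖z - b‖)` over sets that lie within distance `R`
of `a` and `b` and at distance at least `δ` from them. The logarithmic term disappears for `a = b`
because `Real.log 0 = 0`. -/
noncomputable def mutualEnergyBound (R δ : ℝ) (a b : ℂ) : ℝ :=
  (if a = b then 2 * Real.pi * (R / δ) else 0) +
    (4 * Real.pi + 2 * Real.pi * (Real.log (2 * R) - Real.log ‖a - b‖))

section MutualEnergy

variable {R δ : ℝ} {a b : ℂ}

lemma mutualEnergyBound_self :
    mutualEnergyBound R δ a a =
      2 * Real.pi * (R / δ) + (4 * Real.pi + 2 * Real.pi * Real.log (2 * R)) := by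
  rw [mutualEnergyBound, if_pos rfl, sub_self, norm_zero, Real.log_zero, sub_zero]

lemma mutualEnergyBound_of_ne (hR : 0 < R) (hab : a ≠ b) :
    mutualEnergyBound R δ a b = 4 * Real.pi + 2 * Real.pi * Real.log (2 * R / ‖a - b‖) := by
  rw [mutualEnergyBound, if_neg hab, zero_add,
    Real.log_div (by positivity) (norm_ne_zero_iff.2 (sub_ne_zero.2 hab))]

lemma mutualEnergyBound_nonneg (hR : 1 ≤ R) (hδ : 0 < δ) (hd : ‖a - b‖ ≤ 2 * R) :
    0 ≤ mutualEnergyBound R δ a b := by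
  rcases eq_or_ne a b with rfl | hab
  · have hlog : 0 ≤ Real.log (2 * R) := Real.log_nonneg (by linarith)
    rw [mutualEnergyBound_self]
    positivity
  · have hlog : 0 ≤ Real.log (2 * R / ‖a - b‖) :=
      Real.log_nonneg ((one_le_div (norm_pos_iff.2 (sub_ne_zero.2 hab))).2 hd)
    rw [mutualEnergyBound_of_ne (by linarith) hab]
    positivity

lemma lintegral_inv_norm_mul_le_mutualEnergyBound {S : Set ℂ} (hR : 1 ≤ R) (hδ : 0 < δ)
    (hδR : δ ≤ R) (hd : ‖a - b‖ ≤ 2 * R) (ha : S ⊆ ball a R) (hb : S ⊆ ball b R)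
    (hsep : ∀ x ∈ S, δ ≤ ‖x - a‖) :
    ∫⁻ x in S, ENNReal.ofReal (‖x - a‖⁻¹ * ‖x - b‖⁻¹) ≤
      ENNReal.ofReal (mutualEnergyBound R δ a b) := by
  rcases eq_or_ne a b with rfl | hab
  · have hann : S ⊆ ball a R \ ball a δ := fun x hx =>
      ⟨ha hx, fun h => (hsep x hx).not_gt (mem_ball_iff_norm.1 h)⟩
    have hlog : 0 ≤ Real.log (2 * R) := Real.log_nonneg (by linarith)
    simp only [← sq]
    refine (lintegral_mono_set hann).trans ?_
    rw [lintegral_annulus_inv_norm_sub_sq a hδ hδR, mutualEnergyBound_self]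
    refine ENNReal.ofReal_le_ofReal (le_add_of_le_of_nonneg ?_ (by positivity))
    gcongr
    exact Real.log_le_self (by positivity)
  · rw [mutualEnergyBound_of_ne (by linarith) hab]
    exact lintegral_inv_norm_mul_inv_norm_le hab hd ha hb

end MutualEnergy

section Nodes

variable {z : ℕ → ℂ} {ε : ℝ}

lemma sum_mutualEnergyBound_le (hε : 0 < ε)
    (hz : ∀ n, ε ^ n ≤ ∏ i ∈ Finset.range n, ‖z n - z i‖) {n : ℕ} (R : ℝ) :
    ∑ i ∈ Finset.range n, ∑ j ∈ Finset.range n, mutualEnergyBound R (n : ℝ)⁻¹ (z i) (z j) ≤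
      n ^ 2 *
        (2 * Real.pi * R + 4 * Real.pi + 2 * Real.pi * (Real.log (2 * R) + |Real.log ε|)) := by
  have hrow : ∀ i ∈ Finset.range n, ∑ j ∈ Finset.range n, mutualEnergyBound R (n : ℝ)⁻¹ (z i) (z j)
      = n * (2 * Real.pi * R + 4 * Real.pi + 2 * Real.pi * Real.log (2 * R)) +
        2 * Real.pi * ∑ j ∈ Finset.range n, -Real.log ‖z i - z j‖ := fun i hi => by
    simp only [mutualEnergyBound, (injective_of_pow_le_prod hε hz).eq_iff, Finset.sum_add_distrib,
      Finset.sum_ite_eq, if_pos hi, ← Finset.mul_sum, Finset.sum_sub_distrib, Finset.sum_const,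
      Finset.card_range, nsmul_eq_mul, Finset.sum_neg_distrib, div_inv_eq_mul]
    ring
  have henergy := mul_le_mul_of_nonneg_left (sum_neg_log_norm_sub_le hε hz n) Real.two_pi_pos.le
  rw [Finset.sum_congr rfl hrow, Finset.sum_add_distrib, Finset.sum_const, Finset.card_range,
    nsmul_eq_mul, ← Finset.mul_sum]
  linarith

lemma lintegral_sq_average_inv_norm_le (hε : 0 < ε)
    (hz : ∀ n, ε ^ n ≤ ∏ i ∈ Finset.range n, ‖z n - z i‖) {n : ℕ} (hn : n ≠ 0) {R : ℝ} (hR : 1 ≤ R)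
    (hd : ∀ i j, ‖z i - z j‖ ≤ 2 * R) {S : Set ℂ} (hS : ∀ i, S ⊆ ball (z i) R)
    (hsep : ∀ x ∈ S, ∀ i, (n : ℝ)⁻¹ ≤ ‖x - z i‖) :
    ∫⁻ x in S, ENNReal.ofReal (((n : ℝ)⁻¹ * ∑ i ∈ Finset.range n, ‖x - z i‖⁻¹) ^ 2) ≤
      ENNReal.ofReal
        (2 * Real.pi * R + 4 * Real.pi + 2 * Real.pi * (Real.log (2 * R) + |Real.log ε|)) := by
  have hn0 : 0 < (n : ℝ)⁻¹ := by positivity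
  have hnR : (n : ℝ)⁻¹ ≤ R := (Nat.cast_inv_le_one n).trans hR
  simp only [mul_pow, ENNReal.ofReal_mul (sq_nonneg (n : ℝ)⁻¹)]
  rw [lintegral_const_mul' _ _ ENNReal.ofReal_ne_top]
  refine (mul_le_mul_right (lintegral_sq_sum_le (Finset.range n)
    (h := fun i x => ‖x - z i‖⁻¹) (fun i => by fun_prop) (fun i x => by positivity)
    (fun i j => mutualEnergyBound_nonneg hR hn0 (hd i j)) fun i j =>
      lintegral_inv_norm_mul_le_mutualEnergyBound hR hn0 hnR (hd i j) (hS i) (hS j)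
        fun x hx => hsep x hx i) _).trans ?_
  rw [← ENNReal.ofReal_mul (by positivity), inv_pow]
  refine ENNReal.ofReal_le_ofReal ((inv_mul_le_iff₀ (by positivity)).2 ?_)
  exact sum_mutualEnergyBound_le hε hz R

end Nodes

/-! ### Limits of averaged Cauchy kernels -/

/-- The Cauchy transform of the uniform probability measure on `z 0, …, z (n - 1)`. -/
noncomputable def cauchyAverage (z : ℕ → ℂ) (n : ℕ) (x : ℂ) : ℂ :=
  (n : ℂ)⁻¹ * ∑ i ∈ Finset.range n, (x - z i)⁻¹

section CauchyAverage

variable {z : ℕ → ℂ} {x : ℂ}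

lemma norm_cauchyAverage_le_average (z : ℕ → ℂ) (n : ℕ) (x : ℂ) :
    ‖cauchyAverage z n x‖ ≤ (n : ℝ)⁻¹ * ∑ i ∈ Finset.range n, ‖x - z i‖⁻¹ := by
  rw [cauchyAverage, norm_mul, norm_inv, Complex.norm_natCast]
  gcongr
  exact norm_sum_le_of_le _ fun i _ => (norm_inv _).le

lemma inv_mul_sum_range_le {a : ℕ → ℝ} {C : ℝ} (hC : 0 ≤ C) (ha : ∀ i, a i ≤ C) (n : ℕ) :
    (n : ℝ)⁻¹ * ∑ i ∈ Finset.range n, a i ≤ C := by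
  refine inv_mul_le_of_le_mul₀ n.cast_nonneg hC ?_
  simpa using Finset.sum_le_card_nsmul (Finset.range n) a C fun i _ => ha i

lemma norm_cauchyAverage_le {d : ℝ} (hd : 0 < d) (hx : ∀ i, d ≤ ‖x - z i‖) (n : ℕ) :
    ‖cauchyAverage z n x‖ ≤ d⁻¹ :=
  (norm_cauchyAverage_le_average z n x).trans <|
    inv_mul_sum_range_le (by positivity) (fun i => inv_anti₀ hd (hx i)) n

lemma norm_cauchyAverage_sub_le {y : ℂ} {d : ℝ} (hd : 0 < d) (hx : ∀ i, d ≤ ‖x - z i‖)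
    (hy : ∀ i, d ≤ ‖y - z i‖) (n : ℕ) :
    ‖cauchyAverage z n x - cauchyAverage z n y‖ ≤ (d ^ 2)⁻¹ * ‖x - y‖ := by
  have hterm : ∀ i, ‖(x - z i)⁻¹ - (y - z i)⁻¹‖ ≤ (d ^ 2)⁻¹ * ‖x - y‖ := fun i => by
    have hxi := hd.trans_le (hx i)
    have hyi := hd.trans_le (hy i)
    rw [inv_sub_inv (norm_pos_iff.1 hxi) (norm_pos_iff.1 hyi), sub_sub_sub_cancel_right, norm_div,
      norm_mul, norm_sub_rev y x, div_eq_inv_mul, sq]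
    gcongr
    · exact hx i
    · exact hy i
  rw [cauchyAverage, cauchyAverage, ← mul_sub, ← Finset.sum_sub_distrib, norm_mul, norm_inv,
    Complex.norm_natCast]
  exact (mul_le_mul_of_nonneg_left (norm_sum_le _ _) (by positivity)).trans
    (inv_mul_sum_range_le (by positivity) hterm n)

lemma differentiableOn_cauchyAverage {Ω : Set ℂ} (hz : ∀ i, z i ∉ Ω) (n : ℕ) :
    DifferentiableOn ℂ (cauchyAverage z n) Ω := by
  refine (DifferentiableOn.fun_sum fun i _ => ?_).const_mul _
  exact (differentiableOn_id.sub_const _).inv fun x hx h => hz i (sub_eq_zero.1 h ▸ hx)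

lemma circleIntegral_cauchyAverage {w : ℂ} {ρ : ℝ} (hz : ∀ i, z i ∈ ball w ρ) {n : ℕ}
    (hn : n ≠ 0) : ∮ x in C(w, ρ), cauchyAverage z n x = 2 * Real.pi * Complex.I := by
  have hρ : 0 < ρ := dist_nonneg.trans_lt (hz 0)
  have hint : ∀ i ∈ Finset.range n, CircleIntegrable (fun x => (x - z i)⁻¹) w ρ := fun i _ =>
    circleIntegrable_sub_inv_iff.2 (.inr fun h => by
      rw [abs_of_pos hρ] at h
      exact (mem_ball.1 (hz i)).ne (mem_sphere.1 h))
  simp only [cauchyAverage]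
  rw [circleIntegral.integral_const_mul, circleIntegral.integral_fun_sum hint]
  simp only [fun i => circleIntegral.integral_sub_inv_of_mem_ball (hz i), Finset.sum_const,
    Finset.card_range, nsmul_eq_mul]
  exact inv_mul_cancel_left₀ (Nat.cast_ne_zero.2 hn) _

end CauchyAverage

lemma exists_tendstoLocallyUniformlyOn_ultrafilter {X Y ι : Type*} [TopologicalSpace X]
    [LocallyCompactSpace X] [PseudoMetricSpace Y] [ProperSpace Y] [Nonempty Y] {Ω : Set X}
    (hΩ : IsOpen Ω) {g : ι → X → Y} (hb : ∀ x ∈ Ω, Bornology.IsBounded (range fun n => g n x))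
    (he : ∀ K ⊆ Ω, IsCompact K → EquicontinuousOn g K) (U : Ultrafilter ι) :
    ∃ f, TendstoLocallyUniformlyOn g f U Ω := by
  have hlim : ∀ x ∈ Ω, ∃ y, Tendsto (fun n => g n x) U (𝓝 y) := fun x hx => by
    obtain ⟨y, -, hy⟩ := (hb x hx).isCompact_closure.ultrafilter_le_nhds (U.map fun n => g n x)
      (tendsto_principal.2 (.of_forall fun n => subset_closure (mem_range_self n)))
    exact ⟨y, hy⟩
  choose! f hf using hlim
  have hK : ∀ K ∈ {K | K ⊆ Ω ∧ IsCompact K}, IsCompact K := fun K hK => hK.2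
  have hconv := (EquicontinuousOn.tendsto_uniformOnFun_iff_pi' hK
    (fun K hK => he K hK.1 hK.2) (U : Filter ι) f).2 <| tendsto_pi_nhds.2 fun x => by
      obtain ⟨K, hK, hxK⟩ := x.2
      exact hf x (hK.1 hxK)
  exact ⟨f, (tendstoLocallyUniformlyOn_iff_forall_isCompact hΩ).2 fun K hKΩ hKc =>
    UniformOnFun.tendsto_iff_tendstoUniformlyOn.1 hconv K ⟨hKΩ, hKc⟩⟩

lemma exists_pos_forall_le_norm_sub {E K : Set ℂ} (hE : IsClosed E) (hK : IsCompact K)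
    (hKE : K ⊆ Eᶜ) : ∃ δ > 0, ∀ x ∈ K, ∀ y ∈ E, δ ≤ ‖x - y‖ := by
  obtain ⟨r, hr, h⟩ := exists_pos_forall_lt_edist hK hE (subset_compl_iff_disjoint_right.1 hKE)
  refine ⟨r, hr, fun x hx y hy => ?_⟩
  have := h x hx y hy
  rw [edist_nndist] at this
  exact (dist_eq_norm x y).symm ▸ NNReal.coe_le_coe.2 (ENNReal.coe_lt_coe.1 this).le

lemma equicontinuousOn_cauchyAverage {E K : Set ℂ} (hE : IsClosed E) (hK : IsCompact K)
    (hKE : K ⊆ Eᶜ) {z : ℕ → ℂ} (hz : ∀ i, z i ∈ E) : EquicontinuousOn (cauchyAverage z) K := by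
  obtain ⟨δ, hδ, h⟩ := exists_pos_forall_le_norm_sub hE hK hKE
  refine (LipschitzOnWith.uniformEquicontinuousOn _ (δ ^ 2)⁻¹.toNNReal fun n =>
    LipschitzOnWith.of_dist_le_mul fun x hx y hy => ?_).equicontinuousOn
  rw [Real.coe_toNNReal _ (by positivity), dist_eq_norm, dist_eq_norm]
  exact norm_cauchyAverage_sub_le hδ (fun i => h x hx _ (hz i)) (fun i => h y hy _ (hz i)) n

lemma exists_tendstoLocallyUniformlyOn_cauchyAverage {E : Set ℂ} (hE : IsClosed E) {z : ℕ → ℂ}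
    (hz : ∀ i, z i ∈ E) (U : Ultrafilter ℕ) :
    ∃ f, TendstoLocallyUniformlyOn (cauchyAverage z) f U Eᶜ := by
  refine exists_tendstoLocallyUniformlyOn_ultrafilter hE.isOpen_compl (fun x hx => ?_)
    (fun K hKE hK => equicontinuousOn_cauchyAverage hE hK hKE hz) U
  obtain ⟨δ, hδ, h⟩ :=
    exists_pos_forall_le_norm_sub hE isCompact_singleton (singleton_subset_iff.2 hx)
  refine (isBounded_closedBall (x := (0 : ℂ)) (r := δ⁻¹)).subset ?_
  rintro _ ⟨n, rfl⟩
  exact mem_closedBall_zero_iff.2 (norm_cauchyAverage_le hδ (fun i => h x rfl _ (hz i)) n)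

lemma setLIntegral_sdiff_le_of_forall_isClosed {α : Type*} [PseudoMetricSpace α]
    [MeasurableSpace α] {μ : Measure α} {E B : Set α} (hE : IsClosed E) (hne : E.Nonempty)
    {g : α → ℝ≥0∞} {C : ℝ≥0∞}
    (h : ∀ δ > 0, ∫⁻ x in B ∩ {x | δ ≤ infDist x E}, g x ∂μ ≤ C) :
    ∫⁻ x in B \ E, g x ∂μ ≤ C := by
  have hcover : B \ E ⊆ ⋃ m : ℕ, B ∩ {x | ((m : ℝ) + 1)⁻¹ ≤ infDist x E} := fun x hx => by
    obtain ⟨m, hm⟩ := exists_nat_one_div_lt ((hE.notMem_iff_infDist_pos hne).1 hx.2)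
    exact mem_iUnion.2 ⟨m, hx.1, by simpa using hm.le⟩
  have hmono : Monotone fun m : ℕ => B ∩ {x | ((m : ℝ) + 1)⁻¹ ≤ infDist x E} := fun a b hab =>
    inter_subset_inter_right B fun x (hx : ((a : ℝ) + 1)⁻¹ ≤ infDist x E) =>
      show ((b : ℝ) + 1)⁻¹ ≤ infDist x E from le_trans (by gcongr) hx
  refine (lintegral_mono_set hcover).trans ?_
  rw [setLIntegral_iUnion_of_directed _ hmono.directed_le]
  exact iSup_le fun m => h _ (by positivity)

lemma enorm_sq_le_of_norm_sub_le_one {V : Type*} [SeminormedAddCommGroup V] {a b : V} {A : ℝ}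
    (hab : ‖a - b‖ ≤ 1) (hb : ‖b‖ ≤ A) : ‖a‖ₑ ^ 2 ≤ 2 * ENNReal.ofReal (A ^ 2) + 2 := by
  have ha : ‖a‖ ≤ A + 1 := by linarith [norm_sub_norm_le a b]
  have hsq : ‖a‖ ^ 2 ≤ 2 * A ^ 2 + 2 := by nlinarith [norm_nonneg a, sq_nonneg (A - 1)]
  rw [← ofReal_norm, ← ENNReal.ofReal_pow (norm_nonneg _)]
  refine (ENNReal.ofReal_le_ofReal hsq).trans_eq ?_
  rw [ENNReal.ofReal_add (by positivity) zero_le_two, ENNReal.ofReal_mul zero_le_two,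
    ENNReal.ofReal_ofNat]

section CauchyLimit

variable {E : Set ℂ} {z : ℕ → ℂ} {w : ℂ} {s ε : ℝ} {f : ℂ → ℂ} {l : Filter ℕ} [l.NeBot]

lemma setLIntegral_enorm_sq_limit_cauchyAverage_le (hl : l ≤ atTop) (hE : IsClosed E)
    (hEs : E ⊆ closedBall w s) (hz : ∀ i, z i ∈ E) (hε : 0 < ε)
    (hprod : ∀ n, ε ^ n ≤ ∏ i ∈ Finset.range n, ‖z n - z i‖)
    (hf : TendstoLocallyUniformlyOn (cauchyAverage z) f l Eᶜ) {r R : ℝ} (hR : 1 ≤ R)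
    (hrR : r + s ≤ R) (hsR : s ≤ R) {δ : ℝ} (hδ : 0 < δ) :
    ∫⁻ x in ball w r ∩ {x | δ ≤ infDist x E}, ‖f x‖ₑ ^ 2 ≤
      2 * ENNReal.ofReal
        (2 * Real.pi * R + 4 * Real.pi + 2 * Real.pi * (Real.log (2 * R) + |Real.log ε|)) +
      2 * volume (ball w r) := by
  set S := ball w r ∩ {x | δ ≤ infDist x E}
  have hclosed : IsClosed {x | δ ≤ infDist x E} :=
    isClosed_le continuous_const (continuous_infDist_pt E)
  have hsep : ∀ x ∈ {x | δ ≤ infDist x E}, ∀ i, δ ≤ ‖x - z i‖ := fun x hx i =>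
    dist_eq_norm x (z i) ▸ hx.trans (infDist_le_dist_of_mem (hz i))
  have hunif : TendstoUniformlyOn (cauchyAverage z) f l (closedBall w r ∩ {x | δ ≤ infDist x E}) :=
    (tendstoLocallyUniformlyOn_iff_forall_isCompact hE.isOpen_compl).1 hf _
      (fun x hx hxE => hδ.not_ge ((infDist_zero_of_mem hxE) ▸ hx.2))
      ((isCompact_closedBall w r).inter_right hclosed)
  obtain ⟨n, hn1, hnδ, hn0⟩ := ((Metric.tendstoUniformlyOn_iff.1 hunif 1 one_pos).and
    (hl (((tendsto_inv_atTop_nhds_zero_nat (𝕜 := ℝ)).eventually_le_const hδ).and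
      (eventually_ne_atTop 0)))).exists
  have hball : ∀ i, z i ∈ closedBall w s := fun i => hEs (hz i)
  have hpt : ∀ x ∈ S, ‖f x‖ₑ ^ 2 ≤
      2 * ENNReal.ofReal (((n : ℝ)⁻¹ * ∑ i ∈ Finset.range n, ‖x - z i‖⁻¹) ^ 2) + 2 := fun x hx => by
    refine enorm_sq_le_of_norm_sub_le_one ?_ (norm_cauchyAverage_le_average z n x)
    exact dist_eq_norm (f x) _ ▸ (hn1 x ⟨ball_subset_closedBall hx.1, hx.2⟩).le
  have hmain := lintegral_sq_average_inv_norm_le hε hprod hn0 hR (S := S)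
    (fun i j => by
      have := dist_triangle_right (z i) (z j) w
      rw [← dist_eq_norm]
      linarith [mem_closedBall.1 (hball i), mem_closedBall.1 (hball j)])
    (fun i x hx => by
      have := dist_triangle_right x (z i) w
      exact mem_ball.2 (by linarith [mem_ball.1 hx.1, mem_closedBall.1 (hball i)]))
    (fun x hx i => hnδ.trans (hsep x hx.2 i))
  refine (setLIntegral_mono' (measurableSet_ball.inter hclosed.measurableSet) hpt).trans ?_
  rw [lintegral_add_right _ measurable_const, lintegral_const_mul' _ _ ENNReal.ofNat_ne_top,
    setLIntegral_const]
  gcongr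
  exact inter_subset_left

lemma norm_limit_cauchyAverage_le (hEs : E ⊆ closedBall w s)
    (hz : ∀ i, z i ∈ E) (hf : TendstoLocallyUniformlyOn (cauchyAverage z) f l Eᶜ) {x : ℂ}
    (hx : x ∉ ball w (s + 1)) : ‖f x‖ ≤ 1 := by
  have hdist : ∀ y ∈ E, 1 ≤ ‖x - y‖ := fun y hy => by
    have := dist_triangle x y w
    rw [mem_ball, not_lt] at hx
    rw [← dist_eq_norm]
    linarith [mem_closedBall.1 (hEs hy)]
  have hxE : x ∈ Eᶜ := fun h => by
    have := hdist x h
    rw [sub_self, norm_zero] at this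
    exact one_pos.not_ge this
  refine le_of_tendsto (hf.tendsto_at hxE).norm (.of_forall fun n => ?_)
  simpa using norm_cauchyAverage_le one_pos (fun i => hdist _ (hz i)) n

lemma circleIntegral_limit_cauchyAverage_ne_zero (hl : l ≤ atTop) (hE : IsClosed E)
    (hz : ∀ i, z i ∈ E) (hf : TendstoLocallyUniformlyOn (cauchyAverage z) f l Eᶜ) {ρ : ℝ}
    (hEρ : E ⊆ ball w ρ) : ∮ x in C(w, ρ), f x ≠ 0 := by
  have hρ : 0 < ρ := dist_nonneg.trans_lt (hEρ (hz 0))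
  have hsph : sphere w ρ ⊆ Eᶜ := fun x hx hxE => (mem_ball.1 (hEρ hxE)).ne (mem_sphere.1 hx)
  have hdiff := differentiableOn_cauchyAverage (fun i (h : z i ∈ Eᶜ) => h (hz i))
  have hcont := hf.continuousOn (.of_forall fun n => (hdiff n).continuousOn)
  have hunif : TendstoUniformlyOn (cauchyAverage z) f l (sphere w ρ) :=
    (tendstoLocallyUniformlyOn_iff_forall_isCompact hE.isOpen_compl).1 hf _ hsph
      (isCompact_sphere w ρ)
  obtain ⟨n, hn, hn0⟩ := ((Metric.tendstoUniformlyOn_iff.1 hunif (1 / (2 * ρ)) (by positivity)).and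
    (hl (eventually_ne_atTop 0))).exists
  intro hzero
  have hle := circleIntegral.norm_integral_le_of_norm_le_const hρ.le fun x hx =>
    (dist_eq_norm (f x) (cauchyAverage z n x)).symm ▸ (hn x hx).le
  rw [circleIntegral.integral_sub ((hcont.mono hsph).circleIntegrable hρ.le)
      (((hdiff n).continuousOn.mono hsph).circleIntegrable hρ.le), hzero,
    circleIntegral_cauchyAverage (fun i => hEρ (hz i)) hn0, zero_sub, norm_neg, norm_mul, norm_mul,
    Complex.norm_I, Complex.norm_ofNat, Complex.norm_of_nonneg Real.pi_pos.le] at hle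
  have : 2 * Real.pi * ρ * (1 / (2 * ρ)) = Real.pi := by field_simp
  linarith [Real.pi_pos]

end CauchyLimit

lemma exists_holomorphic_of_not_hasZeroChebyshevConstant {E : Set ℂ} {w : ℂ} {s : ℝ}
    (hE : IsClosed E) (hne : E.Nonempty) (hEs : E ⊆ closedBall w s)
    (hcheb : ¬HasZeroChebyshevConstant E) :
    ∃ f : ℂ → ℂ, DifferentiableOn ℂ f Eᶜ ∧
      (∀ r, ∫⁻ x in ball w r \ E, ‖f x‖ₑ ^ 2 < ⊤) ∧ (∀ x ∉ ball w (s + 1), ‖f x‖ ≤ 1) ∧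
      ∀ ρ > s, ∮ x in C(w, ρ), f x ≠ 0 := by
  obtain ⟨ε, hε, hlarge⟩ : ∃ ε > 0, ∀ n ≠ 0, ∀ z : ℕ → ℂ, (∀ i, z i ∈ E) →
      ∃ x ∈ E, ε ^ n ≤ ∏ i ∈ Finset.range n, ‖x - z i‖ := by
    simp only [HasZeroChebyshevConstant] at hcheb
    push Not at hcheb
    exact hcheb.imp fun ε h => ⟨h.1, fun n hn z hz =>
      (h.2 n hn z hz).imp fun x hx => hx.imp_right le_of_lt⟩
  obtain ⟨z, hz, hprod⟩ := exists_nodes_pow_le_prod hne hlarge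
  obtain ⟨f, hf⟩ := exists_tendstoLocallyUniformlyOn_cauchyAverage hE hz (hyperfilter ℕ)
  have hl : (hyperfilter ℕ : Filter ℕ) ≤ atTop := Nat.hyperfilter_le_atTop
  refine ⟨f, hf.differentiableOn (.of_forall fun n => differentiableOn_cauchyAverage
    (fun i (h : z i ∈ Eᶜ) => h (hz i)) n) hE.isOpen_compl, fun r => ?_,
    fun x hx => norm_limit_cauchyAverage_le hEs hz hf hx, fun ρ hρ =>
      circleIntegral_limit_cauchyAverage_ne_zero hl hE hz hf
        (hEs.trans (closedBall_subset_ball hρ))⟩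
  refine (setLIntegral_sdiff_le_of_forall_isClosed hE hne fun δ hδ =>
    setLIntegral_enorm_sq_limit_cauchyAverage_le hl hE hEs hz hε hprod hf
      (R := max 1 (max (r + s) s)) (le_max_left _ _) ((le_max_left _ _).trans (le_max_right _ _))
      ((le_max_right _ _).trans (le_max_right _ _)) hδ).trans_lt ?_
  have := measure_ball_lt_top (μ := volume) (x := w) (r := r)
  finiteness

/-! ### Removing the boundary -/

lemma isPreconnected_annulus {w : ℂ} {a b : ℝ} (ha : 0 < a) (hb : 0 < b) :
    IsPreconnected {z : ℂ | a < ‖z - w‖ ∧ ‖z - w‖ < b} := by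
  have himage : {z : ℂ | a < ‖z - w‖ ∧ ‖z - w‖ < b} =
      (fun ζ => w + Complex.exp ζ) '' (Complex.re ⁻¹' Ioo (Real.log a) (Real.log b)) := by
    refine Subset.antisymm (fun z hz => ⟨Complex.log (z - w), ?_, ?_⟩) ?_
    · rw [mem_preimage, Complex.log_re]
      exact ⟨Real.log_lt_log ha hz.1, Real.log_lt_log (ha.trans hz.1) hz.2⟩
    · simp only [Complex.exp_log (norm_pos_iff.1 (ha.trans hz.1)), add_sub_cancel]
    · rintro _ ⟨ζ, hζ, rfl⟩
      rw [mem_ofPred_eq, add_sub_cancel_left, Complex.norm_exp]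
      exact ⟨(Real.log_lt_iff_lt_exp ha).1 hζ.1, (Real.lt_log_iff_exp_lt hb).1 hζ.2⟩
  rw [himage]
  exact ((convex_Ioo _ _).linear_preimage Complex.reLm).isPreconnected.image _ (by fun_prop)

lemma indicator_connectedComponentIn_mem_L2h {D : Set ℂ} (hD : IsOpen D) (hvol : volume D ≠ ⊤)
    (a : ℂ) : (connectedComponentIn D a).indicator 1 ∈ L2h D := by
  refine ⟨fun z hz => ?_, (sqNorm_le_mul_volume (S := 1) hD.measurableSet fun z _ => ?_).trans_lt
    (ENNReal.mul_lt_top ENNReal.one_lt_top hvol.lt_top)⟩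
  · have hconst : (connectedComponentIn D a).indicator 1 =ᶠ[𝓝 z]
        fun _ => (connectedComponentIn D a).indicator (1 : ℂ → ℂ) z := by
      filter_upwards [hD.connectedComponentIn.mem_nhds (mem_connectedComponentIn hz)] with x hx
      have hmem : x ∈ connectedComponentIn D a ↔ z ∈ connectedComponentIn D a := by
        constructor <;> intro h
        · exact connectedComponentIn_eq h ▸ (connectedComponentIn_eq hx) ▸
            mem_connectedComponentIn hz
        · exact connectedComponentIn_eq h ▸ hx
      by_cases h : z ∈ connectedComponentIn D a
      · rw [indicator_of_mem h, indicator_of_mem (hmem.2 h), Pi.one_apply, Pi.one_apply]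
      · rw [indicator_of_notMem h, indicator_of_notMem (mt hmem.1 h)]
    exact (hconst.differentiableAt_iff.2 (differentiableAt_const _)).differentiableWithinAt
  · by_cases h : z ∈ connectedComponentIn D a
    · rw [indicator_of_mem h, Pi.one_apply, enorm_one, one_pow]
    · rw [indicator_of_notMem h, enorm_zero]
      exact (zero_pow two_ne_zero).trans_le zero_le_one

section Extension

variable {D : Set ℂ} {w a : ℂ} {s : ℝ}

/-- The extension of the indicator function of a component is constant. -/
lemma inter_ball_subset_connectedComponentIn (hD : IsOpen D) (hvol : volume D ≠ ⊤)
    (hext : ∀ f ∈ L2h D, ∃ F, DifferentiableOn ℂ F (ball w s) ∧ EqOn F f (D ∩ ball w s))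
    (ha : a ∈ D ∩ ball w s) : D ∩ ball w s ⊆ connectedComponentIn D a := by
  obtain ⟨F, hF, hFeq⟩ := hext _ (indicator_connectedComponentIn_mem_L2h hD hvol a)
  have hone : EqOn F 1 (ball w s) := by
    refine (hF.analyticOnNhd isOpen_ball).eqOn_of_preconnected_of_eventuallyEq
      analyticOnNhd_const (convex_ball w s).isPreconnected ha.2 ?_
    filter_upwards [hD.connectedComponentIn.mem_nhds (mem_connectedComponentIn ha.1),
      isOpen_ball.mem_nhds ha.2] with z hz hzs
    rw [hFeq ⟨connectedComponentIn_subset D a hz, hzs⟩, indicator_of_mem hz]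
  intro z hz
  by_contra hzC
  have := hone hz.2
  rw [hFeq hz, indicator_of_notMem hzC] at this
  exact zero_ne_one this

lemma exists_mem_dist_eq (hw : w ∈ closure D) (ha : a ∈ D)
    (hC : D ∩ ball w s ⊆ connectedComponentIn D a) {t : ℝ} (ht : 0 < t) (hts : t ≤ s)
    (hta : t ≤ dist a w) : ∃ x ∈ D, dist x w = t := by
  obtain ⟨y, hyD, hy⟩ := Metric.mem_closure_iff.1 hw t ht
  rw [dist_comm] at hy
  have himage := isPreconnected_connectedComponentIn.image (fun x => dist x w) (s :=
    connectedComponentIn D a) (by fun_prop)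
  obtain ⟨x, hx, hxt⟩ := himage.Icc_subset
    (mem_image_of_mem _ (hC ⟨hyD, mem_ball.2 (hy.trans_le hts)⟩))
    (mem_image_of_mem _ (mem_connectedComponentIn ha)) ⟨hy.le, hta⟩
  exact ⟨x, connectedComponentIn_subset D a hx, hxt⟩

lemma circleIntegral_eq_zero_of_extension (hD : IsOpen D) {E : Set ℂ} {f F : ℂ → ℂ} {r ρ : ℝ}
    (hr : 0 < r) (hE : E ⊆ closedBall w r) (hf : DifferentiableOn ℂ f Eᶜ)
    (hF : DifferentiableOn ℂ F (ball w s)) (hFf : EqOn F f (D ∩ ball w s)) (hrρ : r < ρ)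
    (hρs : ρ < s) (hρ : ∃ x ∈ D, dist x w = ρ) : ∮ z in C(w, ρ), f z = 0 := by
  obtain ⟨x, hxD, hx⟩ := hρ
  set A := {z : ℂ | r < ‖z - w‖ ∧ ‖z - w‖ < s}
  have hA : IsOpen A := .and (isOpen_lt (by fun_prop) (by fun_prop))
    (isOpen_lt (by fun_prop) (by fun_prop))
  have hAE : A ⊆ Eᶜ := fun z hz hzE => hz.1.not_ge (mem_closedBall_iff_norm.1 (hE hzE))
  have hAs : A ⊆ ball w s := fun z hz => mem_ball_iff_norm.2 hz.2
  have hsphere : sphere w ρ ⊆ A := fun z hz =>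
    ⟨by rwa [mem_sphere_iff_norm.1 hz], by rwa [mem_sphere_iff_norm.1 hz]⟩
  have heq : EqOn F f A := by
    refine ((hF.mono hAs).analyticOnNhd hA).eqOn_of_preconnected_of_eventuallyEq
      ((hf.mono hAE).analyticOnNhd hA)
      (isPreconnected_annulus hr ((hr.trans hrρ).trans hρs)) (hsphere hx) ?_
    filter_upwards [hD.mem_nhds hxD, hA.mem_nhds (hsphere hx)] with z hzD hzA
    exact hFf ⟨hzD, hAs hzA⟩
  have hcl : closedBall w ρ ⊆ ball w s := closedBall_subset_ball hρs
  rw [← circleIntegral.integral_congr (hr.trans hrρ).le (heq.mono hsphere)]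
  exact (hF.diffContOnCl_ball hcl).circleIntegral_eq_zero (hr.trans hrρ).le

end Extension

lemma mem_L2h_of_norm_le_one_outside_ball {D : Set ℂ} (hD : IsOpen D) (hvol : volume D ≠ ⊤)
    {f : ℂ → ℂ} (hf : DifferentiableOn ℂ f D) {w : ℂ} {r : ℝ} (hint : sqNorm (D ∩ ball w r) f < ⊤)
    (h1 : ∀ x ∈ D \ ball w r, ‖f x‖ ≤ 1) : f ∈ L2h D := by
  refine ⟨hf, (sqNorm_eq_inter_add_sdiff_ball f w r).trans_lt (ENNReal.add_lt_top.2 ⟨hint, ?_⟩)⟩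
  refine (sqNorm_le_mul_volume (S := 1) (hD.measurableSet.diff measurableSet_ball)
    fun x hx => ?_).trans_lt (ENNReal.mul_lt_top ENNReal.one_lt_top
      ((measure_mono sdiff_subset).trans_lt hvol.lt_top))
  exact pow_le_one₀ zero_le (enorm_le_coe.2 (h1 x hx))

theorem exists_polarSet_sdiff_of_bergmanKernel_le {D : Set ℂ} (hD : IsOpen D) (hvol : volume D ≠ ⊤)
    {w : ℂ} (hw : w ∈ frontier D) {r : ℝ} (hr : 0 < r) {M : ℝ≥0∞} (hM : M ≠ ⊤)
    (hK : ∀ z ∈ D ∩ ball w r, bergmanKernel D z ≤ M) :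
    ∃ U, IsOpen U ∧ w ∈ U ∧ PolarSet (U \ D) := by
  have hwc : w ∈ closure D := frontier_subset_closure hw
  have hwD : w ∉ D := (hD.frontier_eq ▸ hw).2
  obtain ⟨s, hs, hext⟩ := exists_extension_of_bergmanKernel_le hD hvol hwc hr hM hK
  obtain ⟨a, haD, ha⟩ := Metric.mem_closure_iff.1 hwc s hs
  rw [dist_comm] at ha
  have ha0 : 0 < dist a w := dist_pos.2 fun h => hwD (h ▸ haD)
  set ρ := dist a w / 2
  set E := closedBall w (ρ / 2) \ D
  have hρ : 0 < ρ := by positivity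
  have hEc : IsClosed E := isClosed_closedBall.sdiff hD
  have hEball : E ⊆ closedBall w (ρ / 2) := sdiff_subset
  have hcheb : HasZeroChebyshevConstant E := by
    by_contra hcheb
    obtain ⟨f, hf, hfint, hf1, hcirc⟩ := exists_holomorphic_of_not_hasZeroChebyshevConstant hEc
      ⟨w, mem_closedBall_self (by positivity), hwD⟩ hEball hcheb
    have hDE : D ⊆ Eᶜ := fun x hx hxE => hxE.2 hx
    have hsub : D ∩ ball w (ρ / 2 + 1) ⊆ ball w (ρ / 2 + 1) \ E := fun x hx => ⟨hx.2, hDE hx.1⟩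
    have hfL : f ∈ L2h D := mem_L2h_of_norm_le_one_outside_ball hD hvol (hf.mono hDE)
      ((lintegral_mono_set hsub).trans_lt (hfint _)) fun x hx => hf1 x hx.2
    obtain ⟨F, hF, hFf⟩ := hext f hfL
    have hC := inter_ball_subset_connectedComponentIn hD hvol hext ⟨haD, ha⟩
    refine hcirc ρ (half_lt_self hρ) (circleIntegral_eq_zero_of_extension hD (half_pos hρ) hEball hf
      hF hFf (half_lt_self hρ) ((half_lt_self ha0).trans ha) ?_)
    exact exists_mem_dist_eq hwc haD hC hρ ((half_lt_self ha0).trans ha).le (half_lt_self ha0).le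
  exact ⟨ball w (ρ / 2), isOpen_ball, mem_ball_self (by positivity),
    (hcheb.polarSet (isBounded_closedBall.subset hEball)).mono
      (sdiff_subset_sdiff_left ball_subset_closedBall)⟩

/-! ### Steps of fixed length -/

/-- The uniform probability measure on the angles `(0, 2π]`, against which circle averages are
integrals. -/
noncomputable def angleMeasure : Measure ℝ :=
  ENNReal.ofReal (2 * Real.pi)⁻¹ • volume.restrict (Ioc 0 (2 * Real.pi))

instance : IsProbabilityMeasure angleMeasure where
  measure_univ := by
    rw [angleMeasure, Measure.smul_apply, Measure.restrict_apply_univ, Real.volume_Ioc, sub_zero,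
      smul_eq_mul, ← ENNReal.ofReal_mul (by positivity), inv_mul_cancel₀ (by positivity),
      ENNReal.ofReal_one]

lemma integral_angleMeasure_add_circleMap {E : Type*} [NormedAddCommGroup E] [NormedSpace ℝ E]
    (F : ℂ → E) (y : ℂ) (r : ℝ) :
    ∫ φ, F (y + circleMap 0 r φ) ∂angleMeasure = Real.circleAverage F y r := by
  rw [angleMeasure, integral_smul_measure, ENNReal.toReal_ofReal (by positivity),
    Real.circleAverage, intervalIntegral.integral_of_le (by positivity)]
  simp only [circleMap, zero_add]

/-- The measure on pairs `(φ, x)` under which `x` is Lebesgue distributed and `φ` is a uniform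
angle. The pair stands for the step from `x` to `x - r e^{iφ}`, the length `r` being a parameter
of the integrands. -/
noncomputable def stepMeasure : Measure (ℝ × ℂ) := angleMeasure.prod volume

/-- The change of variables that moves the base point of a step to its other end. -/
noncomputable def shear (r : ℝ) : (ℝ × ℂ) ≃ᵐ (ℝ × ℂ) where
  toFun p := (p.1, p.2 + circleMap 0 r p.1)
  invFun p := (p.1, p.2 - circleMap 0 r p.1)
  left_inv p := by simp
  right_inv p := by simp
  measurable_toFun := by
    change Measurable fun p : ℝ × ℂ => (p.1, p.2 + circleMap 0 r p.1)
    fun_prop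
  measurable_invFun := by
    change Measurable fun p : ℝ × ℂ => (p.1, p.2 - circleMap 0 r p.1)
    fun_prop

lemma measurePreserving_shear (r : ℝ) : MeasurePreserving (shear r) stepMeasure stepMeasure := by
  refine MeasurePreserving.skew_product (f := id) (g := fun φ x => x + circleMap 0 r φ)
    (MeasurePreserving.id _) ?_ (Eventually.of_forall fun φ => map_add_right_eq_self volume _)
  change Measurable fun p : ℝ × ℂ => p.2 + circleMap 0 r p.1
  fun_prop

section Step

variable {E : Type*} [NormedAddCommGroup E]

lemma integrable_comp_shear_iff {F : ℝ × ℂ → E} (r : ℝ) :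
    Integrable (fun p : ℝ × ℂ => F (p.1, p.2 + circleMap 0 r p.1)) stepMeasure ↔
      Integrable F stepMeasure :=
  (measurePreserving_shear r).integrable_comp_emb (shear r).measurableEmbedding

lemma integrable_stepMeasure_snd {F : ℂ → E} (hF : Integrable F) :
    Integrable (fun p : ℝ × ℂ => F p.2) stepMeasure :=
  hF.comp_snd angleMeasure

lemma stepMeasure_preimage_snd (S : Set ℂ) : stepMeasure (Prod.snd ⁻¹' S) = volume S := by
  rw [← univ_prod, stepMeasure, Measure.prod_prod, measure_univ, one_mul]

lemma integrable_stepMeasure_of_bounded {F : ℝ × ℂ → E} (hF : AEStronglyMeasurable F stepMeasure)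
    {C : ℝ} (hC : ∀ p, ‖F p‖ ≤ C) {S : Set ℂ} (hS : volume S ≠ ⊤)
    (hFS : ∀ p : ℝ × ℂ, p.2 ∉ S → F p = 0) : Integrable F stepMeasure := by
  have hsupp : Function.support F ⊆ Prod.snd ⁻¹' S := fun p hp =>
    by_contra fun h => hp (hFS p h)
  rw [← integrableOn_iff_integrable_of_support_subset hsupp]
  refine Measure.integrableOn_of_bounded (M := C) ?_ hF (Eventually.of_forall hC)
  rwa [stepMeasure_preimage_snd]

lemma integrable_stepMeasure_snd_mul {k : ℂ → ℂ} (hk : Integrable k) {b : ℝ × ℂ → ℂ}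
    (hb : AEStronglyMeasurable b stepMeasure) {C : ℝ} (hC : ∀ p, ‖b p‖ ≤ C) :
    Integrable (fun p : ℝ × ℂ => k p.2 * b p) stepMeasure :=
  (integrable_stepMeasure_snd hk).mul_bdd hb (Eventually.of_forall hC)

variable [NormedSpace ℝ E]

lemma integral_comp_shear (F : ℝ × ℂ → E) (r : ℝ) :
    ∫ p : ℝ × ℂ, F (p.1, p.2 + circleMap 0 r p.1) ∂stepMeasure = ∫ p, F p ∂stepMeasure :=
  (measurePreserving_shear r).integral_comp' F

lemma integral_stepMeasure_snd (F : ℂ → E) : ∫ p, F p.2 ∂stepMeasure = ∫ x, F x := by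
  rw [stepMeasure, integral_fun_snd, probReal_univ, one_smul]

end Step

lemma integral_angleMeasure_circleMap (r : ℝ) : ∫ φ, circleMap 0 r φ ∂angleMeasure = 0 := by
  have hmean : Real.circleAverage (fun x : ℂ => x) 0 r = 0 :=
    circleAverage_of_differentiable_on_off_countable countable_empty continuousOn_id
      fun _ _ => differentiableAt_id
  simpa only [zero_add] using (integral_angleMeasure_add_circleMap (fun x : ℂ => x) 0 r).trans hmean

/-- Discrete integration by parts: the difference operator moves from `η` to the kernel `k`. -/
lemma integral_mul_step_sub {k : ℂ → ℂ} (hk : Integrable k) {η : ℂ → ℝ} (hη : Measurable η)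
    {C : ℝ} (hηC : ∀ x, |η x| ≤ C) (r : ℝ) :
    ∫ p : ℝ × ℂ, k p.2 *
        ((η (p.2 - circleMap 0 r p.1) - η p.2 : ℝ) * circleMap 0 r p.1) ∂stepMeasure =
      ∫ y, (η y : ℂ) * Real.circleAverage (fun x => k x * (x - y)) y r := by
  have hbound : ∀ x φ, ‖(η x : ℂ) * circleMap 0 r φ‖ ≤ C * |r| := fun x φ => by
    rw [norm_mul, Complex.norm_real, norm_circleMap_zero]
    exact mul_le_mul_of_nonneg_right (hηC x) (abs_nonneg r)
  have hshifted : Integrable (fun p : ℝ × ℂ =>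
      k p.2 * (η (p.2 - circleMap 0 r p.1) * circleMap 0 r p.1)) stepMeasure :=
    integrable_stepMeasure_snd_mul hk (by fun_prop) fun p => hbound _ _
  have hfixed : Integrable (fun p : ℝ × ℂ => k p.2 * (η p.2 * circleMap 0 r p.1)) stepMeasure :=
    integrable_stepMeasure_snd_mul hk (by fun_prop) fun p => hbound _ _
  have hzero : ∫ p : ℝ × ℂ, k p.2 * (η p.2 * circleMap 0 r p.1) ∂stepMeasure = 0 := by
    simp_rw [← mul_assoc, mul_comm _ (circleMap 0 r _)]
    rw [stepMeasure, integral_prod_mul (circleMap 0 r) fun x => k x * (η x : ℂ),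
      integral_angleMeasure_circleMap, zero_mul]
  simp_rw [Complex.ofReal_sub, sub_mul, mul_sub (k (Prod.snd _)) (_ * _)]
  rw [integral_sub hshifted hfixed, hzero, sub_zero, ← integral_comp_shear _ r]
  rw [← integrable_comp_shear_iff r] at hshifted
  simp only [add_sub_cancel_right] at hshifted ⊢
  rw [stepMeasure, integral_prod_symm _ hshifted]
  refine integral_congr_ae (Eventually.of_forall fun y => ?_)
  dsimp only
  rw [← integral_angleMeasure_add_circleMap, ← integral_const_mul]
  refine integral_congr_ae (Eventually.of_forall fun φ => ?_)
  simp only [add_sub_cancel_left]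
  ring

/-! ### A Caccioppoli inequality for truncated superharmonic functions -/

lemma sub_mul_sub_sq_div_le_of_le {a b : ℝ} (hb : 0 < b) (hab : b ≤ a) (s t : ℝ) :
    (a - b) * (s ^ 2 / a - t ^ 2 / b) ≤
      2 * (s - t) ^ 2 - t ^ 2 * (Real.log a - Real.log b) ^ 2 / 2 := by
  set q := √(a / b)
  have hq1 : 1 ≤ q := by rwa [Real.one_le_sqrt, one_le_div hb]
  have hq0 : 0 < q := by linarith
  have ha : a = b * q ^ 2 := by
    rw [Real.sq_sqrt (div_nonneg (hb.le.trans hab) hb.le), mul_div_cancel₀ _ hb.ne']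
  have hlog : Real.log a - Real.log b = 2 * Real.log q := by
    rw [ha, Real.log_mul hb.ne' (by positivity), Real.log_pow]
    push_cast
    ring
  have hsinh : 2 * Real.log q ≤ q - q⁻¹ := by
    have := Real.self_le_sinh_iff.2 (Real.log_nonneg hq1)
    rw [Real.sinh_log hq0] at this
    linarith
  have hlogsq : t ^ 2 * (2 * Real.log q) ^ 2 ≤ t ^ 2 * (q - q⁻¹) ^ 2 := by
    have := Real.log_nonneg hq1
    gcongr
  have hsplit : (t * (q - q⁻¹)) ^ 2 ≤ 2 * (t * q - s * q⁻¹) ^ 2 + 2 * ((s - t) * q⁻¹) ^ 2 := by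
    rw [show t * (q - q⁻¹) = (t * q - s * q⁻¹) + (s - t) * q⁻¹ by ring]
    exact add_sq_le.trans_eq (mul_add _ _ _)
  have hinv : ((s - t) * q⁻¹) ^ 2 ≤ (s - t) ^ 2 := by
    rw [mul_pow]
    exact mul_le_of_le_one_right (sq_nonneg _)
      (pow_le_one₀ (by positivity) (inv_le_one_of_one_le₀ hq1))
  have hfactor : (a - b) * (s ^ 2 / a - t ^ 2 / b) = (s - t) ^ 2 - (t * q - s * q⁻¹) ^ 2 := by
    rw [ha]
    field_simp
    ring
  rw [hfactor, hlog]
  nlinarith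

lemma sub_mul_sub_sq_div_le {a b m s t : ℝ} (ha : 0 < a) (hb : 0 < b) (hm : 0 ≤ m) (hms : m ≤ s)
    (hmt : m ≤ t) :
    (a - b) * (s ^ 2 / a - t ^ 2 / b) ≤
      2 * (s - t) ^ 2 - m ^ 2 * (Real.log b - Real.log a) ^ 2 / 2 := by
  rcases le_total b a with h | h
  · have hst := sub_mul_sub_sq_div_le_of_le hb h s t
    have hmono : m ^ 2 * (Real.log a - Real.log b) ^ 2 ≤ t ^ 2 * (Real.log a - Real.log b) ^ 2 := by
      gcongr
    linarith [sub_sq_comm (Real.log a) (Real.log b)]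
  · have hst := sub_mul_sub_sq_div_le_of_le ha h t s
    have hmono : m ^ 2 * (Real.log b - Real.log a) ^ 2 ≤ s ^ 2 * (Real.log b - Real.log a) ^ 2 := by
      gcongr
    linarith [sub_sq_comm s t]

/-- The mean squared increment of `v` over the steps of length `r` that start in `S`: a discrete
substitute for `r ^ 2` times the Dirichlet energy, available for discontinuous `v`. -/
noncomputable def stepEnergy (r : ℝ) (S : Set ℂ) (v : ℂ → ℝ) : ℝ :=
  ∫ p in Prod.snd ⁻¹' S, (v (p.2 - circleMap 0 r p.1) - v p.2) ^ 2 ∂stepMeasure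

lemma integrableOn_sq_step_sub {v : ℂ → ℝ} (hv : Measurable v) {C : ℝ}
    (hC : ∀ x y, |v x - v y| ≤ C) {S : Set ℂ} (hS : volume S ≠ ⊤) (r : ℝ) :
    IntegrableOn (fun p : ℝ × ℂ => (v (p.2 - circleMap 0 r p.1) - v p.2) ^ 2) (Prod.snd ⁻¹' S)
      stepMeasure := by
  refine Measure.integrableOn_of_bounded (M := C ^ 2) (by rwa [stepMeasure_preimage_snd])
    (Measurable.aestronglyMeasurable ?_) (Eventually.of_forall fun p => ?_)
  · exact ((hv.comp (by fun_prop)).sub (hv.comp measurable_snd)).pow_const 2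
  · rw [Real.norm_eq_abs, abs_pow]
    exact pow_le_pow_left₀ (abs_nonneg _) (hC _ _) 2

section TestFunction

variable {v q : ℂ → ℝ} {M : ℝ} {T : Set ℂ}

lemma integrable_mul_sub_step (hv : Measurable v) (hvM : ∀ x, |v x| ≤ M)
    (hqm : Measurable q) (hq : ∀ x, |q x| ≤ 1) (hTvol : volume T ≠ ⊤)
    (hT : ∀ x ∉ T, q x = 0) (r : ℝ) :
    Integrable (fun p : ℝ × ℂ => q p.2 * (v p.2 - v (p.2 + circleMap 0 r p.1))) stepMeasure := by
  refine integrable_stepMeasure_of_bounded (C := M + M) (Measurable.aestronglyMeasurable ?_)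
    (fun p => ?_) hTvol fun p hp => by rw [hT _ hp, zero_mul]
  · exact (hqm.comp measurable_snd).mul
      ((hv.comp measurable_snd).sub (hv.comp (by fun_prop)))
  · rw [norm_mul]
    refine (mul_le_of_le_one_left (norm_nonneg _) (hq _)).trans ?_
    exact (norm_sub_le _ _).trans (add_le_add (hvM _) (hvM _))

lemma integral_mul_sub_step_nonneg (hv : Measurable v) (hvM : ∀ x, |v x| ≤ M)
    (hq : ∀ x, 0 ≤ q x) {r : ℝ} (hmean : ∀ x, q x ≠ 0 → Real.circleAverage v x r ≤ v x)
    (hint : Integrable (fun p : ℝ × ℂ => q p.2 * (v p.2 - v (p.2 + circleMap 0 r p.1)))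
      stepMeasure) :
    0 ≤ ∫ p : ℝ × ℂ, q p.2 * (v p.2 - v (p.2 + circleMap 0 r p.1)) ∂stepMeasure := by
  rw [stepMeasure] at hint ⊢
  rw [integral_prod_symm _ hint]
  refine integral_nonneg fun x => ?_
  have hvint : Integrable (fun φ => v (x + circleMap 0 r φ)) angleMeasure :=
    Integrable.of_bound (hv.comp (by fun_prop)).aestronglyMeasurable M
      (Eventually.of_forall fun φ => hvM _)
  change 0 ≤ ∫ φ, q x * (v x - v (x + circleMap 0 r φ)) ∂angleMeasure
  rw [integral_const_mul, integral_sub (integrable_const _) hvint, integral_const, probReal_univ,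
    one_smul, integral_angleMeasure_add_circleMap]
  rcases eq_or_ne (q x) 0 with h0 | h0
  · rw [h0, zero_mul]
  · exact mul_nonneg (hq x) (sub_nonneg.2 (hmean x h0))

/-- Both ends of a step are tested against `q`; the second term becomes the first one, with the
step reversed, after a shear. -/
lemma integrable_and_integral_test_step_nonneg (hv : Measurable v) (hvM : ∀ x, |v x| ≤ M)
    (hqm : Measurable q) (hq0 : ∀ x, 0 ≤ q x) (hq1 : ∀ x, q x ≤ 1) (hTvol : volume T ≠ ⊤)
    (hT : ∀ x ∉ T, q x = 0) {r : ℝ}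
    (hmean : ∀ x, q x ≠ 0 → Real.circleAverage v x r ≤ v x) :
    Integrable (fun p : ℝ × ℂ => q p.2 * (v p.2 - v (p.2 - circleMap 0 r p.1)) +
      q (p.2 - circleMap 0 r p.1) * (v (p.2 - circleMap 0 r p.1) - v p.2)) stepMeasure ∧
    0 ≤ ∫ p : ℝ × ℂ, q p.2 * (v p.2 - v (p.2 - circleMap 0 r p.1)) +
      q (p.2 - circleMap 0 r p.1) * (v (p.2 - circleMap 0 r p.1) - v p.2) ∂stepMeasure := by
  have hqabs : ∀ x, |q x| ≤ 1 := fun x => by rw [abs_of_nonneg (hq0 x)]; exact hq1 x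
  have hbackward := integrable_mul_sub_step hv hvM hqm hqabs hTvol hT (-r)
  have hforward := integrable_mul_sub_step hv hvM hqm hqabs hTvol hT r
  have hbackward0 := integral_mul_sub_step_nonneg hv hvM hq0 (r := -r)
    (fun x hx => by rw [Real.circleAverage_neg_radius]; exact hmean x hx) hbackward
  have hforward0 := integral_mul_sub_step_nonneg hv hvM hq0 hmean hforward
  have hneg : ∀ φ, circleMap 0 (-r) φ = -circleMap 0 r φ := fun φ => by
    simp only [circleMap, Complex.ofReal_neg, neg_mul, zero_add]
  simp only [hneg, ← sub_eq_add_neg] at hbackward hbackward0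
  set B : ℝ × ℂ → ℝ := fun p =>
    q (p.2 - circleMap 0 r p.1) * (v (p.2 - circleMap 0 r p.1) - v p.2)
  have hB : (fun p : ℝ × ℂ => B (p.1, p.2 + circleMap 0 r p.1)) =
      fun p => q p.2 * (v p.2 - v (p.2 + circleMap 0 r p.1)) := by
    simp only [B, add_sub_cancel_right]
  rw [← hB] at hforward hforward0
  rw [integrable_comp_shear_iff r] at hforward
  rw [integral_comp_shear _ r] at hforward0
  refine ⟨hbackward.add hforward, ?_⟩
  rw [integral_add hbackward hforward]
  exact add_nonneg hbackward0 hforward0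

end TestFunction

lemma stepEnergy_log_integrand_le {v θ : ℂ → ℝ} {r ℓ : ℝ} {S T : Set ℂ} (hv : ∀ x, 0 < v x)
    (hθ : ∀ x, 0 ≤ θ x) (hlip : ∀ x y, |θ x - θ y| ≤ ℓ * ‖x - y‖)
    (hT : ∀ x ∉ T, ∀ y ∈ closedBall x |r|, θ y = 0)
    (hS : ∀ x ∈ S, ∀ y ∈ closedBall x |r|, 1 ≤ θ y) {x y : ℂ} (hxy : ‖x - y‖ = |r|) :
    θ x ^ 2 / v x * (v x - v y) + θ y ^ 2 / v y * (v y - v x) ≤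
      T.indicator (fun _ => 2 * (ℓ * r) ^ 2) x -
        S.indicator (fun x => (Real.log (v y) - Real.log (v x)) ^ 2 / 2) x := by
  have hx : x ∈ closedBall x |r| := mem_closedBall_self (abs_nonneg r)
  have hy : y ∈ closedBall x |r| := by
    rw [mem_closedBall, dist_comm, dist_eq_norm, hxy]
  have hgrad : 2 * (θ x - θ y) ^ 2 ≤ T.indicator (fun _ => 2 * (ℓ * r) ^ 2) x := by
    by_cases hxT : x ∈ T
    · have hle := hlip x y
      rw [hxy] at hle
      have := sq_le_sq' ((abs_le.1 hle).1) ((abs_le.1 hle).2)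
      rw [mul_pow, sq_abs, ← mul_pow] at this
      rw [indicator_of_mem hxT]
      linarith
    · rw [indicator_of_notMem hxT, hT x hxT x hx, hT x hxT y hy, sub_zero, sq, zero_mul, mul_zero]
  rw [show θ x ^ 2 / v x * (v x - v y) + θ y ^ 2 / v y * (v y - v x) =
    (v x - v y) * (θ x ^ 2 / v x - θ y ^ 2 / v y) by ring]
  by_cases hxS : x ∈ S
  · have := sub_mul_sub_sq_div_le (hv x) (hv y) zero_le_one (hS x hxS x hx) (hS x hxS y hy)
    rw [indicator_of_mem hxS]
    linarith
  · have := sub_mul_sub_sq_div_le (hv x) (hv y) le_rfl (hθ x) (hθ y)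
    rw [indicator_of_notMem hxS]
    linarith

/-- The test function is `θ ^ 2 / v`, as in the classical estimate for positive superharmonic
functions. -/
lemma stepEnergy_log_le {v θ : ℂ → ℝ} {M r ℓ : ℝ} {S T : Set ℂ} (hv : Measurable v)
    (hv1 : ∀ x, 1 ≤ v x) (hvM : ∀ x, v x ≤ M) (hθ : Measurable θ) (hθ0 : ∀ x, 0 ≤ θ x)
    (hθ1 : ∀ x, θ x ≤ 1) (hlip : ∀ x y, |θ x - θ y| ≤ ℓ * ‖x - y‖)
    (hTm : MeasurableSet T) (hTvol : volume T ≠ ⊤) (hT : ∀ x ∉ T, ∀ y ∈ closedBall x |r|, θ y = 0)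
    (hSm : MeasurableSet S) (hS : ∀ x ∈ S, ∀ y ∈ closedBall x |r|, 1 ≤ θ y)
    (hmean : ∀ x, θ x ≠ 0 → Real.circleAverage v x r ≤ v x) :
    stepEnergy r S (fun x => Real.log (v x)) ≤ 4 * (ℓ * r) ^ 2 * volume.real T := by
  have hv0 : ∀ x, 0 < v x := fun x => zero_lt_one.trans_le (hv1 x)
  have hTzero : ∀ x ∉ T, θ x = 0 := fun x hx => hT x hx x (mem_closedBall_self (abs_nonneg r))
  have hST : S ⊆ T := fun x hx => by_contra fun hxT => by
    linarith [hS x hx x (mem_closedBall_self (abs_nonneg r)), hTzero x hxT]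
  obtain ⟨hint, hnonneg⟩ := integrable_and_integral_test_step_nonneg (q := fun x => θ x ^ 2 / v x)
    hv (fun x => by rw [abs_of_pos (hv0 x)]; exact hvM x) ((hθ.pow_const 2).div hv)
    (fun x => div_nonneg (sq_nonneg _) (hv0 x).le)
    (fun x => div_le_one_of_le₀ ((pow_le_one₀ (hθ0 x) (hθ1 x)).trans (hv1 x)) (hv0 x).le)
    hTvol (fun x hx => by simp only [hTzero x hx, sq, zero_mul, zero_div])
    (fun x hx => hmean x fun h0 => hx (by simp only [h0, sq, zero_mul, zero_div]))
  set e : ℝ × ℂ → ℝ := fun p =>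
    (Real.log (v (p.2 - circleMap 0 r p.1)) - Real.log (v p.2)) ^ 2 / 2
  have he : IntegrableOn e (Prod.snd ⁻¹' S) stepMeasure := by
    refine (integrableOn_sq_step_sub (Real.measurable_log.comp hv) (C := Real.log M)
      (fun x y => ?_) (measure_ne_top_of_subset hST hTvol) r).div_const 2
    exact abs_sub_le_of_nonneg_of_le (Real.log_nonneg (hv1 x))
      (Real.log_le_log (hv0 x) (hvM x)) (Real.log_nonneg (hv1 y)) (Real.log_le_log (hv0 y) (hvM y))
  have hdom : Integrable (fun p : ℝ × ℂ => T.indicator (fun _ => 2 * (ℓ * r) ^ 2) p.2)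
      stepMeasure :=
    integrable_stepMeasure_snd ((integrable_indicator_iff hTm).2 (integrableOn_const hTvol))
  have hle := integral_mono hint (hdom.sub (he.integrable_indicator (measurable_snd hSm)))
    fun p => stepEnergy_log_integrand_le hv0 hθ0 hlip hT hS (by
      rw [sub_sub_cancel, norm_circleMap_zero])
  rw [integral_sub' hdom (he.integrable_indicator (measurable_snd hSm)),
    integral_stepMeasure_snd (T.indicator fun _ => 2 * (ℓ * r) ^ 2),
    integral_indicator_const _ hTm, integral_indicator (measurable_snd hSm)] at hle
  have henergy : ∫ p in Prod.snd ⁻¹' S, e p ∂stepMeasure =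
      stepEnergy r S (fun x => Real.log (v x)) / 2 := integral_div _ _
  rw [henergy, smul_eq_mul] at hle
  linarith

/-! ### The Cauchy kernel tested on a plateau -/

/-- `θ` is a cut-off function equal to `1` on the closed disc of center `w` and radius `ρ` and
vanishing outside the concentric disc of radius `ρ + a`, with Lipschitz constant `a⁻¹`. -/
structure IsPlateau (w : ℂ) (ρ a : ℝ) (θ : ℂ → ℝ) : Prop where
  continuous : Continuous θ
  nonneg : ∀ x, 0 ≤ θ x
  le_one : ∀ x, θ x ≤ 1
  eq_one : ∀ x ∈ closedBall w ρ, θ x = 1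
  eq_zero : ∀ x ∉ ball w (ρ + a), θ x = 0
  abs_sub_le : ∀ x y, |θ x - θ y| ≤ a⁻¹ * ‖x - y‖

lemma exists_isPlateau (w : ℂ) {ρ a : ℝ} (hρ : 0 ≤ ρ) (ha : 0 < a) : ∃ θ, IsPlateau w ρ a θ := by
  refine ⟨fun x => thickenedIndicator ha (closedBall w ρ) x, ?_, fun x => NNReal.coe_nonneg _,
    fun x => ?_, fun x hx => ?_, fun x hx => ?_, fun x y => ?_⟩
  · exact NNReal.continuous_coe.comp (thickenedIndicator ha (closedBall w ρ)).continuous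
  · exact_mod_cast thickenedIndicator_le_one ha _ x
  · exact_mod_cast thickenedIndicator_one ha _ hx
  · rw [add_comm, ← thickening_closedBall ha hρ] at hx
    exact_mod_cast thickenedIndicator_zero ha _ hx
  · have := (lipschitzWith_thickenedIndicator ha (closedBall w ρ)).dist_le_mul x y
    rwa [NNReal.dist_eq, NNReal.coe_inv, Real.coe_toNNReal _ ha.le, dist_eq_norm] at this

lemma circleAverage_mul_sub_eq_zero {g : ℂ → ℂ} {y : ℂ} {r : ℝ}
    (hg : DifferentiableOn ℂ g (closedBall y |r|)) :
    Real.circleAverage (fun x => g x * (x - y)) y r = 0 := by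
  have hdiff : DifferentiableOn ℂ (fun x => g x * (x - y)) (closedBall y |r|) := by fun_prop
  rw [(hdiff.diffContOnCl_ball Subset.rfl).circleAverage, sub_self, mul_zero]

lemma circleAverage_inv_sub_mul_sub {y z : ℂ} {r : ℝ} (hz : z ∉ sphere y |r|) :
    Real.circleAverage (fun x => (x - z)⁻¹ * (x - y)) y r =
      (ball z |r|).indicator (fun _ => 1) y := by
  by_cases hzy : z ∈ ball y |r|
  · have hcauchy := (diffContOnCl_const (𝕜 := ℂ) (c := (1 : ℂ))).circleAverage_smul_div hzy
    simp only [smul_eq_mul, mul_one, div_eq_inv_mul] at hcauchy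
    rw [hcauchy, indicator_of_mem (mem_ball_comm.1 hzy)]
  · have hne : ∀ x ∈ closedBall y |r|, x - z ≠ 0 := by
      rintro x hx hxz
      rw [← sub_eq_zero.1 hxz] at hz hzy
      rw [← ball_union_sphere] at hx
      exact hx.elim hzy hz
    rw [indicator_of_notMem (fun h => hzy (mem_ball_comm.1 h))]
    exact circleAverage_mul_sub_eq_zero fun x hx =>
      ((differentiableAt_id.sub_const z).inv (hne x hx)).differentiableWithinAt

lemma integrable_indicator_ball_inv_sub (w z : ℂ) (ρ : ℝ) :
    Integrable ((ball w ρ).indicator fun x => (x - z)⁻¹) := by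
  rw [integrable_indicator_iff measurableSet_ball]
  refine IntegrableOn.mono_set (t := ball z (ρ + dist z w)) ?_
    (ball_subset_ball' (by rw [dist_comm]))
  refine ⟨by fun_prop, ?_⟩
  rw [hasFiniteIntegral_iff_norm]
  simp only [norm_inv]
  rw [lintegral_ball_inv_norm_sub]
  exact ENNReal.ofReal_lt_top

/-- The integrand obtained by testing the Cauchy kernel with pole `z` on the increments of `θ`. -/
noncomputable def cauchyStep (z : ℂ) (r : ℝ) (θ : ℂ → ℝ) (p : ℝ × ℂ) : ℂ :=
  (p.2 - z)⁻¹ * ((θ (p.2 - circleMap 0 r p.1) - θ p.2 : ℝ) * circleMap 0 r p.1)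

section CauchyStep

variable {w z : ℂ} {a r : ℝ} {θ : ℂ → ℝ}

lemma IsPlateau.step_sub_eq_zero (hθ : IsPlateau w (2 * a) a θ) (hr : |r| ≤ a) {p : ℝ × ℂ}
    (hp : p.2 ∉ ball w (4 * a) \ ball w a) : θ (p.2 - circleMap 0 r p.1) - θ p.2 = 0 := by
  have hdist : dist (p.2 - circleMap 0 r p.1) p.2 = |r| := by
    rw [dist_eq_norm, sub_sub_cancel_left, norm_neg, norm_circleMap_zero]
  have htri := dist_triangle (p.2 - circleMap 0 r p.1) p.2 w
  have htri' := dist_triangle_left p.2 w (p.2 - circleMap 0 r p.1)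
  rw [hdist] at htri htri'
  by_cases hnear : p.2 ∈ ball w a
  · rw [mem_ball] at hnear
    rw [hθ.eq_one _ (mem_closedBall.2 (by linarith)), hθ.eq_one _ (mem_closedBall.2 (by
      linarith [abs_nonneg r])), sub_self]
  · have hfar : p.2 ∉ ball w (4 * a) := fun h => hp ⟨h, hnear⟩
    rw [mem_ball, not_lt] at hfar
    rw [hθ.eq_zero _ (by rw [mem_ball]; linarith), hθ.eq_zero _ (by
      rw [mem_ball]; linarith [abs_nonneg r]), sub_self]

lemma IsPlateau.cauchyStep_eq_zero (hθ : IsPlateau w (2 * a) a θ) (hr : |r| ≤ a) {p : ℝ × ℂ}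
    (hp : p.2 ∉ ball w (4 * a) \ ball w a) : cauchyStep z r θ p = 0 := by
  rw [cauchyStep, hθ.step_sub_eq_zero hr hp, Complex.ofReal_zero, zero_mul, mul_zero]

lemma IsPlateau.norm_cauchyStep_le (hθ : IsPlateau w (2 * a) a θ) (ha : 0 < a) (hr : |r| ≤ a)
    (hz : z ∈ ball w (a / 2)) (p : ℝ × ℂ) : ‖cauchyStep z r θ p‖ ≤ 2 * r ^ 2 / a ^ 2 := by
  by_cases hp : p.2 ∈ ball w (4 * a) \ ball w a
  · have hfar : a / 2 ≤ ‖p.2 - z‖ := by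
      have hnear := hp.2
      rw [mem_ball, not_lt] at hnear
      rw [mem_ball] at hz
      rw [← dist_eq_norm]
      linarith [dist_triangle p.2 z w]
    have hstep := hθ.abs_sub_le (p.2 - circleMap 0 r p.1) p.2
    rw [sub_sub_cancel_left, norm_neg, norm_circleMap_zero] at hstep
    rw [cauchyStep, norm_mul, norm_mul, norm_inv, Complex.norm_real, norm_circleMap_zero,
      Real.norm_eq_abs]
    calc ‖p.2 - z‖⁻¹ * (|θ (p.2 - circleMap 0 r p.1) - θ p.2| * |r|)
        ≤ (a / 2)⁻¹ * (a⁻¹ * |r| * |r|) := by gcongr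
      _ = 2 * r ^ 2 / a ^ 2 := by rw [← sq_abs r]; field_simp
  · rw [hθ.cauchyStep_eq_zero hr hp, norm_zero]
    positivity

lemma IsPlateau.measurable_cauchyStep (hθ : IsPlateau w (2 * a) a θ) :
    Measurable (cauchyStep z r θ) := by
  have hθm := hθ.continuous.measurable
  unfold cauchyStep
  fun_prop

lemma IsPlateau.integrable_cauchyStep (hθ : IsPlateau w (2 * a) a θ) (ha : 0 < a) (hr : |r| ≤ a)
    (hz : z ∈ ball w (a / 2)) : Integrable (cauchyStep z r θ) stepMeasure :=
  integrable_stepMeasure_of_bounded hθ.measurable_cauchyStep.aestronglyMeasurable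
    (hθ.norm_cauchyStep_le ha hr hz) (S := ball w (4 * a)) measure_ball_lt_top.ne
    fun _ hp => hθ.cauchyStep_eq_zero hr fun h => hp h.1

lemma IsPlateau.mul_circleAverage_inv_sub (hθ : IsPlateau w (2 * a) a θ) (hr : |r| ≤ a)
    (hz : z ∈ ball w (a / 2)) {y : ℂ} (hy : z ∉ sphere y |r|) :
    (θ y : ℂ) * Real.circleAverage (fun x =>
      (ball w (4 * a)).indicator (fun x => (x - z)⁻¹) x * (x - y)) y r =
        (ball z |r|).indicator (fun _ => 1) y := by
  rw [mem_ball] at hz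
  by_cases hsupp : y ∈ ball w (2 * a + a)
  · rw [mem_ball] at hsupp
    have hcut : EqOn (fun x => (ball w (4 * a)).indicator (fun x => (x - z)⁻¹) x * (x - y))
        (fun x => (x - z)⁻¹ * (x - y)) (sphere y |r|) := fun x hx => by
      have hx4 : x ∈ ball w (4 * a) := by
        rw [mem_sphere] at hx
        rw [mem_ball]
        linarith [dist_triangle x y w]
      simp only [indicator_of_mem hx4]
    rw [Real.circleAverage_congr_sphere hcut, circleAverage_inv_sub_mul_sub hy]
    by_cases hyz : y ∈ ball z |r|
    · have hy2 : y ∈ closedBall w (2 * a) := by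
        rw [mem_ball] at hyz
        rw [mem_closedBall]
        linarith [dist_triangle y z w, abs_nonneg r]
      rw [hθ.eq_one y hy2, Complex.ofReal_one, one_mul]
    · rw [indicator_of_notMem hyz, mul_zero]
  · have hyz : y ∉ ball z |r| := fun h => by
      rw [mem_ball] at h hsupp
      linarith [dist_triangle y z w, abs_nonneg r]
    rw [hθ.eq_zero y hsupp, Complex.ofReal_zero, zero_mul, indicator_of_notMem hyz]

lemma IsPlateau.integral_cauchyStep (hθ : IsPlateau w (2 * a) a θ) (hr : |r| ≤ a)
    (hz : z ∈ ball w (a / 2)) : ∫ p, cauchyStep z r θ p ∂stepMeasure = (Real.pi * r ^ 2 : ℝ) := by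
  have hcut : cauchyStep z r θ = fun p : ℝ × ℂ =>
      (ball w (4 * a)).indicator (fun x => (x - z)⁻¹) p.2 *
        ((θ (p.2 - circleMap 0 r p.1) - θ p.2 : ℝ) * circleMap 0 r p.1) := by
    funext p
    by_cases hp : p.2 ∈ ball w (4 * a)
    · rw [indicator_of_mem hp, cauchyStep]
    · rw [indicator_of_notMem hp, zero_mul, hθ.cauchyStep_eq_zero hr fun h => hp h.1]
  have hnull : ∀ᵐ y : ℂ, z ∉ sphere y |r| := by
    simp only [mem_sphere_comm (x := z)]
    exact compl_mem_ae_iff.2 (Measure.addHaar_sphere volume z |r|)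
  rw [hcut, integral_mul_step_sub (integrable_indicator_ball_inv_sub w z _)
    hθ.continuous.measurable (C := 1)
      (fun x => by rw [abs_of_nonneg (hθ.nonneg x)]; exact hθ.le_one x),
    integral_congr_ae (hnull.mono fun y hy => hθ.mul_circleAverage_inv_sub hr hz hy),
    integral_indicator_const _ measurableSet_ball,
    measureReal_def, Complex.volume_ball, ← ENNReal.ofReal_pow (abs_nonneg r), sq_abs,
    ENNReal.toReal_mul, ENNReal.toReal_ofReal (sq_nonneg r), Complex.real_smul, mul_one, mul_comm]
  rfl

end CauchyStep

/-! ### Estimating a holomorphic function past a polar set -/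

/-- `Ψ` is a cut-off function that equals `1` on the complement of `D` near `w`, is small in `L¹`,
and has small energy at the scale `r`. At that scale its values other than `1` only occur away from
the complement of `D`. -/
structure IsCutoff (D : Set ℂ) (w : ℂ) (a ε r : ℝ) (Ψ : ℂ → ℝ) : Prop where
  measurable : Measurable Ψ
  nonneg : ∀ x, 0 ≤ Ψ x
  le_one : ∀ x, Ψ x ≤ 1
  eq_one : ∀ x ∈ ball w (4 * a) \ D, Ψ x = 1
  closedBall_subset : ∀ y ∈ ball w (3 * a), Ψ y ≠ 1 → closedBall y r ⊆ D
  stepEnergy_le : stepEnergy r (ball w (3 * a)) Ψ ≤ (r * ε) ^ 2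
  integral_le : ∫ x in ball w (5 * a), Ψ x ≤ ε

section Cutoff

variable {D : Set ℂ} {w z : ℂ} {a ε r : ℝ} {θ Ψ : ℂ → ℝ}

lemma IsPlateau.dslope_mul_step (hθ : IsPlateau w (2 * a) a θ) (hr : |r| ≤ a)
    (hz : z ∈ ball w a) (f : ℂ → ℂ) (p : ℝ × ℂ) :
    dslope f z p.2 * ((θ (p.2 - circleMap 0 r p.1) - θ p.2 : ℝ) * circleMap 0 r p.1) =
      (f p.2 - f z) * cauchyStep z r θ p := by
  rcases eq_or_ne p.2 z with hpz | hpz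
  · have hp : p.2 ∉ ball w (4 * a) \ ball w a := fun h => h.2 (hpz ▸ hz)
    rw [hθ.step_sub_eq_zero hr hp, hθ.cauchyStep_eq_zero hr hp, Complex.ofReal_zero, zero_mul,
      mul_zero, mul_zero]
  · rw [dslope_of_ne _ hpz, slope_def_field, cauchyStep, div_eq_mul_inv]
    ring

lemma IsCutoff.integral_mul_step_eq_zero (hΨ : IsCutoff D w a ε r Ψ) (hr : 0 ≤ r) (hra : r ≤ a)
    (hθ : IsPlateau w (2 * a) a θ) {g : ℂ → ℂ} (hg : DifferentiableOn ℂ g D)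
    (hgint : Integrable ((D ∩ ball w (4 * a)).indicator g)) :
    ∫ p : ℝ × ℂ, (D ∩ ball w (4 * a)).indicator g p.2 *
      ((θ (p.2 - circleMap 0 r p.1) * (1 - Ψ (p.2 - circleMap 0 r p.1)) -
        θ p.2 * (1 - Ψ p.2) : ℝ) * circleMap 0 r p.1) ∂stepMeasure = 0 := by
  have hbound : ∀ x, |θ x * (1 - Ψ x)| ≤ 1 := fun x => by
    rw [abs_of_nonneg (mul_nonneg (hθ.nonneg x) (sub_nonneg.2 (hΨ.le_one x)))]
    exact mul_le_one₀ (hθ.le_one x) (sub_nonneg.2 (hΨ.le_one x)) (sub_le_self _ (hΨ.nonneg x))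
  rw [integral_mul_step_sub hgint (η := fun x => θ x * (1 - Ψ x))
    (hθ.continuous.measurable.mul (hΨ.measurable.const_sub 1)) hbound]
  refine integral_eq_zero_of_ae (Eventually.of_forall fun y => ?_)
  by_cases hy : y ∈ ball w (2 * a + a) ∧ Ψ y ≠ 1
  · have hball : ball w (2 * a + a) = ball w (3 * a) := by ring_nf
    have hsub : closedBall y r ⊆ D ∩ ball w (4 * a) := by
      refine subset_inter (hΨ.closedBall_subset y (hball ▸ hy.1) hy.2) fun x hx => ?_
      have := mem_ball.1 hy.1
      rw [mem_closedBall] at hx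
      rw [mem_ball]
      linarith [dist_triangle x y w]
    have hgr : DifferentiableOn ℂ g (closedBall y |r|) := by
      rw [abs_of_nonneg hr]
      exact hg.mono (hsub.trans inter_subset_left)
    have hcut : EqOn (fun x => (D ∩ ball w (4 * a)).indicator g x * (x - y))
        (fun x => g x * (x - y)) (sphere y |r|) := fun x hx => by
      rw [abs_of_nonneg hr] at hx
      simp only [indicator_of_mem (hsub (sphere_subset_closedBall hx))]
    simp only [Real.circleAverage_congr_sphere hcut, circleAverage_mul_sub_eq_zero hgr, mul_zero,
      Pi.zero_apply]
  · have hzero : θ y * (1 - Ψ y) = 0 := by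
      by_cases hy3 : y ∈ ball w (2 * a + a)
      · rw [not_not.1 fun h => hy ⟨hy3, h⟩, sub_self, mul_zero]
      · rw [hθ.eq_zero y hy3, zero_mul]
    simp only [hzero, Complex.ofReal_zero, zero_mul, Pi.zero_apply]

lemma mul_mul_abs_le_add_sq {ε : ℝ} (hε : 0 < ε) (r s d : ℝ) :
    s * (|d| * r) ≤ r ^ 2 * ε / 2 * s ^ 2 + (2 * ε)⁻¹ * d ^ 2 := by
  rw [← sub_nonneg, show r ^ 2 * ε / 2 * s ^ 2 + (2 * ε)⁻¹ * d ^ 2 - s * (|d| * r) =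
    (2 * ε)⁻¹ * (ε * r * s - |d|) ^ 2 by rw [← sq_abs d]; field_simp; ring]
  positivity

lemma IsPlateau.norm_mul_step_le {ρ : ℝ} (hθ : IsPlateau w ρ a θ) (hr : 0 ≤ r) (hε : 0 < ε)
    (v : ℂ → ℝ) (c : ℂ) (p : ℝ × ℂ) :
    ‖c * ((θ p.2 * (v (p.2 - circleMap 0 r p.1) - v p.2) : ℝ) * circleMap 0 r p.1)‖ ≤
      r ^ 2 * ε / 2 * ‖c‖ ^ 2 + (2 * ε)⁻¹ * (Prod.snd ⁻¹' ball w (ρ + a)).indicator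
        (fun q => (v (q.2 - circleMap 0 r q.1) - v q.2) ^ 2) p := by
  rw [norm_mul, norm_mul, Complex.norm_real, norm_circleMap_zero, norm_mul,
    Real.norm_of_nonneg (hθ.nonneg _), abs_of_nonneg hr, Real.norm_eq_abs]
  by_cases hp : p.2 ∈ ball w (ρ + a)
  · rw [indicator_of_mem (mem_preimage.2 hp)]
    set d := v (p.2 - circleMap 0 r p.1) - v p.2
    calc ‖c‖ * (θ p.2 * |d| * r) ≤ ‖c‖ * (|d| * r) := by
          gcongr
          exact mul_le_of_le_one_left (abs_nonneg d) (hθ.le_one _)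
      _ ≤ r ^ 2 * ε / 2 * ‖c‖ ^ 2 + (2 * ε)⁻¹ * d ^ 2 := mul_mul_abs_le_add_sq hε r _ d
  · rw [hθ.eq_zero _ hp, indicator_of_notMem (mt mem_preimage.1 hp)]
    simp only [zero_mul, mul_zero, add_zero]
    positivity

lemma IsCutoff.norm_integral_mul_step_le (hΨ : IsCutoff D w a ε r Ψ) (hr : 0 ≤ r) (hε : 0 < ε)
    (hθ : IsPlateau w (2 * a) a θ) {g : ℂ → ℂ} {A : Set ℂ} (hA : MeasurableSet A)
    (hgA : MemLp g 2 (volume.restrict A)) :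
    ‖∫ p : ℝ × ℂ, A.indicator g p.2 * ((θ p.2 * (Ψ (p.2 - circleMap 0 r p.1) - Ψ p.2) : ℝ) *
      circleMap 0 r p.1) ∂stepMeasure‖ ≤ r ^ 2 * (ε * ((∫ x in A, ‖g x‖ ^ 2) + 1) / 2) := by
  set S := ball w (3 * a)
  set e : ℝ × ℂ → ℝ := fun p => (Ψ (p.2 - circleMap 0 r p.1) - Ψ p.2) ^ 2
  have hg := (memLp_indicator_iff_restrict hA).2 hgA
  have hgsq : ∫ x, ‖A.indicator g x‖ ^ 2 = ∫ x in A, ‖g x‖ ^ 2 := by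
    rw [← integral_indicator hA]
    refine integral_congr_ae (Eventually.of_forall fun x => ?_)
    by_cases hx : x ∈ A
    · simp only [indicator_of_mem hx]
    · simp only [indicator_of_notMem hx, norm_zero, ne_eq, OfNat.ofNat_ne_zero, not_false_eq_true,
        zero_pow]
  have hgint := integrable_stepMeasure_snd
    ((memLp_two_iff_integrable_sq_norm hg.aestronglyMeasurable).1 hg)
  have hSm : MeasurableSet (Prod.snd ⁻¹' S : Set (ℝ × ℂ)) := measurable_snd measurableSet_ball
  have heint : Integrable ((Prod.snd ⁻¹' S).indicator e) stepMeasure :=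
    (integrableOn_sq_step_sub hΨ.measurable (C := 1) (fun x y =>
      abs_sub_le_of_nonneg_of_le (hΨ.nonneg x) (hΨ.le_one x) (hΨ.nonneg y) (hΨ.le_one y))
      measure_ball_lt_top.ne r).integrable_indicator hSm
  have hle : ∀ p : ℝ × ℂ, ‖A.indicator g p.2 *
      ((θ p.2 * (Ψ (p.2 - circleMap 0 r p.1) - Ψ p.2) : ℝ) * circleMap 0 r p.1)‖ ≤
        r ^ 2 * ε / 2 * ‖A.indicator g p.2‖ ^ 2 + (2 * ε)⁻¹ * (Prod.snd ⁻¹' S).indicator e p :=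
      fun p => by
    have hS : ball w (2 * a + a) = S := by simp only [S]; ring_nf
    exact hS ▸ hθ.norm_mul_step_le hr hε Ψ (A.indicator g p.2) p
  refine (norm_integral_le_of_norm_le ((hgint.const_mul _).add (heint.const_mul _))
    (Eventually.of_forall hle)).trans ?_
  rw [integral_add' (hgint.const_mul _) (heint.const_mul _), integral_const_mul, integral_const_mul,
    integral_stepMeasure_snd fun x => ‖A.indicator g x‖ ^ 2, hgsq,
    integral_indicator hSm]
  have henergy : (2 * ε)⁻¹ * ∫ p in Prod.snd ⁻¹' S, e p ∂stepMeasure ≤ r ^ 2 * ε / 2 := by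
    calc (2 * ε)⁻¹ * ∫ p in Prod.snd ⁻¹' S, e p ∂stepMeasure ≤ (2 * ε)⁻¹ * (r * ε) ^ 2 := by
          gcongr
          exact hΨ.stepEnergy_le
      _ = r ^ 2 * ε / 2 := by field_simp
  linarith

lemma IsCutoff.norm_cauchyStep_sub_le (hΨ : IsCutoff D w a ε r Ψ) (hr : 0 ≤ r) (hra : r ≤ a)
    (ha : 0 < a) (hz : z ∈ ball w (a / 2)) (hθ : IsPlateau w (2 * a) a θ) (p : ℝ × ℂ) :
    ‖cauchyStep z r θ p - (D ∩ ball w (4 * a)).indicator 1 p.2 *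
      ((1 - Ψ (p.2 - circleMap 0 r p.1) : ℝ) * cauchyStep z r θ p)‖ ≤
        2 * r ^ 2 / a ^ 2 * ((ball w (5 * a)).indicator Ψ p.2 +
          (ball w (5 * a)).indicator Ψ (p.2 - circleMap 0 r p.1)) := by
  set y := p.2 - circleMap 0 r p.1
  have hr' : |r| ≤ a := by rwa [abs_of_nonneg hr]
  have hK := hθ.norm_cauchyStep_le ha hr' hz p
  have hnonneg : ∀ x, 0 ≤ (ball w (5 * a)).indicator Ψ x := indicator_nonneg fun x _ => hΨ.nonneg x
  by_cases hp4 : p.2 ∈ ball w (4 * a)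
  · by_cases hpD : p.2 ∈ D
    · have hy : y ∈ ball w (5 * a) := by
        have hdist : dist y p.2 = r := by
          rw [dist_eq_norm, sub_sub_cancel_left, norm_neg, norm_circleMap_zero, abs_of_nonneg hr]
        rw [mem_ball] at hp4 ⊢
        linarith [dist_triangle y p.2 w]
      rw [indicator_of_mem (show p.2 ∈ D ∩ ball w (4 * a) from ⟨hpD, hp4⟩), Pi.one_apply, one_mul,
        Complex.ofReal_sub, Complex.ofReal_one, sub_mul, one_mul, sub_sub_cancel, norm_mul,
        Complex.norm_real, Real.norm_of_nonneg (hΨ.nonneg y), mul_comm, indicator_of_mem hy]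
      exact mul_le_mul hK (le_add_of_nonneg_left (hnonneg _)) (hΨ.nonneg y) (by positivity)
    · have hp5 : p.2 ∈ ball w (5 * a) := ball_subset_ball (by linarith) hp4
      rw [indicator_of_notMem fun h => hpD h.1, zero_mul, sub_zero, indicator_of_mem hp5,
        hΨ.eq_one _ ⟨hp4, hpD⟩]
      refine hK.trans (le_mul_of_one_le_right (by positivity) ?_)
      exact le_add_of_nonneg_right (hnonneg y)
  · rw [hθ.cauchyStep_eq_zero hr' fun h => hp4 h.1, mul_zero, mul_zero, sub_zero, norm_zero]
    exact mul_nonneg (by positivity) (add_nonneg (hnonneg _) (hnonneg _))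

lemma IsCutoff.norm_integral_cauchyStep_sub_le (hΨ : IsCutoff D w a ε r Ψ) (hr : 0 ≤ r)
    (hra : r ≤ a) (ha : 0 < a) (hz : z ∈ ball w (a / 2)) (hθ : IsPlateau w (2 * a) a θ) :
    ‖∫ p : ℝ × ℂ, cauchyStep z r θ p - (D ∩ ball w (4 * a)).indicator 1 p.2 *
      ((1 - Ψ (p.2 - circleMap 0 r p.1) : ℝ) * cauchyStep z r θ p) ∂stepMeasure‖ ≤
        2 * r ^ 2 / a ^ 2 * (2 * ε) := by
  set I : ℂ → ℝ := (ball w (5 * a)).indicator Ψ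
  have hI : Integrable I := by
    refine (integrable_indicator_iff measurableSet_ball).2 ?_
    exact Measure.integrableOn_of_bounded (M := 1) measure_ball_lt_top.ne
      hΨ.measurable.aestronglyMeasurable (Eventually.of_forall fun x => by
        rw [Real.norm_of_nonneg (hΨ.nonneg x)]; exact hΨ.le_one x)
  have hIint := integrable_stepMeasure_snd hI
  have hIshift : Integrable (fun p : ℝ × ℂ => I (p.2 - circleMap 0 r p.1)) stepMeasure := by
    rw [← integrable_comp_shear_iff r]
    simpa only [add_sub_cancel_right] using hIint
  have hshift : ∫ p : ℝ × ℂ, I (p.2 - circleMap 0 r p.1) ∂stepMeasure = ∫ x, I x := by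
    rw [← integral_comp_shear _ r, ← integral_stepMeasure_snd I]
    simp only [add_sub_cancel_right]
  have hsmall : ∫ x, I x ≤ ε := by
    rw [integral_indicator measurableSet_ball]
    exact hΨ.integral_le
  refine (norm_integral_le_of_norm_le ((hIint.add hIshift).const_mul _)
    (Eventually.of_forall (hΨ.norm_cauchyStep_sub_le hr hra ha hz hθ))).trans ?_
  rw [integral_const_mul, integral_add' hIint hIshift, integral_stepMeasure_snd, hshift]
  gcongr
  linarith

lemma IsCutoff.measurable_mul_cauchyStep (hΨ : IsCutoff D w a ε r Ψ)
    (hθ : IsPlateau w (2 * a) a θ) : Measurable fun p : ℝ × ℂ =>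
      (1 - Ψ (p.2 - circleMap 0 r p.1) : ℝ) * cauchyStep z r θ p := by
  have hΨm := hΨ.measurable
  have hθm := hθ.measurable_cauchyStep (z := z) (r := r)
  fun_prop

lemma IsCutoff.norm_mul_cauchyStep_le (hΨ : IsCutoff D w a ε r Ψ) (hra : |r| ≤ a) (ha : 0 < a)
    (hz : z ∈ ball w (a / 2)) (hθ : IsPlateau w (2 * a) a θ) (p : ℝ × ℂ) :
    ‖(1 - Ψ (p.2 - circleMap 0 r p.1) : ℝ) * cauchyStep z r θ p‖ ≤ 2 * r ^ 2 / a ^ 2 := by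
  rw [norm_mul, Complex.norm_real,
    Real.norm_of_nonneg (sub_nonneg.2 (hΨ.le_one (p.2 - circleMap 0 r p.1)))]
  exact (mul_le_of_le_one_left (norm_nonneg _) (sub_le_self _ (hΨ.nonneg _))).trans
    (hθ.norm_cauchyStep_le ha hra hz p)

lemma IsCutoff.integrable_indicator_mul_cauchyStep (hΨ : IsCutoff D w a ε r Ψ) (hra : |r| ≤ a)
    (ha : 0 < a) (hz : z ∈ ball w (a / 2)) (hθ : IsPlateau w (2 * a) a θ) {k : ℂ → ℂ} {A : Set ℂ}
    (hA : MeasurableSet A) (hk : IntegrableOn k A) :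
    Integrable (fun p : ℝ × ℂ => A.indicator k p.2 *
      ((1 - Ψ (p.2 - circleMap 0 r p.1) : ℝ) * cauchyStep z r θ p)) stepMeasure :=
  integrable_stepMeasure_snd_mul (hk.integrable_indicator hA)
    (hΨ.measurable_mul_cauchyStep hθ).aestronglyMeasurable
    (hΨ.norm_mul_cauchyStep_le hra ha hz hθ)

lemma IsCutoff.norm_integral_indicator_mul_cauchyStep_le (hΨ : IsCutoff D w a ε r Ψ)
    (hra : |r| ≤ a) (ha : 0 < a) (hz : z ∈ ball w (a / 2)) (hθ : IsPlateau w (2 * a) a θ)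
    {k : ℂ → ℂ} {A : Set ℂ} (hA : MeasurableSet A) (hk : IntegrableOn k A) :
    ‖∫ p : ℝ × ℂ, A.indicator k p.2 *
      ((1 - Ψ (p.2 - circleMap 0 r p.1) : ℝ) * cauchyStep z r θ p) ∂stepMeasure‖ ≤
        2 * r ^ 2 / a ^ 2 * ∫ x in A, ‖k x‖ := by
  refine (norm_integral_le_of_norm_le ((integrable_stepMeasure_snd
    (hk.integrable_indicator hA)).norm.const_mul (2 * r ^ 2 / a ^ 2))
      (Eventually.of_forall fun p => ?_)).trans_eq ?_
  · rw [norm_mul, mul_comm]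
    gcongr
    exact hΨ.norm_mul_cauchyStep_le hra ha hz hθ p
  · rw [integral_const_mul, integral_stepMeasure_snd fun x => ‖A.indicator k x‖]
    simp only [norm_indicator_eq_indicator_norm, integral_indicator hA]

lemma IsCutoff.integrable_mul_step (hΨ : IsCutoff D w a ε r Ψ) (hθ : IsPlateau w (2 * a) a θ)
    {k : ℂ → ℂ} (hk : Integrable k) :
    Integrable (fun p : ℝ × ℂ => k p.2 * ((θ p.2 * (Ψ (p.2 - circleMap 0 r p.1) - Ψ p.2) : ℝ) *
      circleMap 0 r p.1)) stepMeasure := by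
  refine integrable_stepMeasure_snd_mul hk (C := |r|) (Measurable.aestronglyMeasurable ?_)
    fun p => ?_
  · have hθm := hθ.continuous.measurable
    have hΨm := hΨ.measurable
    fun_prop
  · rw [norm_mul, Complex.norm_real, norm_circleMap_zero, norm_mul, Real.norm_eq_abs,
      abs_of_nonneg (hθ.nonneg _), Real.norm_eq_abs]
    refine mul_le_of_le_one_left (abs_nonneg r) (mul_le_one₀ (hθ.le_one _) (abs_nonneg _) ?_)
    exact abs_sub_le_of_nonneg_of_le (hΨ.nonneg _) (hΨ.le_one _) (hΨ.nonneg _) (hΨ.le_one _)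

lemma IsCutoff.mul_integral_cauchyStep (hΨ : IsCutoff D w a ε r Ψ) (hr : 0 ≤ r) (hra : r ≤ a)
    (ha : 0 < a) (hz : z ∈ D ∩ ball w (a / 2)) (hD : IsOpen D) (hθ : IsPlateau w (2 * a) a θ)
    {f : ℂ → ℂ} (hf : DifferentiableOn ℂ f D) (hfint : IntegrableOn f (D ∩ ball w (4 * a)))
    (hgint : IntegrableOn (dslope f z) (D ∩ ball w (4 * a))) :
    f z * ∫ p : ℝ × ℂ, (D ∩ ball w (4 * a)).indicator 1 p.2 *
      ((1 - Ψ (p.2 - circleMap 0 r p.1) : ℝ) * cauchyStep z r θ p) ∂stepMeasure =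
    (∫ p : ℝ × ℂ, (D ∩ ball w (4 * a)).indicator f p.2 *
      ((1 - Ψ (p.2 - circleMap 0 r p.1) : ℝ) * cauchyStep z r θ p) ∂stepMeasure) -
    ∫ p : ℝ × ℂ, (D ∩ ball w (4 * a)).indicator (dslope f z) p.2 *
      ((θ p.2 * (Ψ (p.2 - circleMap 0 r p.1) - Ψ p.2) : ℝ) * circleMap 0 r p.1) ∂stepMeasure := by
  have hr' : |r| ≤ a := by rwa [abs_of_nonneg hr]
  set A := D ∩ ball w (4 * a)
  set g := dslope f z
  set β : ℝ × ℂ → ℂ := fun p => (1 - Ψ (p.2 - circleMap 0 r p.1) : ℝ) * cauchyStep z r θ p with hβ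
  set σ : ℝ × ℂ → ℂ := fun p =>
    (θ p.2 * (Ψ (p.2 - circleMap 0 r p.1) - Ψ p.2) : ℝ) * circleMap 0 r p.1 with hσ
  have hA : MeasurableSet A := hD.measurableSet.inter measurableSet_ball
  have hgA := hgint.integrable_indicator hA
  have hfβ : Integrable (fun p => A.indicator f p.2 * β p) stepMeasure :=
    hΨ.integrable_indicator_mul_cauchyStep hr' ha hz.2 hθ hA hfint
  have hβ1 : Integrable (fun p => f z * (A.indicator 1 p.2 * β p)) stepMeasure :=
    (hΨ.integrable_indicator_mul_cauchyStep hr' ha hz.2 hθ hA (integrableOn_const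
      (measure_inter_lt_top_of_right_ne_top measure_ball_lt_top.ne).ne)).const_mul (f z)
  have hgσ : Integrable (fun p => A.indicator g p.2 * σ p) stepMeasure :=
    hΨ.integrable_mul_step hθ hgA
  have hholo := hΨ.integral_mul_step_eq_zero hr hra hθ
    ((Complex.differentiableOn_dslope (hD.mem_nhds hz.1)).2 hf) hgA
  have hsplit : ∀ p : ℝ × ℂ, A.indicator g p.2 *
      ((θ (p.2 - circleMap 0 r p.1) * (1 - Ψ (p.2 - circleMap 0 r p.1)) -
        θ p.2 * (1 - Ψ p.2) : ℝ) * circleMap 0 r p.1) =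
      A.indicator f p.2 * β p - f z * (A.indicator 1 p.2 * β p) - A.indicator g p.2 * σ p :=
    fun p => by
      by_cases hp : p.2 ∈ A
      · have hslope := hθ.dslope_mul_step hr' (ball_subset_ball (by linarith) hz.2) f p
        simp only [indicator_of_mem hp, Pi.one_apply, hβ, hσ]
        push_cast at hslope ⊢
        linear_combination (1 - (Ψ (p.2 - circleMap 0 r p.1) : ℂ)) * hslope
      · simp only [indicator_of_notMem hp, zero_mul, mul_zero, sub_zero]
  have hfβ1 : Integrable (fun p => A.indicator f p.2 * β p - f z * (A.indicator 1 p.2 * β p))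
    stepMeasure := hfβ.sub hβ1
  rw [integral_congr_ae (Eventually.of_forall hsplit), integral_sub hfβ1 hgσ,
    integral_sub hfβ hβ1, integral_const_mul] at hholo
  linear_combination -hholo

lemma IsCutoff.pi_mul_norm_le (hΨ : IsCutoff D w a ε r Ψ) (hr : 0 < r) (hra : r ≤ a)
    (hε : 0 < ε) (hz : z ∈ D ∩ ball w (a / 2)) (hD : IsOpen D) {f : ℂ → ℂ}
    (hf : DifferentiableOn ℂ f D) (hfint : IntegrableOn f (D ∩ ball w (4 * a)))
    (hg : MemLp (dslope f z) 2 (volume.restrict (D ∩ ball w (4 * a)))) :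
    Real.pi * ‖f z‖ ≤ 2 / a ^ 2 * (∫ x in D ∩ ball w (4 * a), ‖f x‖) +
      ε * (4 / a ^ 2 * ‖f z‖ + ((∫ x in D ∩ ball w (4 * a), ‖dslope f z x‖ ^ 2) + 1) / 2) := by
  have ha : 0 < a := hr.trans_le hra
  have hr' : |r| ≤ a := by rwa [abs_of_pos hr]
  obtain ⟨θ, hθ⟩ := exists_isPlateau w (ρ := 2 * a) (by positivity) ha
  set A := D ∩ ball w (4 * a)
  have hA : MeasurableSet A := hD.measurableSet.inter measurableSet_ball
  have hfin : IsFiniteMeasure (volume.restrict A) :=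
    isFiniteMeasure_restrict.2 (measure_inter_lt_top_of_right_ne_top measure_ball_lt_top.ne).ne
  have hdecomp := hΨ.mul_integral_cauchyStep hr.le hra ha hz hD hθ hf hfint
    (hg.integrable one_le_two)
  have hone : IntegrableOn (1 : ℂ → ℂ) A := integrableOn_const
    (measure_inter_lt_top_of_right_ne_top measure_ball_lt_top.ne).ne
  have hmass := hΨ.norm_integral_cauchyStep_sub_le hr.le hra ha hz.2 hθ
  rw [integral_sub (hθ.integrable_cauchyStep ha hr' hz.2)
    (hΨ.integrable_indicator_mul_cauchyStep hr' ha hz.2 hθ hA hone),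
    hθ.integral_cauchyStep hr' hz.2] at hmass
  have hmain := hΨ.norm_integral_indicator_mul_cauchyStep_le hr' ha hz.2 hθ hA hfint
  have henergy := hΨ.norm_integral_mul_step_le hr.le hε hθ hA hg
  set I := ∫ p : ℝ × ℂ, A.indicator 1 p.2 *
    ((1 - Ψ (p.2 - circleMap 0 r p.1) : ℝ) * cauchyStep z r θ p) ∂stepMeasure
  have hbound : r ^ 2 * (Real.pi * ‖f z‖) ≤ r ^ 2 * (2 / a ^ 2 * (∫ x in A, ‖f x‖) +
      ε * (4 / a ^ 2 * ‖f z‖ + ((∫ x in A, ‖dslope f z x‖ ^ 2) + 1) / 2)) := by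
    calc r ^ 2 * (Real.pi * ‖f z‖) = ‖f z * (((Real.pi * r ^ 2 : ℝ) - I) + I)‖ := by
          rw [sub_add_cancel, norm_mul, Complex.norm_real, Real.norm_of_nonneg (by positivity)]
          ring
      _ ≤ ‖f z‖ * (2 * r ^ 2 / a ^ 2 * (2 * ε)) + (2 * r ^ 2 / a ^ 2 * (∫ x in A, ‖f x‖) +
          r ^ 2 * (ε * ((∫ x in A, ‖dslope f z x‖ ^ 2) + 1) / 2)) := by
          rw [mul_add, hdecomp]
          refine (norm_add_le _ _).trans (add_le_add ?_ ((norm_sub_le _ _).trans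
            (add_le_add hmain henergy)))
          rw [norm_mul]
          gcongr
      _ = _ := by ring
  exact le_of_mul_le_mul_left hbound (by positivity)

end Cutoff

/-! ### The pole set of a subharmonic function is null -/

/-- The truncation `max x (-n)` of an extended real `x`, read as a real number. It has the junk
value `0` at `x = ⊤`. -/
noncomputable def truncBelow (n : ℕ) (x : EReal) : ℝ := (max x (-(n : ℝ) : EReal)).toReal

section TruncBelow

variable {n : ℕ} {x : EReal} {m : ℝ}

lemma measurable_truncBelow (n : ℕ) : Measurable (truncBelow n) := by
  unfold truncBelow
  fun_prop

lemma coe_truncBelow (n : ℕ) (hx : x < ⊤) : (truncBelow n x : EReal) = max x (-(n : ℝ) : EReal) :=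
  EReal.coe_toReal (max_lt hx (EReal.coe_lt_top (-(n : ℝ)))).ne
    ((EReal.bot_lt_coe (-(n : ℝ))).trans_le (le_max_right _ _)).ne'

lemma truncBelow_le (hm : 0 ≤ m) (hx : x ≤ m) : truncBelow n x ≤ m := by
  have hn : -(n : ℝ) ≤ m := (neg_nonpos.2 n.cast_nonneg).trans hm
  rw [← EReal.coe_le_coe_iff, coe_truncBelow n (hx.trans_lt (EReal.coe_lt_top m))]
  exact max_le hx (by exact_mod_cast hn)

lemma neg_le_truncBelow (hx : x < ⊤) : -(n : ℝ) ≤ truncBelow n x := by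
  rw [← EReal.coe_le_coe_iff, coe_truncBelow n hx, EReal.coe_neg]
  exact le_max_right _ _

lemma abs_truncBelow_le (hm : 0 ≤ m) (hx : x ≤ m) : |truncBelow n x| ≤ n + m :=
  abs_le.2 ⟨by linarith [neg_le_truncBelow (n := n) (hx.trans_lt (EReal.coe_lt_top m))],
    (truncBelow_le hm hx).trans (le_add_of_nonneg_left n.cast_nonneg)⟩

lemma truncBelow_of_le (hx : x ≤ (-(n : ℝ) : ℝ)) : truncBelow n x = -n := by
  rw [truncBelow, ← EReal.coe_neg, max_eq_right hx, EReal.toReal_coe]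

lemma truncBelow_coe (hm : -(n : ℝ) ≤ m) : truncBelow n (m : EReal) = m := by
  rw [truncBelow, ← EReal.coe_neg, max_eq_left (EReal.coe_le_coe_iff.2 hm), EReal.toReal_coe]

lemma circleAvgTrunc_eq_circleAverage (u : ℂ → EReal) (c : ℂ) (R : ℝ) (n : ℕ) :
    circleAvgTrunc u c R n = Real.circleAverage (fun x => truncBelow n (u x)) c R := rfl

end TruncBelow

lemma measurable_indicator_comp_of_upperSemicontinuousOn {X : Type*} [TopologicalSpace X]
    [MeasurableSpace X] [OpensMeasurableSpace X] {u : X → EReal} {s : Set X}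
    (hu : UpperSemicontinuousOn u s) (hs : MeasurableSet s) {g : EReal → ℝ} (hg : Measurable g) :
    Measurable (s.indicator fun x => g (u x)) := by
  refine measurable_of_restrict_of_restrict_compl hs ?_ ?_
  · have heq : s.domRestrict (s.indicator fun x => g (u x)) = g ∘ s.domRestrict u :=
      funext fun x => indicator_of_mem x.2 _
    rw [heq]
    exact hg.comp (upperSemicontinuousOn_iff_restrict.2 hu).measurable
  · have heq : sᶜ.domRestrict (s.indicator fun x => g (u x)) = 0 :=
      funext fun x => indicator_of_notMem x.2 _
    rw [heq]
    exact measurable_const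

lemma integral_angleMeasure_add_exp_mul (F : ℂ → ℝ) (x t : ℂ) :
    ∫ φ, F (x + Circle.exp φ * t) ∂angleMeasure = Real.circleAverage F x ‖t‖ := by
  have hrot : ∀ φ : ℝ, x + Circle.exp φ * t = circleMap x ‖t‖ (φ + t.arg) := fun φ => by
    conv_lhs => rw [← Complex.norm_mul_exp_arg_mul_I t]
    simp only [circleMap, Circle.coe_exp, Complex.ofReal_add, add_mul, Complex.exp_add]
    ring
  rw [Real.circleAverage_eq_integral_add t.arg, angleMeasure, integral_smul_measure,
    ENNReal.toReal_ofReal (by positivity), intervalIntegral.integral_of_le (by positivity)]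
  simp only [hrot]

lemma measurePreserving_rotation_ball (a : Circle) (x : ℂ) (R : ℝ) :
    MeasurePreserving (fun y => x + a * (y - x)) (volume.restrict (ball x R))
      (volume.restrict (ball x R)) := by
  have hvol : MeasurePreserving (fun y : ℂ => x + a * (y - x)) volume volume :=
    (measurePreserving_add_left volume x).comp
      ((rotation a).measurePreserving.comp (measurePreserving_sub_right volume x))
  have hpre : (fun y => x + a * (y - x)) ⁻¹' ball x R = ball x R := by
    ext y
    simp only [mem_preimage, mem_ball_iff_norm, add_sub_cancel_left, norm_mul, Circle.norm_coe,
      one_mul]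
  simpa only [hpre] using hvol.restrict_preimage (measurableSet_ball (x := x) (ε := R))

lemma measurePreserving_rotation (x : ℂ) (R : ℝ) :
    MeasurePreserving (fun p : ℝ × ℂ => (p.1, x + Circle.exp p.1 * (p.2 - x)))
      (angleMeasure.prod (volume.restrict (ball x R)))
      (angleMeasure.prod (volume.restrict (ball x R))) :=
  (MeasurePreserving.id angleMeasure).skew_product
    (g := fun φ y => x + Circle.exp φ * (y - x)) (by unfold Function.uncurry; fun_prop)
    (Eventually.of_forall fun φ => (measurePreserving_rotation_ball (Circle.exp φ) x R).map_eq)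

lemma integrable_comp_rotation {F : ℂ → ℝ} {x : ℂ} {R : ℝ} (hF : IntegrableOn F (ball x R)) :
    Integrable (fun p : ℝ × ℂ => F (x + Circle.exp p.1 * (p.2 - x)))
      (angleMeasure.prod (volume.restrict (ball x R))) :=
  (measurePreserving_rotation x R).integrable_comp_of_integrable (hF.comp_snd angleMeasure)

lemma integrableOn_circleAverage {F : ℂ → ℝ} {x : ℂ} {R : ℝ} (hF : IntegrableOn F (ball x R)) :
    IntegrableOn (fun y => Real.circleAverage F x ‖y - x‖) (ball x R) := by
  have hint := (integrable_comp_rotation hF).integral_prod_right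
  simp only [integral_angleMeasure_add_exp_mul] at hint
  exact hint

lemma setIntegral_circleAverage {F : ℂ → ℝ} {x : ℂ} {R : ℝ} (hF : IntegrableOn F (ball x R)) :
    ∫ y in ball x R, Real.circleAverage F x ‖y - x‖ = ∫ y in ball x R, F y := by
  have hsnd : Integrable (fun p : ℝ × ℂ => F p.2)
      (angleMeasure.prod (volume.restrict (ball x R))) :=
    hF.comp_snd angleMeasure
  calc ∫ y in ball x R, Real.circleAverage F x ‖y - x‖
      = ∫ p, F (x + Circle.exp p.1 * (p.2 - x))
          ∂(angleMeasure.prod (volume.restrict (ball x R))) := by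
        simp only [← integral_angleMeasure_add_exp_mul]
        exact (integral_prod_symm _ (integrable_comp_rotation hF)).symm
    _ = ∫ p, F p.2 ∂(angleMeasure.prod (volume.restrict (ball x R))) := by
        have hrot := measurePreserving_rotation x R
        conv_rhs => rw [← hrot.map_eq]
        exact (integral_map hrot.aemeasurable (hrot.map_eq.symm ▸ hsnd.aestronglyMeasurable)).symm
    _ = ∫ y in ball x R, F y := by
        simp only [integral_prod _ hsnd, integral_const, probReal_univ, one_smul]

namespace SubharmonicOn

variable {u : ℂ → EReal} {Ω : Set ℂ} {c : ℂ} {R : ℝ}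

lemma exists_forall_le (hu : SubharmonicOn u Ω) {K : Set ℂ} (hK : IsCompact K) (hKΩ : K ⊆ Ω) :
    ∃ m : ℝ, 0 ≤ m ∧ ∀ x ∈ K, u x ≤ m := by
  rcases K.eq_empty_or_nonempty with rfl | hne
  · exact ⟨0, le_rfl, fun x hx => hx.elim⟩
  obtain ⟨a, haK, hmax⟩ := (hu.1.mono hKΩ).exists_isMaxOn hne hK
  obtain ⟨t, hat, -⟩ := EReal.lt_iff_exists_real_btwn.1 (hu.2.1 a (hKΩ haK))
  exact ⟨max t 0, le_max_right _ _, fun x hx =>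
    (hmax hx).trans (hat.le.trans (EReal.coe_le_coe_iff.2 (le_max_left _ _)))⟩

lemma integrableOn_truncBelow (hu : SubharmonicOn u Ω) {K : Set ℂ} (hK : IsCompact K)
    (hKΩ : K ⊆ Ω) (n : ℕ) : IntegrableOn (fun x => truncBelow n (u x)) K := by
  obtain ⟨m, hm, hle⟩ := hu.exists_forall_le hK hKΩ
  have hmeas := measurable_indicator_comp_of_upperSemicontinuousOn (hu.1.mono hKΩ) hK.measurableSet
    (measurable_truncBelow n)
  have heq : EqOn (K.indicator fun x => truncBelow n (u x)) (fun x => truncBelow n (u x)) K :=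
    eqOn_indicator
  refine IntegrableOn.congr_fun (Measure.integrableOn_of_bounded (M := n + m)
    hK.measure_lt_top.ne hmeas.aestronglyMeasurable ?_) heq hK.measurableSet
  filter_upwards [ae_restrict_mem hK.measurableSet] with x hx
  rw [heq hx, Real.norm_eq_abs]
  exact abs_truncBelow_le hm (hle x hx)

lemma circleIntegrable_truncBelow (hu : SubharmonicOn u Ω) (hR : 0 ≤ R)
    (hball : closedBall c R ⊆ Ω) (n : ℕ) : CircleIntegrable (fun x => truncBelow n (u x)) c R := by
  obtain ⟨m, hm, hle⟩ := hu.exists_forall_le (isCompact_closedBall c R) hball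
  have hmem : ∀ θ, circleMap c R θ ∈ closedBall c R := circleMap_mem_closedBall c hR
  have hmeas := (measurable_indicator_comp_of_upperSemicontinuousOn (hu.1.mono hball)
    measurableSet_closedBall (measurable_truncBelow n)).comp (continuous_circleMap c R).measurable
  have heq : (closedBall c R).indicator (fun x => truncBelow n (u x)) ∘ circleMap c R =
      fun θ => truncBelow n (u (circleMap c R θ)) := funext fun θ => indicator_of_mem (hmem θ) _
  rw [heq] at hmeas
  refine (intervalIntegrable_const (c := n + m)).mono_fun hmeas.aestronglyMeasurable
    (Eventually.of_forall fun θ => ?_)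
  exact (abs_truncBelow_le hm (hle _ (hmem θ))).trans (le_abs_self _)

lemma truncBelow_le_circleAverage (hu : SubharmonicOn u Ω) (hR : 0 ≤ R)
    (hball : closedBall c R ⊆ Ω) (n : ℕ) :
    truncBelow n (u c) ≤ Real.circleAverage (fun x => truncBelow n (u x)) c R := by
  rcases hR.eq_or_lt with rfl | hR
  · rw [Real.circleAverage_zero]
  have hc : c ∈ Ω := hball (mem_closedBall_self hR.le)
  rw [← EReal.coe_le_coe_iff, coe_truncBelow n (hu.2.1 c hc)]
  refine max_le ?_ ?_
  · rw [← circleAvgTrunc_eq_circleAverage]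
    exact (hu.2.2 c hc R hR hball).trans (iInf_le _ n)
  · rw [← EReal.coe_neg, EReal.coe_le_coe_iff, ← Real.circleAverage_const (-(n : ℝ)) c R]
    refine Real.circleAverage_mono (circleIntegrable_const _ c R)
      (hu.circleIntegrable_truncBelow hR.le hball n) fun x hx => neg_le_truncBelow (hu.2.1 x ?_)
    rw [abs_of_pos hR] at hx
    exact hball (sphere_subset_closedBall hx)

lemma mul_truncBelow_le_setIntegral (hu : SubharmonicOn u Ω) (hball : closedBall c R ⊆ Ω) (n : ℕ) :
    volume.real (ball c R) * truncBelow n (u c) ≤ ∫ x in ball c R, truncBelow n (u x) := by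
  have hint : IntegrableOn (fun x => truncBelow n (u x)) (ball c R) :=
    (hu.integrableOn_truncBelow (isCompact_closedBall c R) hball n).mono_set ball_subset_closedBall
  rw [← setIntegral_circleAverage hint, ← smul_eq_mul, ← setIntegral_const]
  refine setIntegral_mono_on (integrableOn_const measure_ball_lt_top.ne)
    (integrableOn_circleAverage hint) measurableSet_ball fun x hx => ?_
  exact hu.truncBelow_le_circleAverage (norm_nonneg _)
    ((closedBall_subset_closedBall (mem_ball_iff_norm.1 hx).le).trans hball) n

lemma mul_measureReal_eq_bot_le (hu : SubharmonicOn u Ω) (hball : closedBall c R ⊆ Ω)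
    (hcΩ : c ∈ Ω) (hc : u c ≠ ⊥) {m : ℝ} (hm : 0 ≤ m) (hle : ∀ x ∈ ball c R, u x ≤ m) (n : ℕ) :
    (m + n) * (volume.restrict (ball c R)).real {x | u x = ⊥} ≤
      volume.real (ball c R) * (m - (u c).toReal) := by
  have : IsFiniteMeasure (volume.restrict (ball c R)) :=
    isFiniteMeasure_restrict.2 measure_ball_lt_top.ne
  have hint : IntegrableOn (fun x => truncBelow n (u x)) (ball c R) :=
    (hu.integrableOn_truncBelow (isCompact_closedBall c R) hball n).mono_set ball_subset_closedBall
  have hsub : {x | u x = ⊥} ⊆ {x | m + n ≤ m - truncBelow n (u x)} := fun x hx => by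
    rw [mem_ofPred_eq, truncBelow_of_le (hx.trans_le bot_le), sub_neg_eq_add]
  have hcle : (u c).toReal ≤ truncBelow n (u c) := by
    rw [← EReal.coe_le_coe_iff, coe_truncBelow n (hu.2.1 c hcΩ),
      EReal.coe_toReal (hu.2.1 c hcΩ).ne hc]
    exact le_max_left _ _
  calc (m + n) * (volume.restrict (ball c R)).real {x | u x = ⊥}
      ≤ (m + n) * (volume.restrict (ball c R)).real {x | m + n ≤ m - truncBelow n (u x)} := by
        gcongr
        exact measure_ne_top _ _
    _ ≤ ∫ x in ball c R, (m - truncBelow n (u x)) := by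
        refine mul_meas_ge_le_integral_of_nonneg ?_ ((integrable_const m).sub hint) _
        filter_upwards [ae_restrict_mem measurableSet_ball] with x hx
        exact sub_nonneg.2 (truncBelow_le hm (hle x hx))
    _ = volume.real (ball c R) * m - ∫ x in ball c R, truncBelow n (u x) := by
        rw [integral_sub (integrable_const m) hint, setIntegral_const, smul_eq_mul]
    _ ≤ volume.real (ball c R) * m - volume.real (ball c R) * truncBelow n (u c) :=
        sub_le_sub_left (hu.mul_truncBelow_le_setIntegral hball n) _
    _ ≤ volume.real (ball c R) * (m - (u c).toReal) := by
        rw [← mul_sub]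
        gcongr

lemma volume_eq_bot_inter_ball (hu : SubharmonicOn u Ω) (hball : closedBall c R ⊆ Ω) (hcΩ : c ∈ Ω)
    (hc : u c ≠ ⊥) : volume ({x | u x = ⊥} ∩ ball c R) = 0 := by
  obtain ⟨m, hm, hle⟩ := hu.exists_forall_le (isCompact_closedBall c R) hball
  have hmarkov := hu.mul_measureReal_eq_bot_le hball hcΩ hc hm fun x hx =>
    hle x (ball_subset_closedBall hx)
  have hzero : (volume.restrict (ball c R)).real {x | u x = ⊥} = 0 := by
    by_contra hne
    have hpos := measureReal_nonneg.lt_of_ne' hne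
    obtain ⟨n, hn⟩ := exists_nat_gt (volume.real (ball c R) * (m - (u c).toReal) /
      (volume.restrict (ball c R)).real {x | u x = ⊥})
    rw [div_lt_iff₀ hpos] at hn
    exact absurd ((hmarkov n).trans_lt hn)
      (not_lt.2 (mul_le_mul_of_nonneg_right (le_add_of_nonneg_left hm) hpos.le))
  rwa [measureReal_def, Measure.restrict_apply' measurableSet_ball,
    ENNReal.toReal_eq_zero_iff, or_iff_left
      (measure_ne_top_of_subset inter_subset_right measure_ball_lt_top.ne)] at hzero

/-- The open set of points near which `u` is finite almost everywhere and the interior of the pole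
set are disjoint and cover `Ω`. -/
lemma volume_eq_bot_inter (hu : SubharmonicOn u Ω) (hΩ : IsOpen Ω) (hconn : IsPreconnected Ω)
    (hne : ∃ x ∈ Ω, u x ≠ ⊥) : volume ({x | u x = ⊥} ∩ Ω) = 0 := by
  set N := {x | u x = ⊥}
  set μ := volume.restrict N
  have hnull : volume (μ.supportᶜ ∩ N) = 0 := by
    rw [← Measure.restrict_apply Measure.isOpen_compl_support.measurableSet]
    exact Measure.measure_compl_support
  have hdisj : Disjoint μ.supportᶜ (interior N) := by
    rw [disjoint_iff_inter_eq_empty,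
      ← (Measure.isOpen_compl_support.inter isOpen_interior).measure_eq_zero_iff volume]
    exact measure_mono_null (inter_subset_inter_right _ interior_subset) hnull
  have hcover : Ω ⊆ μ.supportᶜ ∪ interior N := fun x hx => by
    by_cases hxN : x ∈ interior N
    · exact .inr hxN
    obtain ⟨R, hR, hball⟩ := nhds_basis_closedBall.mem_iff.1 (hΩ.mem_nhds hx)
    obtain ⟨y, hy, hyN⟩ : ∃ y ∈ ball x (R / 2), y ∉ N := not_subset.1 fun hsub =>
      hxN (mem_interior.2 ⟨_, hsub, isOpen_ball, mem_ball_self (half_pos hR)⟩)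
    have hyball : closedBall y (R / 2) ⊆ Ω :=
      (closedBall_subset_closedBall' (by linarith [mem_ball.1 hy])).trans hball
    refine .inl (Measure.notMem_support_iff_exists.2
      ⟨ball y (R / 2), isOpen_ball.mem_nhds (mem_ball_comm.1 hy), ?_⟩)
    rw [Measure.restrict_apply measurableSet_ball, inter_comm]
    exact hu.volume_eq_bot_inter_ball hyball
      (hyball (mem_closedBall_self (half_pos hR).le)) hyN
  rcases hconn.subset_or_subset Measure.isOpen_compl_support isOpen_interior hdisj hcover with h | h
  · rw [inter_comm]
    exact measure_mono_null (inter_subset_inter_left N h) hnull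
  · obtain ⟨x, hx, hux⟩ := hne
    exact absurd (interior_subset (h hx)) hux

end SubharmonicOn

/-! ### Cut-off functions for polar sets -/

/-- The function `1 + m - max u (-n)` on `K`, extended by `1`: bounded, superharmonic where `u` is
subharmonic, and maximal on the pole set of `u`. -/
noncomputable def poleHeight (u : ℂ → EReal) (K : Set ℂ) (m : ℝ) (n : ℕ) (x : ℂ) : ℝ :=
  1 + K.indicator (fun y => m - truncBelow n (u y)) x

/-- The logarithm of `poleHeight`, normalized to be `1` on the pole set of `u`. -/
noncomputable def poleCutoff (u : ℂ → EReal) (K : Set ℂ) (m : ℝ) (n : ℕ) (x : ℂ) : ℝ :=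
  Real.log (poleHeight u K m n x) / Real.log (1 + m + n)

lemma stepEnergy_div_const (r : ℝ) (S : Set ℂ) (v : ℂ → ℝ) (L : ℝ) :
    stepEnergy r S (fun x => v x / L) = stepEnergy r S v / L ^ 2 := by
  simp only [stepEnergy, ← sub_div, div_pow, integral_div]

lemma tendsto_log_add_natCast_atTop (c : ℝ) :
    Tendsto (fun n : ℕ => Real.log (c + n)) atTop atTop :=
  Real.tendsto_log_atTop.comp (tendsto_atTop_add_const_left _ c tendsto_natCast_atTop_atTop)

section PoleHeight

variable {u : ℂ → EReal} {K : Set ℂ} {m : ℝ} {n : ℕ} {x : ℂ}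

lemma measurable_poleHeight (hu : UpperSemicontinuousOn u K) (hK : MeasurableSet K) (m : ℝ)
    (n : ℕ) : Measurable (poleHeight u K m n) :=
  (measurable_indicator_comp_of_upperSemicontinuousOn hu hK
    ((measurable_truncBelow n).const_sub m)).const_add 1

lemma one_le_poleHeight (hm : 0 ≤ m) (hle : ∀ x ∈ K, u x ≤ m) (n : ℕ) (x : ℂ) :
    1 ≤ poleHeight u K m n x :=
  le_add_of_nonneg_right
    (indicator_nonneg (fun y hy => sub_nonneg.2 (truncBelow_le hm (hle y hy))) x)

lemma poleHeight_le (hm : 0 ≤ m) (hle : ∀ x ∈ K, u x ≤ m) (n : ℕ) (x : ℂ) :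
    poleHeight u K m n x ≤ 1 + m + n := by
  rw [poleHeight, add_assoc]
  refine add_le_add_right (indicator_le' (g := fun _ => m + n) (fun y hy => ?_) (fun y _ => ?_) x) 1
  · linarith [neg_le_truncBelow (n := n) ((hle y hy).trans_lt (EReal.coe_lt_top m))]
  · exact add_nonneg hm n.cast_nonneg

lemma poleHeight_of_le (hx : x ∈ K) (hux : u x ≤ (-(n : ℝ) : ℝ)) :
    poleHeight u K m n x = 1 + m + n := by
  rw [poleHeight, indicator_of_mem hx, truncBelow_of_le hux]
  ring

lemma SubharmonicOn.circleAverage_poleHeight_le {Ω : Set ℂ} {c : ℂ} {R : ℝ}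
    (hu : SubharmonicOn u Ω) (hKΩ : K ⊆ Ω) (hR : 0 ≤ R) (hball : closedBall c R ⊆ K) (m : ℝ)
    (n : ℕ) : Real.circleAverage (poleHeight u K m n) c R ≤ poleHeight u K m n c := by
  have hEq : EqOn (poleHeight u K m n) (fun x => 1 + m - truncBelow n (u x)) (closedBall c R) :=
    fun x hx => by
      simp only [poleHeight, indicator_of_mem (hball hx)]
      ring
  have hsphere : EqOn (poleHeight u K m n) (fun x => 1 + m - truncBelow n (u x)) (sphere c |R|) :=
    fun x hx => hEq (sphere_subset_closedBall (by rwa [abs_of_nonneg hR] at hx))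
  rw [Real.circleAverage_congr_sphere hsphere, hEq (mem_closedBall_self hR),
    Real.circleAverage_fun_sub (circleIntegrable_const _ c R)
      (hu.circleIntegrable_truncBelow hR (hball.trans hKΩ) n), Real.circleAverage_const]
  exact sub_le_sub_left (hu.truncBelow_le_circleAverage hR (hball.trans hKΩ) n) _

lemma measurable_poleCutoff (hu : UpperSemicontinuousOn u K) (hK : MeasurableSet K) (m : ℝ)
    (n : ℕ) : Measurable (poleCutoff u K m n) :=
  (measurable_poleHeight hu hK m n).log.div_const _

lemma poleCutoff_nonneg (hm : 0 ≤ m) (hle : ∀ x ∈ K, u x ≤ m) (n : ℕ) (x : ℂ) :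
    0 ≤ poleCutoff u K m n x :=
  div_nonneg (Real.log_nonneg (one_le_poleHeight hm hle n x))
    (Real.log_nonneg (by linarith [n.cast_nonneg (α := ℝ)]))

lemma poleCutoff_le_one (hm : 0 ≤ m) (hle : ∀ x ∈ K, u x ≤ m) (n : ℕ) (x : ℂ) :
    poleCutoff u K m n x ≤ 1 :=
  div_le_one_of_le₀ (Real.log_le_log (one_pos.trans_le (one_le_poleHeight hm hle n x))
    (poleHeight_le hm hle n x)) (Real.log_nonneg (by linarith [n.cast_nonneg (α := ℝ)]))

lemma poleCutoff_of_le (hm : 0 ≤ m) (hn : 0 < n) (hx : x ∈ K) (hux : u x ≤ (-(n : ℝ) : ℝ)) :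
    poleCutoff u K m n x = 1 := by
  have hpos : 0 < Real.log (1 + m + n) :=
    Real.log_pos (by linarith [Nat.cast_pos (α := ℝ).2 hn])
  rw [poleCutoff, poleHeight_of_le hx hux, div_self hpos.ne']

lemma tendsto_poleCutoff (hx : x ∈ K) (hbot : u x ≠ ⊥) (htop : u x ≠ ⊤) :
    Tendsto (fun n => poleCutoff u K m n x) atTop (𝓝 0) := by
  lift u x to ℝ using ⟨htop, hbot⟩ with t ht
  have hev : ∀ᶠ n : ℕ in atTop, Real.log (1 + (m - t)) / Real.log (1 + m + n) =
      poleCutoff u K m n x := by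
    filter_upwards [eventually_ge_atTop ⌈-t⌉₊] with n hn
    rw [poleCutoff, poleHeight, indicator_of_mem hx, ← ht,
      truncBelow_coe (neg_le.1 (Nat.ceil_le.1 hn))]
  exact (tendsto_const_nhds.div_atTop (tendsto_log_add_natCast_atTop (1 + m))).congr' hev

lemma tendsto_setIntegral_poleCutoff (hu : UpperSemicontinuousOn u K) (hK : MeasurableSet K)
    (hm : 0 ≤ m) (hle : ∀ x ∈ K, u x ≤ m) (hKvol : volume K ≠ ⊤)
    (hnull : volume ({x | u x = ⊥} ∩ K) = 0) :
    Tendsto (fun n => ∫ x in K, poleCutoff u K m n x) atTop (𝓝 0) := by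
  rw [← integral_zero ℂ ℝ (μ := volume.restrict K)]
  refine tendsto_integral_of_dominated_convergence (fun _ => 1)
    (fun n => (measurable_poleCutoff hu hK m n).aestronglyMeasurable)
    (integrableOn_const hKvol) (fun n => Eventually.of_forall fun x => ?_) ?_
  · rw [Real.norm_of_nonneg (poleCutoff_nonneg hm hle n x)]
    exact poleCutoff_le_one hm hle n x
  · have hfin : ∀ᵐ x ∂volume.restrict K, u x ≠ ⊥ := by
      rw [ae_iff, Measure.restrict_apply' hK]
      simpa only [not_not] using hnull
    filter_upwards [hfin, ae_restrict_mem hK] with x hx hxK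
    exact tendsto_poleCutoff hxK hx ((hle x hxK).trans_lt (EReal.coe_lt_top m)).ne

end PoleHeight

namespace SubharmonicOn

variable {u : ℂ → EReal} {Ω D : Set ℂ} {w : ℂ} {a m : ℝ}

lemma stepEnergy_poleCutoff_le (hu : SubharmonicOn u Ω) (ha : 0 < a)
    (hball : closedBall w (6 * a) ⊆ Ω) (hm : 0 ≤ m) (hle : ∀ x ∈ closedBall w (6 * a), u x ≤ m)
    {r : ℝ} (hr : 0 ≤ r) (hra : r ≤ a) (n : ℕ) :
    stepEnergy r (ball w (3 * a)) (poleCutoff u (closedBall w (6 * a)) m n) ≤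
      r ^ 2 * (4 / a ^ 2 * volume.real (ball w (6 * a)) / Real.log (1 + m + n) ^ 2) := by
  obtain ⟨θ, hθ⟩ := exists_isPlateau w (ρ := 4 * a) (by positivity) ha
  set v := poleHeight u (closedBall w (6 * a)) m n
  have hsupp : ∀ x, θ x ≠ 0 → x ∈ ball w (5 * a) := fun x hx => by
    by_contra hx5
    exact hx (hθ.eq_zero x (by rwa [show 4 * a + a = 5 * a by ring]))
  have hlog : stepEnergy r (ball w (3 * a)) (fun x => Real.log (v x)) ≤
      4 * (a⁻¹ * r) ^ 2 * volume.real (ball w (6 * a)) := by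
    refine stepEnergy_log_le
      (measurable_poleHeight (hu.1.mono hball) measurableSet_closedBall m n)
      (one_le_poleHeight hm hle n) (poleHeight_le hm hle n) hθ.continuous.measurable hθ.nonneg
      hθ.le_one hθ.abs_sub_le measurableSet_ball measure_ball_lt_top.ne (fun x hx y hy => ?_)
      measurableSet_ball (fun x hx y hy => ?_) fun x hx => ?_
    · by_contra hy0
      rw [abs_of_nonneg hr, mem_closedBall'] at hy
      exact hx (mem_ball.2 (by linarith [dist_triangle x y w, mem_ball.1 (hsupp y hy0)]))
    · rw [abs_of_nonneg hr, mem_closedBall] at hy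
      exact (hθ.eq_one y (mem_closedBall.2
        (by linarith [dist_triangle y x w, mem_ball.1 hx]))).ge
    · refine hu.circleAverage_poleHeight_le hball hr (closedBall_subset_closedBall' ?_) m n
      linarith [mem_ball.1 (hsupp x hx)]
  calc stepEnergy r (ball w (3 * a)) (poleCutoff u (closedBall w (6 * a)) m n)
      = stepEnergy r (ball w (3 * a)) (fun x => Real.log (v x)) / Real.log (1 + m + n) ^ 2 :=
        stepEnergy_div_const r _ _ _
    _ ≤ 4 * (a⁻¹ * r) ^ 2 * volume.real (ball w (6 * a)) / Real.log (1 + m + n) ^ 2 := by gcongr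
    _ = r ^ 2 * (4 / a ^ 2 * volume.real (ball w (6 * a)) / Real.log (1 + m + n) ^ 2) := by
        rw [mul_pow, inv_pow]
        ring

lemma exists_closedBall_subset_of_lt (hu : SubharmonicOn u Ω) {K : Set ℂ} (hK : IsCompact K)
    (hKΩ : K ⊆ Ω) (hD : IsOpen D) (hbot : ∀ x ∈ K \ D, u x = ⊥) (t : ℝ) :
    ∃ δ > 0, ∀ y ∈ K, t < u y → closedBall y δ ⊆ D := by
  have hcomp : IsCompact (K ∩ u ⁻¹' Ici (t : EReal)) :=
    (hu.1.mono hKΩ).isCompact_inter_preimage_Ici hK t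
  have hsub : K ∩ u ⁻¹' Ici (t : EReal) ⊆ D := fun x hx => by
    by_contra hxD
    exact ((EReal.bot_lt_coe t).trans_le hx.2).ne' (hbot x ⟨hx.1, hxD⟩)
  obtain ⟨δ, hδ, hthick⟩ := hcomp.exists_cthickening_subset_open hD hsub
  exact ⟨δ, hδ, fun y hy hty =>
    (closedBall_subset_cthickening (E := K ∩ u ⁻¹' Ici (t : EReal)) ⟨hy, hty.le⟩ δ).trans hthick⟩

lemma exists_isCutoff (hu : SubharmonicOn u Ω) (hΩ : IsOpen Ω) (hconn : IsPreconnected Ω)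
    (hne : ∃ x ∈ Ω, u x ≠ ⊥) (hD : IsOpen D) (ha : 0 < a) (hball : closedBall w (6 * a) ⊆ Ω)
    (hbot : ∀ x ∈ closedBall w (6 * a) \ D, u x = ⊥) {ε : ℝ} (hε : 0 < ε) :
    ∃ r, 0 < r ∧ r ≤ a ∧ ∃ Ψ, IsCutoff D w a ε r Ψ := by
  obtain ⟨m, hm, hle⟩ := hu.exists_forall_le (isCompact_closedBall w (6 * a)) hball
  have husc := hu.1.mono hball
  have hsmall := tendsto_setIntegral_poleCutoff husc measurableSet_closedBall hm hle
    measure_closedBall_lt_top.ne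
    (measure_mono_null (inter_subset_inter_right _ hball) (hu.volume_eq_bot_inter hΩ hconn hne))
  have henergy : Tendsto (fun n : ℕ => 4 / a ^ 2 * volume.real (ball w (6 * a)) /
      Real.log (1 + m + n) ^ 2) atTop (𝓝 0) := tendsto_const_nhds.div_atTop
    ((tendsto_pow_atTop two_ne_zero).comp (tendsto_log_add_natCast_atTop (1 + m)))
  obtain ⟨n, hn, hnint, hnen⟩ := ((eventually_gt_atTop 0).and ((hsmall.eventually_le_const hε).and
    (henergy.eventually_le_const (pow_pos hε 2)))).exists
  obtain ⟨δ, hδ, hδD⟩ := hu.exists_closedBall_subset_of_lt (isCompact_closedBall w (6 * a)) hball hD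
    hbot (-n : ℝ)
  have hsub : ∀ k ≤ 6, ball w (k * a) ⊆ closedBall w (6 * a) := fun k hk =>
    ball_subset_closedBall.trans (closedBall_subset_closedBall (by gcongr))
  set Ψ := poleCutoff u (closedBall w (6 * a)) m n
  have hmeas : Measurable Ψ := measurable_poleCutoff husc measurableSet_closedBall m n
  have hnonneg : ∀ x, 0 ≤ Ψ x := poleCutoff_nonneg hm hle n
  have hle_one : ∀ x, Ψ x ≤ 1 := poleCutoff_le_one hm hle n
  refine ⟨min a δ, lt_min ha hδ, min_le_left _ _, Ψ, hmeas, hnonneg, hle_one, fun x hx => ?_,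
    fun y hy hΨy => ?_, ?_, ?_⟩
  · have hxK := hsub 4 (by norm_num) hx.1
    exact poleCutoff_of_le hm hn hxK ((hbot x ⟨hxK, hx.2⟩).trans_le bot_le)
  · have hyK := hsub 3 (by norm_num) hy
    exact (closedBall_subset_closedBall (min_le_right _ _)).trans
      (hδD y hyK (not_le.1 fun h => hΨy (poleCutoff_of_le hm hn hyK h)))
  · rw [mul_pow]
    exact (hu.stepEnergy_poleCutoff_le ha hball hm hle (lt_min ha hδ).le (min_le_left _ _) n).trans
      (mul_le_mul_of_nonneg_left hnen (sq_nonneg _))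
  · have hint : IntegrableOn Ψ (closedBall w (6 * a)) := Measure.integrableOn_of_bounded (M := 1)
      measure_closedBall_lt_top.ne hmeas.aestronglyMeasurable
      (Eventually.of_forall fun x => (Real.norm_of_nonneg (hnonneg x)).trans_le (hle_one x))
    exact (setIntegral_mono_set hint (Eventually.of_forall hnonneg)
      (hsub 5 (by norm_num)).eventuallyLE).trans hnint

end SubharmonicOn

/-! ### Boundedness of the kernel near polar boundary pieces -/

section PolarBoundary

variable {D : Set ℂ} {w z : ℂ} {a : ℝ} {f : ℂ → ℂ}

lemma mem_L2h_of_subset {D' : Set ℂ} (hf : f ∈ L2h D) (hsub : D' ⊆ D) : f ∈ L2h D' :=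
  ⟨hf.1.mono hsub, (lintegral_mono_set hsub).trans_lt hf.2⟩

lemma memLp_two_of_mem_L2h (hD : IsOpen D) (hf : f ∈ L2h D) : MemLp f 2 (volume.restrict D) := by
  refine ⟨hf.1.continuousOn.aestronglyMeasurable hD.measurableSet, ?_⟩
  rw [eLpNorm_lt_top_iff_lintegral_rpow_enorm_lt_top two_ne_zero ENNReal.ofNat_ne_top]
  simpa only [ENNReal.toReal_ofNat, ENNReal.rpow_ofNat] using! (sqNorm_ne_top hf).lt_top

lemma sq_lintegral_le_measure_univ_mul {α : Type*} [MeasurableSpace α] {μ : Measure α}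
    {g : α → ℝ≥0∞} (hg : AEMeasurable g μ) :
    (∫⁻ x, g x ∂μ) ^ 2 ≤ μ univ * ∫⁻ x, g x ^ 2 ∂μ := by
  have hsq : ∀ y : ℝ≥0∞, (y ^ (1 / 2 : ℝ)) ^ 2 = y := fun y => by
    rw [← ENNReal.rpow_mul_natCast]
    norm_num
  have hCS := ENNReal.lintegral_mul_le_Lp_mul_Lq μ Real.HolderConjugate.two_two hg
    (aemeasurable_const (b := (1 : ℝ≥0∞)))
  simp only [Pi.mul_apply, mul_one, ENNReal.rpow_ofNat, one_pow, lintegral_one] at hCS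
  calc (∫⁻ x, g x ∂μ) ^ 2
      ≤ ((∫⁻ x, g x ^ 2 ∂μ) ^ (1 / 2 : ℝ) * μ univ ^ (1 / 2 : ℝ)) ^ 2 := by gcongr
    _ = μ univ * ∫⁻ x, g x ^ 2 ∂μ := by rw [mul_pow, hsq, hsq, mul_comm]

lemma pi_mul_norm_le_of_forall_isCutoff (ha : 0 < a)
    (hcut : ∀ ε > 0, ∃ r, 0 < r ∧ r ≤ a ∧ ∃ Ψ, IsCutoff D w a ε r Ψ) (hz : z ∈ D ∩ ball w (a / 2))
    (hD : IsOpen D) (hf : f ∈ L2h D) :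
    Real.pi * ‖f z‖ ≤ 2 / a ^ 2 * ∫ x in D ∩ ball w (4 * a), ‖f x‖ := by
  have hA : IsOpen (D ∩ ball w (4 * a)) := hD.inter isOpen_ball
  have hAvol : volume (D ∩ ball w (4 * a)) ≠ ⊤ :=
    measure_ne_top_of_subset inter_subset_right measure_ball_lt_top.ne
  have : IsFiniteMeasure (volume.restrict (D ∩ ball w (4 * a))) :=
    isFiniteMeasure_restrict.2 hAvol
  have hfA : f ∈ L2h (D ∩ ball w (4 * a)) := mem_L2h_of_subset hf inter_subset_left
  have hfint := (memLp_two_of_mem_L2h hA hfA).integrable one_le_two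
  have hg := memLp_two_of_mem_L2h hA
    (dslope_mem_L2h hA hAvol hfA ⟨hz.1, ball_subset_ball (by linarith) hz.2⟩)
  have hlim : Tendsto (fun ε : ℝ => 2 / a ^ 2 * (∫ x in D ∩ ball w (4 * a), ‖f x‖) +
      ε * (4 / a ^ 2 * ‖f z‖ + ((∫ x in D ∩ ball w (4 * a), ‖dslope f z x‖ ^ 2) + 1) / 2))
      (𝓝[>] 0) (𝓝 (2 / a ^ 2 * ∫ x in D ∩ ball w (4 * a), ‖f x‖)) := by
    refine tendsto_nhdsWithin_of_tendsto_nhds (Continuous.tendsto' (by fun_prop) _ _ ?_)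
    rw [zero_mul, add_zero]
  refine ge_of_tendsto hlim (eventually_nhdsWithin_of_forall fun ε hε => ?_)
  obtain ⟨r, hr, hra, Ψ, hΨ⟩ := hcut ε hε
  exact hΨ.pi_mul_norm_le hr hra hε hz hD hf.1 hfint hg

lemma bergmanKernel_le_of_forall_isCutoff (ha : 0 < a)
    (hcut : ∀ ε > 0, ∃ r, 0 < r ∧ r ≤ a ∧ ∃ Ψ, IsCutoff D w a ε r Ψ) (hD : IsOpen D)
    (hz : z ∈ D ∩ ball w (a / 2)) :
    bergmanKernel D z ≤
      ENNReal.ofReal (2 / (Real.pi * a ^ 2)) ^ 2 * volume (ball w (4 * a)) := by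
  set c := ENNReal.ofReal (2 / (Real.pi * a ^ 2))
  set A := D ∩ ball w (4 * a)
  refine (bergmanKernel_le_iff hz.1 (ENNReal.mul_ne_top (ENNReal.pow_ne_top ENNReal.ofReal_ne_top)
    measure_ball_lt_top.ne)).2 fun f hf => ?_
  have hA : IsOpen A := hD.inter isOpen_ball
  have hfA : f ∈ L2h A := mem_L2h_of_subset hf inter_subset_left
  have hnorm : ‖f z‖ₑ ≤ c * ∫⁻ x in A, ‖f x‖ₑ := by
    have hreal : ‖f z‖ ≤ 2 / (Real.pi * a ^ 2) * ∫ x in A, ‖f x‖ := by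
      have hpi := pi_mul_norm_le_of_forall_isCutoff ha hcut hz hD hf
      rw [mul_comm, ← le_div_iff₀ Real.pi_pos] at hpi
      exact hpi.trans_eq (by ring)
    have : IsFiniteMeasure (volume.restrict A) := isFiniteMeasure_restrict.2
      (measure_ne_top_of_subset inter_subset_right measure_ball_lt_top.ne)
    rw [← ofReal_integral_norm_eq_lintegral_enorm
      ((memLp_two_of_mem_L2h hA hfA).integrable one_le_two),
      ← ENNReal.ofReal_mul (by positivity), ← ofReal_norm]
    exact ENNReal.ofReal_le_ofReal hreal
  calc ‖f z‖ₑ ^ 2 ≤ (c * ∫⁻ x in A, ‖f x‖ₑ) ^ 2 := by gcongr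
    _ = c ^ 2 * (∫⁻ x in A, ‖f x‖ₑ) ^ 2 := mul_pow _ _ _
    _ ≤ c ^ 2 * (volume A * sqNorm A f) := by
        gcongr
        rw [← Measure.restrict_apply_univ]
        exact sq_lintegral_le_measure_univ_mul
          (hfA.1.continuousOn.aemeasurable hA.measurableSet).enorm
    _ ≤ c ^ 2 * (volume (ball w (4 * a)) * sqNorm D f) := by
        gcongr
        · exact inter_subset_right
        · exact lintegral_mono_set inter_subset_left
    _ = c ^ 2 * volume (ball w (4 * a)) * sqNorm D f := (mul_assoc _ _ _).symm

lemma exists_bergmanKernel_le_of_polarSet (hD : IsOpen D) (hwD : w ∉ D) {U : Set ℂ}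
    (hU : IsOpen U) (hwU : w ∈ U) (hpolar : PolarSet (U \ D)) :
    ∃ r > 0, ∃ M ≠ ⊤, ∀ z ∈ D ∩ ball w r, bergmanKernel D z ≤ M := by
  obtain ⟨V, hV, hVconn, hwV, u, hu, hne, hbot⟩ := hpolar w ⟨hwU, hwD⟩
  obtain ⟨b, hb, hball⟩ := nhds_basis_closedBall.mem_iff.1 ((hU.inter hV).mem_nhds ⟨hwU, hwV⟩)
  rw [← mul_div_cancel₀ b (show (6 : ℝ) ≠ 0 by norm_num)] at hball
  have hcut : ∀ ε > 0, ∃ r, 0 < r ∧ r ≤ b / 6 ∧ ∃ Ψ, IsCutoff D w (b / 6) ε r Ψ := fun ε hε =>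
    hu.exists_isCutoff hV hVconn.isPreconnected hne hD (by positivity)
      (hball.trans inter_subset_right)
      (fun x hx => hbot x ⟨⟨(hball hx.1).1, hx.2⟩, (hball hx.1).2⟩) hε
  exact ⟨b / 6 / 2, by positivity, _, ENNReal.mul_ne_top (ENNReal.pow_ne_top ENNReal.ofReal_ne_top)
    measure_ball_lt_top.ne, fun z hz =>
      bergmanKernel_le_of_forall_isCutoff (by positivity) hcut hD hz⟩

end PolarBoundary

theorem bergman_limsup_lt_top_iff_polar_general {D : Set ℂ} (hD : IsOpen D) (hvol : volume D ≠ ⊤)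
    {w : ℂ} (hw : w ∈ frontier D) :
    limsup (bergmanKernel D) (𝓝[D] w) < ⊤ ↔
      ∃ U : Set ℂ, IsOpen U ∧ w ∈ U ∧ PolarSet (U \ D) := by
  rw [limsup_bergmanKernel_lt_top_iff]
  constructor
  · rintro ⟨r, hr, M, hM, hK⟩
    exact exists_polarSet_sdiff_of_bergmanKernel_le hD hvol hw hr hM hK
  · rintro ⟨U, hU, hwU, hpolar⟩
    have hwD : w ∉ D := (hD.frontier_eq ▸ hw).2
    exact exists_bergmanKernel_le_of_polarSet hD hwD hU hwU hpolar

/-- **Lemma 8.** For a bounded domain `D ⊆ ℂ` and `w ∈ ∂D`, the Bergman kernel stays bounded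
near `w` iff some open neighborhood `U` of `w` satisfies that `U \ D` is polar. -/
theorem bergman_limsup_lt_top_iff_polar (D : Set ℂ)
    (hopen : IsOpen D) (hconn : IsConnected D) (hbd : Bornology.IsBounded D)
    (w : ℂ) (hw : w ∈ frontier D) :
    Filter.limsup (fun z => bergmanKernel D z) (𝓝[D] w) < (⊤ : ℝ≥0∞) ↔
      ∃ U : Set ℂ, IsOpen U ∧ w ∈ U ∧ PolarSet (U \ D) :=
  bergman_limsup_lt_top_iff_polar_general hopen hbd.measure_lt_top.ne hw
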